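/- Let G = ⟨X; Rⁿ⟩ be a freely indecomposable one-relator group with torsion. Suppose G splits nontrivially as an amalgamated free product A ∗_C B where C is infinite dihedral. Then A is infinite dihedral or B is infinite dihedral. -/

import Mathlib

/-- A group is *virtually-ℤ* if it has a finite-index subgroup isomorphic to `ℤ`. -/
def VirtuallyZ (G : Type*) [Group G] : Prop :=
  ∃ H : Subgroup G, H.FiniteIndex ∧ Nonempty (H ≃* Multiplicative ℤ)

/-- A subgroup `M` of `G` is *malnormal* if `g M g⁻¹ ∩ M ≠ 1` implies `g ∈ M`. -/
def Subgroup.IsMalnormal {G : Type*} [Group G] (M : Subgroup G) : Prop :=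
  ∀ g : G, (∃ x : G, x ≠ 1 ∧ x ∈ M ∧ g * x * g⁻¹ ∈ M) → g ∈ M

/-- A group is a *free product of cyclic groups* if it is isomorphic to the free product
(`Monoid.CoprodI`) of a family of cyclic groups; every cyclic group is isomorphic to
`Multiplicative (ZMod m)` for some `m : ℕ` (with `m = 0` giving the infinite cyclic group). -/
def IsFreeProductOfCyclics (G : Type*) [Group G] : Prop :=
  ∃ (ι : Type) (m : ι → ℕ),
    Nonempty (G ≃* Monoid.CoprodI fun i => Multiplicative (ZMod (m i)))

/-- A group is *freely decomposable* if it is isomorphic to a free product of two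
nontrivial groups. -/
def FreelyDecomposable (G : Type*) [Group G] : Prop :=
  ∃ (H K : Type) (gH : Group H) (gK : Group K),
    Nontrivial H ∧ Nontrivial K ∧
      Nonempty (G ≃* (letI := gH; letI := gK; Monoid.Coprod H K))

/-- A group is *freely indecomposable* if it is not isomorphic to a free product of two
nontrivial groups. -/
def FreelyIndecomposable (G : Type*) [Group G] : Prop := ¬ FreelyDecomposable G

/-! Write `F` for the free group on `X`. Since `R` is not a proper power, `F ⧸ ⟪R⟫` is torsion-free,
so the infinite dihedral group `C`, which is generated by involutions, dies under the projection
`π : G = F ⧸ ⟪Rⁿ⟫ → F ⧸ ⟪R⟫`. Hence `ker π` contains the kernel of the map from `A ∗_C B` onto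
`A ⧸ ⟪C⟫ ∗ B ⧸ ⟪C⟫`. If both factors were nontrivial, then by Grushko's theorem (for finite `X`)
some basis of `F` would be compatible with this free decomposition, by the Freiheitssatz `R` would
be conjugate into a proper part of this basis, and `G` would be freely decomposable. So `C` normally
generates one of the two vertex groups, say `A`, and then `A ≤ ker π`. By Bass–Serre theory along
the Magnus hierarchy every subgroup of `ker π` is a free product of cyclic groups. Finally, a free
product of cyclic groups that is normally generated by two involutions is generated by two
involutions, so the infinite group `A` is dihedral. -/

universe u

namespace OneRelator

/-! ### Groups acting on trees -/

/-- `G` is the internal free product of the subgroups `H i` and of a free group with basis `k`.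
The universal property only asks for the existence of the extension; uniqueness follows from
`closure_eq_top`. -/
structure IsFreeDecomposition {G : Type u} [Group G] {κ ι : Type u} (H : κ → Subgroup G)
    (k : ι → G) : Prop where
  closure_eq_top : Subgroup.closure ((⋃ i, (H i : Set G)) ∪ Set.range k) = ⊤
  exists_hom : ∀ (Q : Type u) [Group Q] (f : ∀ i, H i →* Q) (c : ι → Q),
    ∃ Θ : G →* Q, (∀ i (h : H i), Θ h = f i h) ∧ ∀ l, Θ (k l) = c l

/-- The oriented graph with vertices `V`, edges `E` and endpoint maps `s`, `t` is a tree. Absence of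
cycles is encoded by requiring every labelling of the edges by elements of a group to be the
coboundary of a labelling of the vertices. -/
structure IsTree {V E : Type u} (s t : E → V) : Prop where
  nonempty : Nonempty V
  eq_univ : ∀ S : Set V, S.Nonempty → (∀ e, s e ∈ S ↔ t e ∈ S) → S = Set.univ
  exists_potential : ∀ (P : Type u) [Group P] (d : E → P), ∃ D : V → P, ∀ e, D (t e) = D (s e) * d e

/-- An orientation-preserving action of `Γ` on a tree. -/
structure IsTreeAction (Γ : Type u) [Group Γ] {V E : Type u} [MulAction Γ V] [MulAction Γ E]
    (s t : E → V) : Prop extends IsTree s t where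
  source_smul : ∀ (g : Γ) e, s (g • e) = g • s e
  target_smul : ∀ (g : Γ) e, t (g • e) = g • t e

/-- An action of `Γ` on a tree with trivial edge stabilisers. -/
structure IsEdgeFreeTreeAction (Γ : Type u) [Group Γ] {V E : Type u} [MulAction Γ V] [MulAction Γ E]
    (s t : E → V) : Prop extends IsTreeAction Γ s t where
  eq_one_of_smul_edge : ∀ (g : Γ) (e : E), g • e = e → g = 1

section TreeAction

variable {Γ V E : Type u} [Group Γ] [MulAction Γ V] {s t : E → V}

/-- A set of inequivalent vertices which span a subtree containing `v₀`; connectedness is expressed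
as in `IsTree`. -/
structure IsPartialTransversal (Γ : Type u) [Group Γ] [MulAction Γ V] (s t : E → V) (v₀ : V)
    (R : Set V) : Prop where
  base_mem : v₀ ∈ R
  eq_of_smul_eq : ∀ r ∈ R, ∀ r' ∈ R, ∀ g : Γ, g • r = r' → r = r'
  subset_of_closed : ∀ S : Set V, v₀ ∈ S →
    (∀ e, s e ∈ R → t e ∈ R → (s e ∈ S ↔ t e ∈ S)) → R ⊆ S

theorem IsPartialTransversal.singleton (v₀ : V) : IsPartialTransversal Γ s t v₀ {v₀} where
  base_mem := rfl
  eq_of_smul_eq := by rintro r rfl r' rfl g _; rfl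
  subset_of_closed := by rintro S hS _ v rfl; exact hS

theorem IsPartialTransversal.sUnion {v₀ : V} {c : Set (Set V)} (hne : c.Nonempty)
    (hchain : IsChain (· ⊆ ·) c) (hc : ∀ R ∈ c, IsPartialTransversal Γ s t v₀ R) :
    IsPartialTransversal Γ s t v₀ (⋃₀ c) where
  base_mem := by
    obtain ⟨R, hR⟩ := hne
    exact ⟨R, hR, (hc R hR).base_mem⟩
  eq_of_smul_eq := by
    rintro r ⟨R, hR, hr⟩ r' ⟨R', hR', hr'⟩ g hg
    rcases hchain.total hR hR' with h | h
    · exact (hc R' hR').eq_of_smul_eq r (h hr) r' hr' g hg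
    · exact (hc R hR).eq_of_smul_eq r hr r' (h hr') g hg
  subset_of_closed := by
    rintro S hS hclosed v ⟨R, hR, hv⟩
    exact (hc R hR).subset_of_closed S hS
      (fun e h₁ h₂ => hclosed e ⟨R, hR, h₁⟩ ⟨R, hR, h₂⟩) hv

theorem IsPartialTransversal.insert {v₀ : V} {R : Set V} (hR : IsPartialTransversal Γ s t v₀ R)
    {w : V} (hw : ∀ g : Γ, ∀ r ∈ R, w ≠ g • r)
    (hadj : ∃ e, (s e ∈ R ∧ t e = w) ∨ (s e = w ∧ t e ∈ R)) :
    IsPartialTransversal Γ s t v₀ (insert w R) where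
  base_mem := Or.inr hR.base_mem
  eq_of_smul_eq := by
    rintro a (rfl | ha) b (rfl | hb) g hg
    · rfl
    · exact absurd (by rw [← hg, inv_smul_smul]) (hw g⁻¹ b hb)
    · exact absurd hg.symm (hw g a ha)
    · exact hR.eq_of_smul_eq a ha b hb g hg
  subset_of_closed := by
    intro S hS hclosed
    have hRS : R ⊆ S :=
      hR.subset_of_closed S hS fun e h₁ h₂ => hclosed e (Or.inr h₁) (Or.inr h₂)
    rintro v (rfl | hv)
    · obtain ⟨e, ⟨hs, rfl⟩ | ⟨rfl, ht⟩⟩ := hadj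
      · exact (hclosed e (Or.inr hs) (Or.inl rfl)).1 (hRS hs)
      · exact (hclosed e (Or.inl rfl) (Or.inr ht)).2 (hRS ht)
    · exact hRS hv

variable [MulAction Γ E]

theorem IsEdgeFreeTreeAction.exists_transversal (h : IsEdgeFreeTreeAction Γ s t) :
    ∃ v₀ R, IsPartialTransversal Γ s t v₀ R ∧ ∀ v, ∃ g : Γ, ∃ r ∈ R, v = g • r := by
  obtain ⟨v₀⟩ := h.nonempty
  obtain ⟨R, -, hR, hmax⟩ := zorn_subset_nonempty {R | IsPartialTransversal Γ s t v₀ R}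
    (fun c hc hchain hne => ⟨⋃₀ c, .sUnion hne hchain hc, fun _ => Set.subset_sUnion_of_mem⟩)
    {v₀} (.singleton v₀)
  refine ⟨v₀, R, hR, ?_⟩
  have neighbour : ∀ w : V, (∃ e, (s e ∈ R ∧ t e = w) ∨ (s e = w ∧ t e ∈ R)) →
      ∃ g : Γ, ∃ r ∈ R, w = g • r := by
    intro w hadj
    by_contra! hw
    exact hw 1 w (hmax (hR.insert hw hadj) (Set.subset_insert w R) (Or.inl rfl))
      (one_smul _ _).symm
  have covered : {v | ∃ g : Γ, ∃ r ∈ R, v = g • r} = Set.univ := by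
    refine h.eq_univ _ ⟨v₀, 1, v₀, hR.base_mem, (one_smul _ _).symm⟩ fun e => ⟨?_, ?_⟩
    · rintro ⟨g, r, hr, hgr⟩
      obtain ⟨g', r', hr', h'⟩ := neighbour (t (g⁻¹ • e))
        ⟨g⁻¹ • e, Or.inl ⟨by rwa [h.source_smul, hgr, inv_smul_smul], rfl⟩⟩
      exact ⟨g * g', r', hr', by rw [mul_smul, ← h', h.target_smul, smul_inv_smul]⟩
    · rintro ⟨g, r, hr, hgr⟩
      obtain ⟨g', r', hr', h'⟩ := neighbour (s (g⁻¹ • e))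
        ⟨g⁻¹ • e, Or.inr ⟨rfl, by rwa [h.target_smul, hgr, inv_smul_smul]⟩⟩
      exact ⟨g * g', r', hr', by rw [mul_smul, ← h', h.source_smul, smul_inv_smul]⟩
  exact Set.eq_univ_iff_forall.1 covered

/-- A transversal of the vertices spanning a subtree, together with coordinates: every vertex is
`vertexCoord v • proj v`, and `(edgeCoord e)⁻¹ • e` is the chosen representative of the orbit of
the edge `e`. -/
structure FundamentalDomain (Γ : Type u) [Group Γ] [MulAction Γ V] [MulAction Γ E]
    (s t : E → V) where
  verts : Set V
  base : V
  isPartialTransversal : IsPartialTransversal Γ s t base verts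
  proj : V → verts
  vertexCoord : V → Γ
  edgeCoord : E → Γ
  vertexCoord_smul_proj : ∀ v, vertexCoord v • (proj v : V) = v
  vertexCoord_of_mem : ∀ v ∈ verts, vertexCoord v = 1
  edgeCoord_smul : ∀ (g : Γ) e, edgeCoord (g • e) = g * edgeCoord e
  source_rep_mem : ∀ e, s ((edgeCoord e)⁻¹ • e) ∈ verts
  target_rep_mem : ∀ e, s e ∈ verts → t e ∈ verts → t ((edgeCoord e)⁻¹ • e) ∈ verts

theorem IsEdgeFreeTreeAction.exists_edgeCoord (h : IsEdgeFreeTreeAction Γ s t) {R : Set V}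
    (hR : ∀ v, ∃ g : Γ, ∃ r ∈ R, v = g • r) :
    ∃ γ : E → Γ, (∀ (g : Γ) e, γ (g • e) = g * γ e) ∧ (∀ e, s ((γ e)⁻¹ • e) ∈ R) ∧
      ∀ e, s e ∈ R → t e ∈ R → t ((γ e)⁻¹ • e) ∈ R := by
  have exists_rep : ∀ q : MulAction.orbitRel.Quotient Γ E, ∃ e : E, Quotient.mk'' e = q ∧
      s e ∈ R ∧ ∀ e', Quotient.mk'' e' = q → s e' ∈ R → t e' ∈ R → t e ∈ R := by
    intro q
    by_cases hq : ∃ e, (Quotient.mk'' e : MulAction.orbitRel.Quotient Γ E) = q ∧ s e ∈ R ∧ t e ∈ R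
    · obtain ⟨e, rfl, hs, ht⟩ := hq
      exact ⟨e, rfl, hs, fun _ _ _ _ => ht⟩
    · obtain ⟨e, rfl⟩ := Quotient.mk''_surjective q
      obtain ⟨g, r, hr, hgr⟩ := hR (s e)
      exact ⟨g⁻¹ • e, Quotient.sound' ⟨g⁻¹, rfl⟩, by rwa [h.source_smul, hgr, inv_smul_smul],
        fun e' h₁ h₂ h₃ => absurd ⟨e', h₁, h₂, h₃⟩ hq⟩
  choose rep hrep hsource htarget using exists_rep
  have exists_coord : ∀ e, ∃ g : Γ, g • rep (Quotient.mk'' e) = e := fun e =>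
    (MulAction.orbitRel Γ E).symm' (Quotient.eq''.1 (hrep (Quotient.mk'' e)))
  choose γ hγ using exists_coord
  have rep_eq : ∀ e, (γ e)⁻¹ • e = rep (Quotient.mk'' e) := fun e => by
    rw [inv_smul_eq_iff, hγ]
  have mk_smul : ∀ (g : Γ) (e : E),
      (Quotient.mk'' (g • e) : MulAction.orbitRel.Quotient Γ E) = Quotient.mk'' e :=
    fun g e => Quotient.sound' ⟨g, rfl⟩
  refine ⟨γ, fun g e => ?_, fun e => ?_, fun e hs ht => ?_⟩
  · refine (inv_mul_eq_one.1 (h.eq_one_of_smul_edge _ (rep (Quotient.mk'' e)) ?_)).symm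
    rw [mul_smul, ← mk_smul g e, hγ, mk_smul, inv_smul_eq_iff, mul_smul, hγ]
  · rw [rep_eq]; exact hsource _
  · rw [rep_eq]; exact htarget _ e rfl hs ht

theorem IsEdgeFreeTreeAction.nonempty_fundamentalDomain (h : IsEdgeFreeTreeAction Γ s t) :
    Nonempty (FundamentalDomain Γ s t) := by
  obtain ⟨v₀, R, hR, hcover⟩ := h.exists_transversal
  have exists_coord : ∀ v, ∃ (r : R) (g : Γ), g • (r : V) = v ∧ (v ∈ R → g = 1) := by
    intro v
    by_cases hv : v ∈ R
    · exact ⟨⟨v, hv⟩, 1, one_smul _ _, fun _ => rfl⟩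
    · obtain ⟨g, r, hr, rfl⟩ := hcover v
      exact ⟨⟨r, hr⟩, g, rfl, fun hv' => absurd hv' hv⟩
  choose ρ η hη hη_one using exists_coord
  obtain ⟨γ, hγ, hsource, htarget⟩ := h.exists_edgeCoord hcover
  exact ⟨⟨R, v₀, hR, ρ, η, γ, hη, hη_one, hγ, hsource, htarget⟩⟩

namespace FundamentalDomain

variable (F : FundamentalDomain Γ s t)

theorem proj_smul (g : Γ) (v : V) : F.proj (g • v) = F.proj v := by
  refine Subtype.ext (F.isPartialTransversal.eq_of_smul_eq _ (F.proj _).2 _ (F.proj v).2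
    ((F.vertexCoord v)⁻¹ * g⁻¹ * F.vertexCoord (g • v)) ?_)
  rw [mul_smul, vertexCoord_smul_proj, mul_smul, inv_smul_smul, inv_smul_eq_iff,
    vertexCoord_smul_proj]

theorem proj_of_mem {v : V} (hv : v ∈ F.verts) : F.proj v = ⟨v, hv⟩ := by
  refine Subtype.ext ?_
  simpa only [F.vertexCoord_of_mem v hv, one_smul] using F.vertexCoord_smul_proj v

/-- The chosen representative of the orbit of an edge. -/
def rep (e : E) : E := (F.edgeCoord e)⁻¹ • e

theorem rep_smul (g : Γ) (e : E) : F.rep (g • e) = F.rep e := by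
  rw [rep, rep, F.edgeCoord_smul, mul_inv_rev, mul_smul, inv_smul_smul]

theorem edgeCoord_smul_rep (e : E) : F.edgeCoord e • F.rep e = e := smul_inv_smul _ _

theorem edgeCoord_rep (e : E) : F.edgeCoord (F.rep e) = 1 := by
  rw [rep, F.edgeCoord_smul, inv_mul_cancel]

theorem rep_rep (e : E) : F.rep (F.rep e) = F.rep e := F.rep_smul _ _

/-- Representatives of the edge orbits that leave the chosen subtree; they index the free part. -/
abbrev FreeIndex : Type u := {e : E // F.rep e = e ∧ t e ∉ F.verts}

/-- The element carrying the chosen subtree to the far endpoint of a representative edge. -/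
def freeGen (e : F.FreeIndex) : Γ := F.vertexCoord (t e.1)

theorem closure_eq_top (h : IsEdgeFreeTreeAction Γ s t) :
    Subgroup.closure ((⋃ r : F.verts, (MulAction.stabilizer Γ (r : V) : Set Γ)) ∪
      Set.range F.freeGen) = ⊤ := by
  set L := Subgroup.closure ((⋃ r : F.verts, (MulAction.stabilizer Γ (r : V) : Set Γ)) ∪
      Set.range F.freeGen)
  have stabilizer_mem : ∀ r ∈ F.verts, ∀ g : Γ, g • r = r → g ∈ L := fun r hr g hg =>
    Subgroup.subset_closure (Or.inl (Set.mem_iUnion.2 ⟨⟨r, hr⟩, hg⟩))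
  have coord_target_mem : ∀ e, F.vertexCoord (t (F.rep e)) ∈ L := by
    intro e
    by_cases he : t (F.rep e) ∈ F.verts
    · rw [F.vertexCoord_of_mem _ he]; exact L.one_mem
    · exact Subgroup.subset_closure (Or.inr ⟨⟨F.rep e, F.rep_rep e, he⟩, rfl⟩)
  have mem_of_smul_mem : ∀ v, ∀ l ∈ L, ∀ r ∈ F.verts, v = l • r → ∀ g : Γ, ∀ r' ∈ F.verts,
      v = g • r' → g ∈ L := by
    rintro v l hl r hr rfl g r' hr' hg
    have hrr' : r' = r := F.isPartialTransversal.eq_of_smul_eq r' hr' r hr (l⁻¹ * g) (by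
      rw [mul_smul, ← hg, inv_smul_smul])
    subst hrr'
    have : l⁻¹ * g ∈ L := stabilizer_mem r' hr' _ (by rw [mul_smul, ← hg, inv_smul_smul])
    simpa only [mul_inv_cancel_left] using L.mul_mem hl this
  have source_eq : ∀ e, s e = F.edgeCoord e • s (F.rep e) := fun e => by
    rw [← h.source_smul, F.edgeCoord_smul_rep]
  have target_eq : ∀ e, t e = (F.edgeCoord e * F.vertexCoord (t (F.rep e))) •
      (F.proj (t (F.rep e)) : V) := fun e => by
    rw [mul_smul, F.vertexCoord_smul_proj, ← h.target_smul, F.edgeCoord_smul_rep]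
  have reached : {v | ∃ l ∈ L, ∃ r ∈ F.verts, v = l • r} = Set.univ := by
    refine h.eq_univ _ ⟨F.base, 1, L.one_mem, _, F.isPartialTransversal.base_mem,
      (one_smul _ _).symm⟩ fun e => ⟨?_, ?_⟩
    · rintro ⟨l, hl, r, hr, hlr⟩
      have := mem_of_smul_mem _ l hl r hr hlr _ _ (F.source_rep_mem e) (source_eq e)
      exact ⟨_, L.mul_mem this (coord_target_mem e), _, (F.proj _).2, target_eq e⟩
    · rintro ⟨l, hl, r, hr, hlr⟩
      have := mem_of_smul_mem _ l hl r hr hlr _ _ (F.proj _).2 (target_eq e)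
      exact ⟨_, (L.mul_mem_cancel_right (coord_target_mem e)).1 this, _, F.source_rep_mem e,
        source_eq e⟩
  refine (Subgroup.eq_top_iff' L).2 fun g => ?_
  obtain ⟨l, hl, r, hr, hlr⟩ := Set.eq_univ_iff_forall.1 reached (g • F.base)
  exact mem_of_smul_mem _ l hl r hr hlr g _ F.isPartialTransversal.base_mem rfl

section Extension

variable {Q : Type u} [Group Q] (f : ∀ r : F.verts, MulAction.stabilizer Γ (r : V) →* Q)
  (c : F.FreeIndex → Q)

theorem transition_mem_stabilizer (v : V) (g : Γ) :
    (F.vertexCoord (g • v))⁻¹ * g * F.vertexCoord v ∈ MulAction.stabilizer Γ (F.proj v : V) := by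
  rw [MulAction.mem_stabilizer_iff, mul_smul, F.vertexCoord_smul_proj, mul_smul, inv_smul_eq_iff,
    ← F.proj_smul g v, F.vertexCoord_smul_proj]

/-- The cocycle `Γ × V → Q` into which the homomorphisms `f r` assemble. -/
def cocycle (v : V) (g : Γ) : Q := f (F.proj v) ⟨_, F.transition_mem_stabilizer v g⟩

theorem cocycle_eq {r : F.verts} {v : V} {g x : Γ} (hr : F.proj v = r)
    (hx : (F.vertexCoord (g • v))⁻¹ * g * F.vertexCoord v = x)
    (hxr : x ∈ MulAction.stabilizer Γ (r : V)) : F.cocycle f v g = f r ⟨x, hxr⟩ := by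
  subst hr hx; rfl

theorem cocycle_mul (v : V) (g g' : Γ) :
    F.cocycle f v (g * g') = F.cocycle f (g' • v) g * F.cocycle f v g' := by
  have hmem := F.transition_mem_stabilizer (g' • v) g
  rw [F.proj_smul] at hmem
  rw [F.cocycle_eq f (F.proj_smul g' v) rfl hmem, cocycle, cocycle, ← map_mul]
  congr 2
  rw [mul_smul]; group

theorem cocycle_one (v : V) : F.cocycle f v 1 = 1 := by
  rw [F.cocycle_eq f rfl (by rw [one_smul, mul_one, inv_mul_cancel]) (one_mem _)]
  exact map_one _

open Classical in
/-- The prescribed value of the extension on a representative edge: `c` on the free generators and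
trivial inside the chosen subtree. -/
noncomputable def repLabel (e : E) : Q :=
  if he : F.rep e = e ∧ t e ∉ F.verts then c ⟨e, he⟩ else 1

/-- The prescribed value of the extension on an arbitrary edge, transported from the
representative of its orbit. -/
noncomputable def edgeLabel (e : E) : Q :=
  F.cocycle f (s (F.rep e)) (F.edgeCoord e) * F.repLabel c (F.rep e) *
    (F.cocycle f (t (F.rep e)) (F.edgeCoord e))⁻¹

theorem edgeLabel_smul (h : IsEdgeFreeTreeAction Γ s t) (g : Γ) (e : E) :
    F.edgeLabel f c (g • e) =
      F.cocycle f (s e) g * F.edgeLabel f c e * (F.cocycle f (t e) g)⁻¹ := by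
  simp only [edgeLabel, F.rep_smul, F.edgeCoord_smul, cocycle_mul, ← h.source_smul,
    ← h.target_smul, F.edgeCoord_smul_rep]
  group

theorem edgeLabel_freeIndex (e : F.FreeIndex) : F.edgeLabel f c e = c e := by
  obtain ⟨e, he, hte⟩ := e
  have h1 : F.edgeCoord e = 1 := he ▸ F.edgeCoord_rep e
  simp only [edgeLabel, repLabel, h1, cocycle_one, he, hte, not_false_eq_true, and_self, dite_true]
  group

theorem edgeLabel_rep_of_target_mem {e : E} (he : t (F.rep e) ∈ F.verts) :
    F.edgeLabel f c (F.rep e) = 1 := by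
  simp only [edgeLabel, repLabel, F.rep_rep, F.edgeCoord_rep, cocycle_one, he, not_true_eq_false,
    and_false, dite_false]
  group

theorem exists_normalized_potential (h : IsEdgeFreeTreeAction Γ s t) :
    ∃ D : V → Q, (∀ e, D (t e) = D (s e) * F.edgeLabel f c e) ∧ ∀ r ∈ F.verts, D r = 1 := by
  obtain ⟨D, hD⟩ := h.exists_potential Q (F.edgeLabel f c)
  refine ⟨fun v => (D F.base)⁻¹ * D v, fun e => by simp only [hD, mul_assoc], ?_⟩
  refine F.isPartialTransversal.subset_of_closed {v | (D F.base)⁻¹ * D v = 1}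
    (inv_mul_cancel _) fun e hs ht => ?_
  have hrep := F.target_rep_mem e hs ht
  have source_rep : s (F.rep e) = s e :=
    F.isPartialTransversal.eq_of_smul_eq _ (F.source_rep_mem e) _ hs (F.edgeCoord e) (by
      rw [← h.source_smul, smul_inv_smul])
  have target_rep : t (F.rep e) = t e :=
    F.isPartialTransversal.eq_of_smul_eq _ hrep _ ht (F.edgeCoord e) (by
      rw [← h.target_smul, smul_inv_smul])
  have := hD (F.rep e)
  rw [F.edgeLabel_rep_of_target_mem f c hrep, mul_one, source_rep, target_rep] at this
  simp only [Set.mem_ofPred_eq, this]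

theorem exists_hom (h : IsEdgeFreeTreeAction Γ s t) :
    ∃ Θ : Γ →* Q, (∀ (r : F.verts) (g : MulAction.stabilizer Γ (r : V)), Θ g = f r g) ∧
      ∀ l, Θ (F.freeGen l) = c l := by
  obtain ⟨D, hD, hD_one⟩ := F.exists_normalized_potential f c h
  -- The twisted cocycle `D (g • v) * κ v g * (D v)⁻¹` is constant along edges.
  have const : ∀ g v, D (g • v) * F.cocycle f v g * (D v)⁻¹ =
      D (g • F.base) * F.cocycle f F.base g * (D F.base)⁻¹ := by
    intro g
    refine Set.eq_univ_iff_forall.1 (h.eq_univ {v | D (g • v) * F.cocycle f v g * (D v)⁻¹ =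
      D (g • F.base) * F.cocycle f F.base g * (D F.base)⁻¹} ⟨F.base, rfl⟩ fun e => ?_)
    have : D (g • t e) * F.cocycle f (t e) g * (D (t e))⁻¹ =
        D (g • s e) * F.cocycle f (s e) g * (D (s e))⁻¹ := by
      rw [← h.target_smul, ← h.source_smul, hD, hD, F.edgeLabel_smul f c h]; group
    simp only [Set.mem_ofPred_eq, this]
  let Θ : Γ →* Q := MonoidHom.mk' (fun g => D (g • F.base) * F.cocycle f F.base g * (D F.base)⁻¹)
    fun g g' => by rw [← const g (g' • F.base), cocycle_mul, mul_smul]; group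
  have Θ_apply : ∀ g v, Θ g = D (g • v) * F.cocycle f v g * (D v)⁻¹ := fun g v => (const g v).symm
  refine ⟨Θ, ?_, ?_⟩
  · rintro ⟨r, hr⟩ ⟨g, hg⟩
    have hgr : g • r = r := hg
    rw [Θ_apply g r, F.cocycle_eq f (F.proj_of_mem hr)
      (by rw [hgr, F.vertexCoord_of_mem r hr]; group) hg, hgr, hD_one r hr]
    group
  · intro l
    have hl : F.freeGen l • (F.proj (t l.1) : V) = t l.1 := F.vertexCoord_smul_proj _
    have hs : s l.1 ∈ F.verts := l.2.1 ▸ F.source_rep_mem l.1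
    rw [Θ_apply _ (F.proj (t l.1) : V), hl, hD, hD_one _ hs, hD_one _ (F.proj _).2,
      F.cocycle_eq f (F.proj_of_mem (F.proj (t l.1)).2)
        (by rw [hl, F.vertexCoord_of_mem _ (F.proj _).2, freeGen]; group) (one_mem _),
      F.edgeLabel_freeIndex]
    exact (congrArg (1 * c l * · * 1⁻¹) (map_one _)).trans (by group)

end Extension

end FundamentalDomain

theorem IsEdgeFreeTreeAction.exists_isFreeDecomposition (h : IsEdgeFreeTreeAction Γ s t) :
    ∃ (κ ι : Type u) (v : κ → V) (k : ι → Γ),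
      IsFreeDecomposition (fun i => MulAction.stabilizer Γ (v i)) k := by
  obtain ⟨F⟩ := h.nonempty_fundamentalDomain
  exact ⟨F.verts, F.FreeIndex, (↑), F.freeGen, F.closure_eq_top h,
    fun Q _ f c => F.exists_hom f c h⟩

end TreeAction

/-! ### Free products of cyclic groups -/

/-- A group without nontrivial elements of finite order. -/
def TorsionFree (G : Type*) [Group G] : Prop := ∀ g : G, IsOfFinOrder g → g = 1

theorem TorsionFree.of_injective {G H : Type*} [Group G] [Group H] (h : TorsionFree H) (f : G →* H)
    (hf : Function.Injective f) : TorsionFree G := fun _ hg =>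
  (map_eq_one_iff f hf).1 (h _ (f.isOfFinOrder hg))

/-- `G` is the free product of the cyclic subgroups generated by the `x i`. As in
`IsFreeDecomposition`, uniqueness of the extension follows from generation. -/
structure IsCyclicBasis {G ι : Type u} [Group G] (x : ι → G) : Prop where
  closure_eq_top : Subgroup.closure (Set.range x) = ⊤
  exists_hom : ∀ (Q : Type u) [Group Q] (y : ι → Q), (∀ i (m : ℕ), x i ^ m = 1 → y i ^ m = 1) →
    ∃ Θ : G →* Q, ∀ i, Θ (x i) = y i

/-- A group that is a free product of cyclic groups, in terms of generators. -/
def HasCyclicBasis (G : Type u) [Group G] : Prop :=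
  ∃ (ι : Type u) (x : ι → G), IsCyclicBasis x

/-- All subgroups of `K` are free products of cyclic groups; subgroups are given as injective
homomorphisms to make transport along homomorphisms easy. -/
def HereditarilyCyclic {G : Type u} [Group G] (K : Subgroup G) : Prop :=
  ∀ (A : Type u) [Group A] (j : A →* G), Function.Injective j → (∀ a, j a ∈ K) → HasCyclicBasis A

theorem HereditarilyCyclic.mono {G : Type u} [Group G] {K K' : Subgroup G}
    (hK : HereditarilyCyclic K) (h : K' ≤ K) : HereditarilyCyclic K' := fun A _ j hj hjK =>
  hK A j hj fun a => h (hjK a)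

theorem IsFreeDecomposition.hasCyclicBasis {G : Type u} [Group G] {κ ι : Type u}
    {H : κ → Subgroup G} {k : ι → G} (h : IsFreeDecomposition H k)
    (hH : ∀ i, HasCyclicBasis (H i)) : HasCyclicBasis G := by
  choose J x hx using hH
  refine ⟨(Σ i, J i) ⊕ ι, Sum.elim (fun p => x p.1 p.2) k, ?_, fun Q _ y hy => ?_⟩
  · rw [eq_top_iff, ← h.closure_eq_top, Subgroup.closure_le]
    rintro g (hg | ⟨l, rfl⟩)
    · obtain ⟨i, hg⟩ := Set.mem_iUnion.1 hg
      have hmap : (Subgroup.closure (Set.range (x i))).map (H i).subtype ≤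
          Subgroup.closure (Set.range (Sum.elim (fun p : Σ i, J i => (x p.1 p.2 : G)) k)) := by
        rw [Subgroup.map_le_iff_le_comap, Subgroup.closure_le]
        rintro _ ⟨j, rfl⟩
        exact Subgroup.subset_closure ⟨Sum.inl ⟨i, j⟩, rfl⟩
      rw [(hx i).closure_eq_top] at hmap
      exact hmap ⟨⟨g, hg⟩, trivial, rfl⟩
    · exact Subgroup.subset_closure ⟨Sum.inr l, rfl⟩
  · have exists_factor : ∀ i, ∃ f : H i →* Q, ∀ j, f (x i j) = y (Sum.inl ⟨i, j⟩) := fun i =>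
      (hx i).exists_hom Q _ fun j m hm => hy (Sum.inl ⟨i, j⟩) m (congrArg Subtype.val hm)
    choose f hf using exists_factor
    obtain ⟨Θ, hΘ, hΘk⟩ := h.exists_hom Q f fun l => y (Sum.inr l)
    refine ⟨Θ, ?_⟩
    rintro (⟨i, j⟩ | l)
    · exact (hΘ i _).trans (hf i j)
    · exact hΘk l

theorem IsEdgeFreeTreeAction.hasCyclicBasis {Γ V E : Type u} [Group Γ] [MulAction Γ V]
    [MulAction Γ E] {s t : E → V} (h : IsEdgeFreeTreeAction Γ s t)
    (hV : ∀ v : V, HasCyclicBasis (MulAction.stabilizer Γ v)) : HasCyclicBasis Γ := by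
  obtain ⟨κ, ι, v, k, hk⟩ := h.exists_isFreeDecomposition
  exact hk.hasCyclicBasis fun i => hV (v i)

/-- The homomorphism from `ℤ/m` sending the generator to an element with trivial `m`-th power. -/
noncomputable def zmodPowersHom {G : Type*} [Group G] (m : ℕ) (g : G) (hg : g ^ m = 1) :
    Multiplicative (ZMod m) →* G :=
  AddMonoidHom.toMultiplicativeLeft (ZMod.lift m ⟨zmultiplesHom (Additive G) (.ofMul g), by
    rw [zmultiplesHom_apply, natCast_zsmul, ← ofMul_pow, hg, ofMul_one]⟩)

theorem zmodPowersHom_ofAdd_one {G : Type*} [Group G] {m : ℕ} {g : G} (hg : g ^ m = 1) :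
    zmodPowersHom m g hg (Multiplicative.ofAdd 1) = g := by
  have : ZMod.lift m ⟨zmultiplesHom (Additive G) (.ofMul g), by
      rw [zmultiplesHom_apply, natCast_zsmul, ← ofMul_pow, hg, ofMul_one]⟩ ((1 : ℤ) : ZMod m) =
      Additive.ofMul g := by
    rw [ZMod.lift_coe]
    exact one_zsmul _
  rw [Int.cast_one] at this
  exact congrArg Additive.toMul this

theorem ofAdd_one_zpow_surjective (m : ℕ) (z : Multiplicative (ZMod m)) :
    ∃ k : ℤ, Multiplicative.ofAdd (1 : ZMod m) ^ k = z := by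
  obtain ⟨k, hk⟩ := ZMod.intCast_surjective z.toAdd
  exact ⟨k, by rw [← ofAdd_zsmul, zsmul_one, hk, ofAdd_toAdd]⟩

theorem ofAdd_one_pow_eq_one_iff {m k : ℕ} :
    Multiplicative.ofAdd (1 : ZMod m) ^ k = 1 ↔ m ∣ k := by
  rw [← ofAdd_nsmul, nsmul_one, ofAdd_eq_one, ZMod.natCast_eq_zero_iff]

theorem isCyclicBasis_coprodI {ι : Type} (m : ι → ℕ) :
    IsCyclicBasis fun i : ι => (Monoid.CoprodI.of (Multiplicative.ofAdd (1 : ZMod (m i))) :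
      Monoid.CoprodI fun i => Multiplicative (ZMod (m i))) where
  closure_eq_top := by
    refine (Subgroup.eq_top_iff' _).2 fun w => ?_
    induction w using Monoid.CoprodI.induction_on with
    | one => exact one_mem _
    | of i z =>
      obtain ⟨k, rfl⟩ := ofAdd_one_zpow_surjective (m i) z
      rw [map_zpow]
      exact zpow_mem (Subgroup.subset_closure (Set.mem_range_self i)) k
    | mul x y hx hy => exact mul_mem hx hy
  exists_hom Q _ y hy := by
    have y_pow : ∀ i, y i ^ m i = 1 := fun i => hy i (m i) (by
      rw [← map_pow, ofAdd_one_pow_eq_one_iff.2 dvd_rfl, map_one])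
    refine ⟨Monoid.CoprodI.lift fun i => zmodPowersHom (m i) (y i) (y_pow i), fun i => ?_⟩
    rw [Monoid.CoprodI.lift_of, zmodPowersHom_ofAdd_one]

theorem IsCyclicBasis.map_mulEquiv {G H ι : Type u} [Group G] [Group H] {x : ι → G}
    (hx : IsCyclicBasis x) (e : G ≃* H) : IsCyclicBasis (e ∘ x) where
  closure_eq_top := by
    rw [Set.range_comp, ← MulEquiv.coe_toMonoidHom, ← MonoidHom.map_closure, hx.closure_eq_top,
      Subgroup.map_top_of_surjective _ e.surjective]
  exists_hom Q _ y hy := by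
    obtain ⟨Θ, hΘ⟩ := hx.exists_hom Q y fun i m hm => hy i m (by
      rw [Function.comp_apply, ← map_pow, hm, map_one])
    refine ⟨Θ.comp e.symm.toMonoidHom, fun i => ?_⟩
    exact (congrArg Θ (e.symm_apply_apply (x i))).trans (hΘ i)

theorem hasCyclicBasis_of_isFreeProductOfCyclics {G : Type} [Group G]
    (h : IsFreeProductOfCyclics G) : HasCyclicBasis G := by
  obtain ⟨ι, m, ⟨e⟩⟩ := h
  exact ⟨ι, _, (isCyclicBasis_coprodI m).map_mulEquiv e.symm⟩

theorem HasCyclicBasis.isFreeProductOfCyclics {G : Type} [Group G] (h : HasCyclicBasis G) :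
    IsFreeProductOfCyclics G := by
  obtain ⟨ι, x, hx⟩ := h
  obtain ⟨Θ, hΘ⟩ := hx.exists_hom (Monoid.CoprodI fun i => Multiplicative (ZMod (orderOf (x i))))
    (fun i => Monoid.CoprodI.of (Multiplicative.ofAdd 1)) fun i k hk => by
      rw [← map_pow, ofAdd_one_pow_eq_one_iff.2 (orderOf_dvd_of_pow_eq_one hk), map_one]
  let Ξ := Monoid.CoprodI.lift fun i => zmodPowersHom (orderOf (x i)) (x i) (pow_orderOf_eq_one _)
  have Ξ_of : ∀ i, Ξ (Monoid.CoprodI.of (Multiplicative.ofAdd 1)) = x i := fun i => by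
    rw [Monoid.CoprodI.lift_of, zmodPowersHom_ofAdd_one]
  have left_inv : Ξ.comp Θ = MonoidHom.id G :=
    MonoidHom.eq_of_eqOn_dense hx.closure_eq_top (by
      rintro _ ⟨i, rfl⟩
      rw [MonoidHom.comp_apply, hΘ, Ξ_of, MonoidHom.id_apply])
  have right_inv : Θ.comp Ξ = MonoidHom.id _ :=
    MonoidHom.eq_of_eqOn_dense (isCyclicBasis_coprodI _).closure_eq_top (by
      rintro _ ⟨i, rfl⟩
      rw [MonoidHom.comp_apply, Ξ_of, hΘ, MonoidHom.id_apply])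
  exact ⟨ι, _, ⟨Θ.toMulEquiv Ξ left_inv right_inv⟩⟩

theorem IsFreeDecomposition.not_isOfFinOrder {G : Type u} [Group G] {κ ι : Type u}
    {H : κ → Subgroup G} {k : ι → G} (h : IsFreeDecomposition H k) (l : ι) :
    ¬ IsOfFinOrder (k l) := by
  intro hl
  obtain ⟨Θ, -, hΘ⟩ := h.exists_hom (FreeGroup ι) 1 FreeGroup.of
  exact not_isOfFinOrder_of_isMulTorsionFree (FreeGroup.of_ne_one l)
    (hΘ l ▸ Θ.isOfFinOrder hl)

theorem IsTreeAction.torsionFree {Γ V E : Type u} [Group Γ] [MulAction Γ V] [MulAction Γ E]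
    {s t : E → V} (h : IsTreeAction Γ s t) (hV : ∀ v : V, TorsionFree (MulAction.stabilizer Γ v)) :
    TorsionFree Γ := by
  intro g hg
  let A := Subgroup.zpowers g
  have finite_order : ∀ a : A, IsOfFinOrder a := by
    rintro ⟨_, k, rfl⟩
    exact Submonoid.isOfFinOrder_coe.1 hg.zpow
  have free_vertex : ∀ (a : A) (v : V), a • v = v → a = 1 := fun a v hav =>
    Subtype.ext (Subtype.mk.inj (hV v ⟨a, hav⟩
      (Submonoid.isOfFinOrder_coe.1 (A.subtype.isOfFinOrder (finite_order a)))))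
  have action : IsEdgeFreeTreeAction A s t :=
    { h.toIsTree with
      source_smul := fun a e => h.source_smul a e
      target_smul := fun a e => h.target_smul a e
      eq_one_of_smul_edge := fun a e hae => free_vertex a (s e) (by
        exact (h.source_smul a e).symm.trans (congrArg s hae)) }
  obtain ⟨κ, ι, v, k, hk⟩ := action.exists_isFreeDecomposition
  have : ∀ a : A, a ∈ (⊥ : Subgroup A) := by
    rw [← Subgroup.eq_top_iff', eq_top_iff, ← hk.closure_eq_top, Subgroup.closure_le]
    rintro a (ha | ⟨l, rfl⟩)
    · obtain ⟨i, hi⟩ := Set.mem_iUnion.1 ha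
      exact free_vertex a (v i) hi
    · exact absurd (finite_order _) (hk.not_isOfFinOrder l)
  exact congrArg Subtype.val (this ⟨g, Subgroup.mem_zpowers g⟩)

/-! ### Multiple HNN extensions -/

/-- `G` is an HNN extension of the subgroup `base` with stable letters `stable y`, which conjugate
the subgroups `assoc y` of `base` into `base`. As in `IsFreeDecomposition`, only the existence part
of the universal property is recorded. -/
structure HNNDecomposition (G Y : Type u) [Group G] where
  base : Subgroup G
  assoc : Y → Subgroup G
  stable : Y → G
  assoc_le_base : ∀ y, assoc y ≤ base
  conj_mem_base : ∀ y, ∀ u ∈ assoc y, (stable y)⁻¹ * u * stable y ∈ base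
  closure_eq_top : Subgroup.closure (base ∪ Set.range stable) = ⊤
  exists_hom : ∀ (Q : Type u) [Group Q] (f : base →* Q) (c : Y → Q),
    (∀ y u (hu : u ∈ assoc y),
      f ⟨u, assoc_le_base y hu⟩ * c y = c y * f ⟨_, conj_mem_base y u hu⟩) →
    ∃ Θ : G →* Q, (∀ v : base, Θ v = f v) ∧ ∀ y, Θ (stable y) = c y

/-- Right translation on the group of functions `G → P`. -/
def rightTranslation (G P : Type*) [Group G] [Group P] : G →* MulAut (G → P) where
  toFun g :=
    { toFun := fun f x => f (x * g)
      invFun := fun f x => f (x * g⁻¹)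
      left_inv := fun f => by simp only [inv_mul_cancel_right]
      right_inv := fun f => by simp only [mul_inv_cancel_right]
      map_mul' := fun _ _ => rfl }
  map_one' := by ext f x; exact congrArg f (mul_one x)
  map_mul' g g' := by ext f x; exact congrArg f (mul_assoc x g g').symm

theorem mk_mul_eq_mk_iff {G : Type*} [Group G] {H : Subgroup G} {g x : G} :
    ((g * x : G) : G ⧸ H) = x ↔ x⁻¹ * g * x ∈ H := by
  rw [eq_comm, QuotientGroup.eq, mul_assoc]

namespace HNNDecomposition

variable {G Y : Type u} [Group G] (S : HNNDecomposition G Y)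

theorem mem_of_base_le {L : Subgroup G} (hbase : S.base ≤ L) (hstable : ∀ y, S.stable y ∈ L)
    (g : G) : g ∈ L := by
  have : Subgroup.closure (S.base ∪ Set.range S.stable) ≤ L := by
    rw [Subgroup.closure_le, Set.union_subset_iff, Set.range_subset_iff]
    exact ⟨hbase, hstable⟩
  exact this (S.closure_eq_top ▸ Subgroup.mem_top g)

/-- The initial vertex of an edge of the Bass–Serre tree, whose vertices are the cosets of `base`
and whose edges are the cosets of the `assoc y`. -/
def source (e : Σ y, G ⧸ S.assoc y) : G ⧸ S.base :=
  Subgroup.quotientMapOfLE (S.assoc_le_base e.1) e.2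

/-- The terminal vertex of an edge of the Bass–Serre tree. -/
def target (e : Σ y, G ⧸ S.assoc y) : G ⧸ S.base :=
  Quotient.liftOn' e.2 (fun x => QuotientGroup.mk (x * S.stable e.1)) fun a b hab => by
    rw [QuotientGroup.leftRel_apply] at hab
    rw [QuotientGroup.eq]
    simpa only [mul_inv_rev, mul_assoc] using S.conj_mem_base _ _ hab

theorem eq_univ_of_closed {U : Set (G ⧸ S.base)} (hne : U.Nonempty)
    (hU : ∀ e, S.source e ∈ U ↔ S.target e ∈ U) : U = Set.univ := by
  let N : Subgroup G :=
    { carrier := {g | ∀ x : G, (x : G ⧸ S.base) ∈ U ↔ ((x * g : G) : G ⧸ S.base) ∈ U}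
      one_mem' := fun x => by rw [mul_one]
      mul_mem' := fun {a b} ha hb x => by rw [ha x, hb (x * a), mul_assoc]
      inv_mem' := fun {a} ha x => by rw [ha (x * a⁻¹), inv_mul_cancel_right] }
  have mem_N : ∀ g, g ∈ N := S.mem_of_base_le
    (fun v hv x => by rw [QuotientGroup.mk_mul_of_mem x hv])
    fun y x => hU ⟨y, x⟩
  obtain ⟨u, hu⟩ := hne
  obtain ⟨x, rfl⟩ := QuotientGroup.mk_surjective u
  refine Set.eq_univ_of_forall fun v => ?_
  obtain ⟨x', rfl⟩ := QuotientGroup.mk_surjective v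
  simpa only [mul_inv_cancel_left] using (mem_N (x⁻¹ * x') x).1 hu

/-- A labelling of the edges of the tree is a crossed homomorphism defined on the stable letters and
trivial on `base`; it extends to `G` because homomorphisms to `(G → P) ⋊ G` do. -/
theorem exists_crossedHom {P : Type u} [Group P] (d : (Σ y, G ⧸ S.assoc y) → P) :
    ∃ D : G → P, (∀ x, ∀ v ∈ S.base, D (x * v) = D x) ∧
      ∀ x y, D (x * S.stable y) = D x * d ⟨y, x⟩ := by
  obtain ⟨Θ, hbase, hstable⟩ := S.exists_hom ((G → P) ⋊[rightTranslation G P] G)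
    (SemidirectProduct.inr.comp S.base.subtype) (fun y => ⟨fun x => d ⟨y, x⟩, S.stable y⟩) (by
      intro y u hu
      ext x
      · simp only [MonoidHom.comp_apply, SemidirectProduct.mul_left, SemidirectProduct.left_inr,
          SemidirectProduct.right_inr, map_one, one_mul, mul_one]
        change d ⟨y, (x * u : G)⟩ = d ⟨y, x⟩
        rw [QuotientGroup.mk_mul_of_mem x hu]
      · simp only [MonoidHom.comp_apply, SemidirectProduct.mul_right,
          SemidirectProduct.right_inr, Subgroup.coe_subtype]
        group)
  have hright : ∀ g, (Θ g).right = g :=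
    S.mem_of_base_le (L := (SemidirectProduct.rightHom.comp Θ).eqLocus (MonoidHom.id G))
      (fun v hv => congrArg SemidirectProduct.right (hbase ⟨v, hv⟩))
      fun y => congrArg SemidirectProduct.right (hstable y)
  have cocycle : ∀ x g, (Θ (x * g)).left 1 = (Θ x).left 1 * (Θ g).left x := by
    intro x g
    rw [map_mul, SemidirectProduct.mul_left]
    change _ * (Θ g).left (1 * (Θ x).right) = _
    rw [hright, one_mul]
  refine ⟨fun x => (Θ x).left 1, fun x v hv => ?_, fun x y => ?_⟩
  · exact (cocycle x v).trans (by rw [hbase ⟨v, hv⟩]; exact mul_one _)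
  · exact (cocycle x _).trans (by rw [hstable])

theorem isTreeAction : IsTreeAction G S.source S.target where
  nonempty := ⟨QuotientGroup.mk 1⟩
  eq_univ _ := S.eq_univ_of_closed
  exists_potential P _ d := by
    obtain ⟨D, hbase, hstable⟩ := S.exists_crossedHom d
    refine ⟨fun v => Quotient.liftOn' v D fun a b hab => ?_, ?_⟩
    · rw [QuotientGroup.leftRel_apply] at hab
      simpa only [mul_inv_cancel_left] using (hbase a _ hab).symm
    · rintro ⟨y, q⟩
      obtain ⟨x, rfl⟩ := QuotientGroup.mk_surjective q
      exact hstable x y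
  source_smul := by
    rintro g ⟨y, q⟩
    obtain ⟨x, rfl⟩ := QuotientGroup.mk_surjective q
    rfl
  target_smul := by
    rintro g ⟨y, q⟩
    obtain ⟨x, rfl⟩ := QuotientGroup.mk_surjective q
    exact congrArg (QuotientGroup.mk (s := S.base)) (mul_assoc g x (S.stable y))

theorem torsionFree (hbase : TorsionFree S.base) : TorsionFree G := by
  refine S.isTreeAction.torsionFree fun v => ?_
  obtain ⟨x, rfl⟩ := QuotientGroup.mk_surjective v
  let f : MulAction.stabilizer G (x : G ⧸ S.base) →* S.base :=
    ((MulAut.conj x)⁻¹.toMonoidHom.comp (Subgroup.subtype _)).codRestrict S.base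
      fun g => mk_mul_eq_mk_iff.1 g.2
  exact hbase.of_injective f fun a b hab => Subtype.ext
    ((MulAut.conj x)⁻¹.injective (congrArg Subtype.val hab))

theorem hereditarilyCyclic {K : Subgroup G} [K.Normal] (hK : ∀ y, Disjoint K (S.assoc y))
    (hbase : HereditarilyCyclic (K ⊓ S.base)) : HereditarilyCyclic K := by
  intro A _ j hj hjK
  let _ : MulAction A (G ⧸ S.base) := MulAction.compHom _ j
  let _ : MulAction A (Σ y, G ⧸ S.assoc y) := MulAction.compHom _ j
  have conj_mem : ∀ (a : A) (x : G), x⁻¹ * j a * x ∈ K := fun a x => by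
    simpa only [inv_inv] using ‹K.Normal›.conj_mem _ (hjK a) x⁻¹
  have action : IsEdgeFreeTreeAction A S.source S.target :=
    { S.isTreeAction.toIsTree with
      source_smul := fun a => S.isTreeAction.source_smul (j a)
      target_smul := fun a => S.isTreeAction.target_smul (j a)
      eq_one_of_smul_edge := by
        rintro a ⟨y, q⟩ ha
        obtain ⟨x, rfl⟩ := QuotientGroup.mk_surjective q
        have hax : ((j a * x : G) : G ⧸ S.assoc y) = x := eq_of_heq (Sigma.mk.inj ha).2
        have := Subgroup.disjoint_def.1 (hK y) (conj_mem a x) (mk_mul_eq_mk_iff.1 hax)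
        rw [mul_assoc, inv_mul_eq_one, eq_comm, mul_eq_right] at this
        exact (map_eq_one_iff j hj).1 this }
  refine action.hasCyclicBasis fun v => ?_
  obtain ⟨x, rfl⟩ := QuotientGroup.mk_surjective v
  exact hbase _ ((MulAut.conj x)⁻¹.toMonoidHom.comp (j.comp (Subgroup.subtype _)))
    ((MulAut.conj x)⁻¹.injective.comp (hj.comp Subtype.val_injective))
    fun a => ⟨conj_mem a x, mk_mul_eq_mk_iff.1 a.2⟩

end HNNDecomposition

open FreeGroup (of)

/-! ### One-relator quotients -/

local notation "⟪" x "⟫" => Subgroup.normalClosure {x}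

section Relator

variable {H Q : Type*} [Group H] [Group Q]

theorem mem_normalClosure_self (x : H) : x ∈ ⟪x⟫ :=
  Subgroup.subset_normalClosure (Set.mem_singleton x)

theorem normalClosure_singleton_le {x : H} {N : Subgroup H} [N.Normal] (hx : x ∈ N) : ⟪x⟫ ≤ N :=
  Subgroup.normalClosure_le_normal (Set.singleton_subset_iff.2 hx)

theorem normalClosure_singleton_le_ker {x : H} {f : H →* Q} (hx : f x = 1) : ⟪x⟫ ≤ f.ker :=
  normalClosure_singleton_le (MonoidHom.mem_ker.2 hx)

theorem normalClosure_pow_le (x : H) (n : ℕ) : ⟪x ^ n⟫ ≤ ⟪x⟫ :=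
  normalClosure_singleton_le (pow_mem (mem_normalClosure_self x) n)

theorem normalClosure_inv (x : H) : ⟪x⁻¹⟫ = ⟪x⟫ :=
  le_antisymm (normalClosure_singleton_le (inv_mem (mem_normalClosure_self x)))
    (normalClosure_singleton_le (inv_mem_iff.1 (mem_normalClosure_self x⁻¹)))

theorem normalClosure_conj (x g : H) : ⟪g * x * g⁻¹⟫ = ⟪x⟫ := by
  refine le_antisymm (normalClosure_singleton_le
    (Subgroup.normalClosure_normal.conj_mem _ (mem_normalClosure_self x) g))
    (normalClosure_singleton_le ?_)
  simpa only [mul_assoc, inv_mul_cancel_left, inv_mul_cancel, mul_one, inv_inv] using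
    Subgroup.normalClosure_normal.conj_mem _ (mem_normalClosure_self (g * x * g⁻¹)) g⁻¹

theorem comap_normalClosure (e : H ≃* Q) (x : H) : ⟪e x⟫.comap e.toMonoidHom = ⟪x⟫ := by
  have := Subgroup.map_normalClosure {x} e.toMonoidHom e.surjective
  rw [Set.image_singleton] at this
  change ⟪e.toMonoidHom x⟫.comap e.toMonoidHom = ⟪x⟫
  rw [← this, Subgroup.comap_map_eq_self_of_injective e.injective]

theorem disjoint_normalClosure_of_map {f : H →* Q} (hf : Function.Injective f) {K : Subgroup H}
    {L : Subgroup Q} (hKL : K ≤ L.comap f) {x : H} (h : Disjoint L ⟪f x⟫) : Disjoint K ⟪x⟫ := by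
  refine Subgroup.disjoint_def.2 fun {w} hw hwx => hf ?_
  rw [map_one]
  exact Subgroup.disjoint_def.1 h (hKL hw)
    (normalClosure_singleton_le (N := ⟪f x⟫.comap f) (mem_normalClosure_self (f x)) hwx)

/-- `x` is not a proper power. -/
def NotProperPower (x : H) : Prop := ∀ (s : H) (k : ℕ), 1 ≤ k → x = s ^ k → k = 1

theorem NotProperPower.ne_one {x : H} (h : NotProperPower x) : x ≠ 1 := by
  rintro rfl
  exact absurd (h 1 2 one_le_two (one_pow 2).symm) (by decide)

theorem NotProperPower.of_map {f : H →* Q} {x : H} (h : NotProperPower (f x)) :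
    NotProperPower x := fun s k hk hx => h (f s) k hk (by rw [hx, map_pow])

theorem NotProperPower.conj {x : H} (h : NotProperPower x) (g : H) :
    NotProperPower (g * x * g⁻¹) := by
  refine .of_map (f := (MulAut.conj g⁻¹).toMonoidHom) ?_
  simpa only [MulEquiv.toMonoidHom_eq_coe, MonoidHom.coe_coe, MulAut.conj_apply, mul_assoc,
    inv_mul_cancel_left, inv_mul_cancel, mul_one, inv_inv] using h

end Relator

/-- The structural information about the one-relator quotients by the powers of `r` which is
carried through the induction: the quotient by `r` has no torsion, and in the quotient by `r ^ n`
every subgroup of the kernel of the projection to the quotient by `r` is a free product of cyclic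
groups. -/
structure IsTame {H : Type u} [Group H] (r : H) : Prop where
  torsionFree : TorsionFree (H ⧸ ⟪r⟫)
  hereditarilyCyclic (n : ℕ) : HereditarilyCyclic (⟪r⟫.map (QuotientGroup.mk' ⟪r ^ n⟫))

theorem IsTame.of_comap {H H' : Type u} [Group H] [Group H'] {r : H} {s : H'} (h : IsTame s)
    (f : H →* H') (hf : ∀ n : ℕ, ⟪s ^ n⟫.comap f = ⟪r ^ n⟫) : IsTame r := by
  have hf₁ : ⟪s⟫.comap f = ⟪r⟫ := by simpa only [pow_one] using hf 1
  have map_injective {N : Subgroup H} {M : Subgroup H'} [N.Normal] [M.Normal] (h : M.comap f = N) :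
      Function.Injective (QuotientGroup.map N M f h.ge) :=
    (injective_iff_map_eq_one _).2 fun q => QuotientGroup.induction_on q fun x hx =>
      (QuotientGroup.eq_one_iff x).2 (h.le ((QuotientGroup.eq_one_iff (f x)).1 hx))
  refine ⟨h.torsionFree.of_injective _ (map_injective hf₁), fun n A _ j hj hjK =>
    h.hereditarilyCyclic n A ((QuotientGroup.map _ _ f (hf n).ge).comp j)
      ((map_injective (hf n)).comp hj) fun a => ?_⟩
  obtain ⟨x, hx, hxa⟩ := hjK a
  exact ⟨f x, hf₁.ge hx, congrArg (QuotientGroup.map _ _ f (hf n).ge) hxa⟩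

theorem IsTame.of_normalClosure_eq {H : Type u} [Group H] {r s : H} (h : IsTame s)
    (hrs : ∀ n : ℕ, ⟪s ^ n⟫ = ⟪r ^ n⟫) : IsTame r :=
  h.of_comap (MonoidHom.id H) fun n => (Subgroup.comap_id _).trans (hrs n)

theorem IsTame.conj {H : Type u} [Group H] {r g : H} (h : IsTame (g * r * g⁻¹)) : IsTame r :=
  h.of_normalClosure_eq fun n => by rw [conj_pow, normalClosure_conj]

/-! ### Letters of words -/

section Letters

variable {X Z : Type*}

open Classical in
/-- The length of the reduced word of an element of a free group. -/
noncomputable def wordLength (r : FreeGroup X) : ℕ := r.norm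

open Classical in
/-- The letters occurring in the reduced word of an element of a free group. -/
def letters (r : FreeGroup X) : Set X := {x | ∃ b, (x, b) ∈ r.toWord}

/-- The subgroup of a free group generated by a set of letters. -/
abbrev letterSubgroup (S : Set X) : Subgroup (FreeGroup X) := Subgroup.closure (of '' S)

theorem of_mem_letterSubgroup {S : Set X} {x : X} (hx : x ∈ S) : of x ∈ letterSubgroup S :=
  Subgroup.subset_closure ⟨x, hx, rfl⟩

theorem finite_letters (r : FreeGroup X) : (letters r).Finite := by
  classical
  refine (r.toWord.map Prod.fst).toFinset.finite_toSet.subset ?_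
  rintro x ⟨b, hb⟩
  exact List.mem_toFinset.2 (List.mem_map.2 ⟨_, hb, rfl⟩)

theorem mk_mem {K : Subgroup (FreeGroup X)} {L : List (X × Bool)} (h : ∀ p ∈ L, of p.1 ∈ K) :
    FreeGroup.mk L ∈ K := by
  induction L with
  | nil => exact K.one_mem
  | cons p L ih =>
    rw [List.forall_mem_cons] at h
    obtain ⟨x, _ | _⟩ := p
    exacts [K.mul_mem (K.inv_mem h.1) (ih h.2), K.mul_mem h.1 (ih h.2)]

theorem mem_of_letters {K : Subgroup (FreeGroup X)} {r : FreeGroup X}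
    (h : ∀ x ∈ letters r, of x ∈ K) : r ∈ K := by
  classical
  rw [← FreeGroup.mk_toWord (x := r)]
  exact mk_mem fun p hp => h _ ⟨p.2, hp⟩

theorem mem_letterSubgroup {S : Set X} {r : FreeGroup X} (h : letters r ⊆ S) :
    r ∈ letterSubgroup S :=
  mem_of_letters fun x hx => Subgroup.subset_closure ⟨x, h hx, rfl⟩

/-- A length function on a group: subadditive and symmetric. -/
structure IsLengthFunction {Q : Type*} [Group Q] (ℓ : Q → ℕ) : Prop where
  map_one : ℓ 1 = 0
  map_mul_le : ∀ x y, ℓ (x * y) ≤ ℓ x + ℓ y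
  map_inv_le : ∀ x, ℓ x⁻¹ ≤ ℓ x

namespace IsLengthFunction

variable {Q : Type*} [Group Q] {ℓ : Q → ℕ} {f : FreeGroup X →* Q}

theorem map_mk_le (hℓ : IsLengthFunction ℓ) (hf : ∀ x, ℓ (f (of x)) ≤ 1) (L : List (X × Bool)) :
    ℓ (f (FreeGroup.mk L)) ≤ L.length ∧
      ∀ z b, (z, b) ∈ L → ℓ (f (of z)) = 0 → ℓ (f (FreeGroup.mk L)) < L.length := by
  induction L with
  | nil => exact ⟨(congrArg ℓ (_root_.map_one f)).trans_le hℓ.map_one.le, by simp⟩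
  | cons p L ih =>
    have le_add : ℓ (f (FreeGroup.mk (p :: L))) ≤ ℓ (f (of p.1)) + ℓ (f (FreeGroup.mk L)) := by
      obtain ⟨x, _ | _⟩ := p
      · change ℓ (f ((of x)⁻¹ * FreeGroup.mk L)) ≤ _
        rw [map_mul, map_inv]
        exact (hℓ.map_mul_le _ _).trans (Nat.add_le_add_right (hℓ.map_inv_le _) _)
      · change ℓ (f (of x * FreeGroup.mk L)) ≤ _
        rw [map_mul]
        exact hℓ.map_mul_le _ _
    have hp := hf p.1
    rw [List.length_cons]
    refine ⟨by lia, fun z b hz hfz => ?_⟩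
    rcases List.mem_cons.1 hz with rfl | hzL
    · dsimp only at le_add
      lia
    · have := ih.2 z b hzL hfz
      lia

theorem map_le (hℓ : IsLengthFunction ℓ) (hf : ∀ x, ℓ (f (of x)) ≤ 1) (r : FreeGroup X) :
    ℓ (f r) ≤ wordLength r := by
  classical
  have := (hℓ.map_mk_le hf r.toWord).1
  rwa [FreeGroup.mk_toWord] at this

theorem map_lt (hℓ : IsLengthFunction ℓ) (hf : ∀ x, ℓ (f (of x)) ≤ 1) {r : FreeGroup X} {z : X}
    (hz : z ∈ letters r) (hfz : ℓ (f (of z)) = 0) : ℓ (f r) < wordLength r := by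
  classical
  obtain ⟨b, hb⟩ := hz
  have := (hℓ.map_mk_le hf r.toWord).2 z b hb hfz
  rwa [FreeGroup.mk_toWord] at this

end IsLengthFunction

theorem wordLength_of (x : X) : wordLength (of x) = 1 := by
  classical
  exact FreeGroup.norm_of x

theorem wordLength_one : wordLength (1 : FreeGroup X) = 0 := by
  classical
  exact FreeGroup.norm_one

theorem isLengthFunction_wordLength : IsLengthFunction (wordLength (X := X)) := by
  classical
  exact ⟨FreeGroup.norm_one, FreeGroup.norm_mul_le, fun _ => FreeGroup.norm_inv_eq.le⟩

theorem wordLength_map_le {f : FreeGroup X →* FreeGroup Z}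
    (hf : ∀ x, wordLength (f (of x)) ≤ 1) (r : FreeGroup X) : wordLength (f r) ≤ wordLength r :=
  isLengthFunction_wordLength.map_le hf r

theorem wordLength_map_lt {f : FreeGroup X →* FreeGroup Z} (hf : ∀ x, wordLength (f (of x)) ≤ 1)
    {r : FreeGroup X} {z : X} (hz : z ∈ letters r) (hfz : f (of z) = 1) :
    wordLength (f r) < wordLength r :=
  isLengthFunction_wordLength.map_lt hf hz (by rw [hfz, wordLength_one])

open Classical in
/-- The retraction onto the free group on `S` killing the letters outside `S`. -/
noncomputable def retract (S : Set X) : FreeGroup X →* FreeGroup S :=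
  FreeGroup.lift fun x => if h : x ∈ S then of ⟨x, h⟩ else 1

theorem retract_of_mem {S : Set X} {x : X} (h : x ∈ S) : retract S (of x) = of ⟨x, h⟩ := by
  rw [retract, FreeGroup.lift_apply_of, dif_pos h]

theorem retract_of_notMem {S : Set X} {x : X} (h : x ∉ S) : retract S (of x) = 1 := by
  rw [retract, FreeGroup.lift_apply_of, dif_neg h]

theorem wordLength_retract_of_le (S : Set X) (x : X) : wordLength (retract S (of x)) ≤ 1 := by
  by_cases h : x ∈ S
  · rw [retract_of_mem h, wordLength_of]
  · rw [retract_of_notMem h, wordLength_one]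
    exact zero_le_one

/-- The inclusion of the free group on a set of letters. -/
abbrev inclusion (S : Set X) : FreeGroup S →* FreeGroup X := FreeGroup.map Subtype.val

theorem inclusion_retract {S : Set X} {r : FreeGroup X} (h : r ∈ letterSubgroup S) :
    inclusion S (retract S r) = r := by
  refine MonoidHom.eqOn_closure (f := (inclusion S).comp (retract S)) (g := .id _) ?_ h
  rintro _ ⟨x, hx, rfl⟩
  rw [MonoidHom.comp_apply, retract_of_mem hx, FreeGroup.map.of, MonoidHom.id_apply]

theorem inclusion_mem (S : Set X) (w : FreeGroup S) : inclusion S w ∈ letterSubgroup S := by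
  refine mem_of_letters (K := (letterSubgroup S).comap (inclusion S)) fun x _ => ?_
  exact Subgroup.subset_closure ⟨x, x.2, FreeGroup.map.of⟩

/-- No conjugate of `r` is shorter than `r`. -/
def IsMinimalConj (r : FreeGroup X) : Prop := ∀ g, wordLength r ≤ wordLength (g * r * g⁻¹)

theorem exists_isMinimalConj (r : FreeGroup X) :
    ∃ g, IsMinimalConj (g * r * g⁻¹) ∧ wordLength (g * r * g⁻¹) ≤ wordLength r := by
  let len (g : FreeGroup X) := wordLength (g * r * g⁻¹)
  have le_len (h) : len (Function.argmin len) ≤ len h := Function.argmin_le len h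
  refine ⟨Function.argmin len, fun h => ?_, by simpa [len] using le_len 1⟩
  simpa only [len, mul_inv_rev, mul_assoc] using le_len (h * Function.argmin len)

-- Otherwise the retraction to `S` would turn `r` into a shorter conjugate of `r`.
theorem IsMinimalConj.conj_notMem {r : FreeGroup X} (hr : IsMinimalConj r) {z : X}
    (hz : z ∈ letters r) {S : Set X} (hS : z ∉ S) (g : FreeGroup X) :
    g * r * g⁻¹ ∉ letterSubgroup S := by
  intro h
  let κ := (inclusion S).comp (retract S)
  have shorter : wordLength (κ r) < wordLength r :=
    (wordLength_map_le (f := inclusion S)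
      (fun x => by rw [FreeGroup.map.of, wordLength_of]) (retract S r)).trans_lt
      (wordLength_map_lt (wordLength_retract_of_le S) hz (retract_of_notMem hS))
  have conjugate : κ r = (κ g)⁻¹ * g * r * ((κ g)⁻¹ * g)⁻¹ := by
    have : κ g * κ r * (κ g)⁻¹ = g * r * g⁻¹ := by
      rw [← map_inv, ← map_mul, ← map_mul]
      exact inclusion_retract h
    rw [mul_inv_rev, inv_inv, mul_assoc (κ g)⁻¹, ← mul_assoc _ g⁻¹, mul_assoc (κ g)⁻¹, ← this]
    group
  exact (hr _).not_gt (conjugate ▸ shorter)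

/-- The conclusion of Magnus' Freiheitssatz: a set of letters generating no conjugate of `r`
remains a basis of a free subgroup modulo `r`. -/
def Freiheitssatz (r : FreeGroup X) : Prop :=
  ∀ S : Set X, (∀ g, g * r * g⁻¹ ∉ letterSubgroup S) → Disjoint (letterSubgroup S) ⟪r⟫

theorem Freiheitssatz.of_compl_singleton {r : FreeGroup X}
    (h : ∀ z : X, (∀ g, g * r * g⁻¹ ∉ letterSubgroup {z}ᶜ) → Disjoint (letterSubgroup {z}ᶜ) ⟪r⟫) :
    Freiheitssatz r := by
  intro S hS
  obtain ⟨g, hg, -⟩ := exists_isMinimalConj r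
  obtain ⟨z, hz, hzS⟩ := Set.not_subset.1 fun h => hS g (mem_letterSubgroup h)
  refine (h z fun g' hg' => ?_).mono_left
    (Subgroup.closure_mono (Set.image_mono (Set.subset_compl_singleton_iff.2 hzS)))
  have : g' * g⁻¹ * (g * r * g⁻¹) * (g' * g⁻¹)⁻¹ = g' * r * g'⁻¹ := by group
  exact hg.conj_notMem hz (S := {z}ᶜ) (Set.notMem_compl_iff.2 rfl) (g' * g⁻¹) (this ▸ hg')

theorem Freiheitssatz.conj {r g : FreeGroup X} (h : Freiheitssatz (g * r * g⁻¹)) :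
    Freiheitssatz r := by
  intro S hS
  rw [← normalClosure_conj r g]
  refine h S fun g' => ?_
  simpa only [mul_inv_rev, mul_assoc] using hS (g' * g)

end Letters

/-! ### Relators in a single letter -/

section SingleLetter

variable {X : Type u}

theorem Freiheitssatz.of_letters_subset_singleton {X : Type*} {r : FreeGroup X} {z : X}
    (hr : letters r ⊆ {z}) : Freiheitssatz r := by
  intro S hS
  have hz : z ∉ S := fun hz => hS 1 <| by
    simpa using mem_letterSubgroup (hr.trans (Set.singleton_subset_iff.2 hz))
  have retract_eq_one : retract S r = 1 :=
    mem_of_letters (K := (retract S).ker) fun x hx => hr hx ▸ retract_of_notMem hz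
  refine Subgroup.disjoint_def.2 fun {w} hw hwr => ?_
  rw [← inclusion_retract hw, normalClosure_singleton_le_ker retract_eq_one hwr, map_one]

open Classical in
/-- The quotient by a power of a letter is the free product of a cyclic group and a free group. -/
noncomputable def singleLetterDecomposition (z : X) (n : ℕ) :
    HNNDecomposition (FreeGroup X ⧸ ⟪of z ^ n⟫) {y : X // y ≠ z} where
  base := Subgroup.zpowers (of z : FreeGroup X)
  assoc _ := ⊥
  stable y := (of y.1 : FreeGroup X)
  assoc_le_base _ := bot_le
  conj_mem_base y u hu := by
    rw [Subgroup.mem_bot.1 hu, mul_one, inv_mul_cancel]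
    exact one_mem _
  closure_eq_top := by
    refine (Subgroup.eq_top_iff' _).2 fun q => QuotientGroup.induction_on q fun w => ?_
    refine mem_of_letters (K := (Subgroup.closure _).comap (QuotientGroup.mk' _)) fun y _ =>
      Subgroup.subset_closure ?_
    rcases eq_or_ne y z with rfl | hy
    exacts [.inl (Subgroup.mem_zpowers _), .inr ⟨⟨y, hy⟩, rfl⟩]
  exists_hom Q _ f c _ := by
    let a : Subgroup.zpowers ((of z : FreeGroup X) : FreeGroup X ⧸ ⟪of z ^ n⟫) :=
      ⟨_, Subgroup.mem_zpowers _⟩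
    have ha : a ^ n = 1 := Subtype.ext ((QuotientGroup.eq_one_iff _).2 (mem_normalClosure_self _))
    let Θ : FreeGroup X →* Q := FreeGroup.lift fun x => if h : x = z then f a else c ⟨x, h⟩
    have hΘ : Θ (of z) = f a := by rw [FreeGroup.lift_apply_of, dif_pos rfl]
    refine ⟨QuotientGroup.lift _ Θ (normalClosure_singleton_le_ker ?_), ?_, fun y => ?_⟩
    · rw [map_pow, hΘ, ← map_pow, ha, map_one]
    · rintro ⟨_, k, rfl⟩
      exact (map_zpow Θ (of z) k).trans (by rw [hΘ, ← map_zpow]; rfl)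
    · exact (FreeGroup.lift_apply_of ..).trans (dif_neg y.2)

theorem hereditarilyCyclic_zpowers {G : Type u} [Group G] (g : G) :
    HereditarilyCyclic (Subgroup.zpowers g) := by
  intro A _ j hj hjg
  have : IsCyclic A := isCyclic_of_injective (j.codRestrict _ hjg)
    ((MonoidHom.injective_codRestrict ..).2 hj)
  obtain ⟨a, ha⟩ := IsCyclic.exists_generator (α := A)
  refine ⟨PUnit, fun _ => a, ?_, fun Q _ y hy => ?_⟩
  · rw [Set.range_const, ← Subgroup.zpowers_eq_closure]
    exact (Subgroup.eq_top_iff' _).2 ha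
  · have hay : orderOf (y ⟨⟩) ∣ orderOf a :=
      orderOf_dvd_of_pow_eq_one (hy ⟨⟩ _ (pow_orderOf_eq_one a))
    exact ⟨_, fun _ => monoidHomOfForallMemZpowers_apply_gen ha hay⟩

theorem isTame_of (z : X) : IsTame (of z) where
  torsionFree := by
    have hz : (of z : FreeGroup X ⧸ ⟪of z ^ 1⟫) = 1 := by
      rw [QuotientGroup.eq_one_iff]
      exact pow_one (of z) ▸ mem_normalClosure_self (of z)
    rw [← pow_one (of z)]
    refine (singleLetterDecomposition z 1).torsionFree fun ⟨g, k, hg⟩ _ => Subtype.ext ?_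
    exact hg.symm.trans ((congrArg (· ^ k) hz).trans (one_zpow k))
  hereditarilyCyclic n := by
    have : (⟪of z⟫.map (QuotientGroup.mk' ⟪of z ^ n⟫)).Normal :=
      Subgroup.normalClosure_normal.map _ (QuotientGroup.mk'_surjective _)
    exact (singleLetterDecomposition z n).hereditarilyCyclic (fun _ => disjoint_bot_right)
      ((hereditarilyCyclic_zpowers _).mono inf_le_right)

theorem isTame_of_letters_subset_singleton {r : FreeGroup X} {z : X} (hr : letters r ⊆ {z})
    (hr' : NotProperPower r) : IsTame r := by
  obtain ⟨k, hk⟩ : ∃ k : ℤ, of z ^ k = r := by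
    have := mem_letterSubgroup hr
    rwa [letterSubgroup, Set.image_singleton, Subgroup.mem_closure_singleton] at this
  have ne_zero : k.natAbs ≠ 0 := fun h => hr'.ne_one <| by
    rw [← hk, Int.natAbs_eq_zero.1 h, zpow_zero]
  rcases k.natAbs_eq with h | h <;> rw [h] at hk
  · rw [zpow_natCast] at hk
    have := hr' _ _ (Nat.one_le_iff_ne_zero.2 ne_zero) hk.symm
    rw [← hk, this, pow_one]
    exact isTame_of z
  · rw [zpow_neg, zpow_natCast, ← inv_pow] at hk
    have := hr' _ _ (Nat.one_le_iff_ne_zero.2 ne_zero) hk.symm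
    rw [← hk, this, pow_one]
    exact (isTame_of z).of_normalClosure_eq fun n => by rw [inv_pow, normalClosure_inv]

end SingleLetter

theorem map_mem_of_mem_letterSubgroup {X Q : Type*} [Group Q] {f : FreeGroup X →* Q}
    {S : Set X} {K : Subgroup Q} (hf : ∀ x ∈ S, f (of x) ∈ K) {w : FreeGroup X}
    (hw : w ∈ letterSubgroup S) : f w ∈ K := by
  have : letterSubgroup S ≤ K.comap f := by
    rwa [Subgroup.closure_le, Set.image_subset_iff]
  exact this hw

theorem letters_subset_of_mem {X : Type*} {S : Set X} {r : FreeGroup X}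
    (hr : r ∈ letterSubgroup S) : letters r ⊆ S := by
  intro z hz
  by_contra hzS
  have retract_lt := wordLength_map_lt (wordLength_retract_of_le S) hz (retract_of_notMem hzS)
  have inclusion_le := wordLength_map_le (f := inclusion S)
    (fun x => by rw [FreeGroup.map.of, wordLength_of]) (retract S r)
  rw [inclusion_retract hr] at inclusion_le
  exact absurd retract_lt inclusion_le.not_gt

theorem mk_comp_injective {H Q : Type*} [Group H] [Group Q] {f : H →* Q}
    (hf : Function.Injective f) {N : Subgroup Q} [N.Normal] (h : Disjoint f.range N) :
    Function.Injective ((QuotientGroup.mk' N).comp f) := by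
  refine (injective_iff_map_eq_one _).2 fun w hw => hf ?_
  rw [map_one]
  exact Subgroup.disjoint_def.1 h ⟨w, rfl⟩ ((QuotientGroup.eq_one_iff _).1 hw)

theorem HereditarilyCyclic.map {V G : Type u} [Group V] [Group G] {K : Subgroup V}
    (hK : HereditarilyCyclic K) {f : V →* G} (hf : Function.Injective f) :
    HereditarilyCyclic (K.map f) := by
  intro A _ j hj hjK
  have mem_range (a : A) : j a ∈ f.range := Subgroup.map_le_range f K (hjK a)
  let e := MonoidHom.ofInjective hf
  let j' : A →* V := e.symm.toMonoidHom.comp (j.codRestrict f.range mem_range)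
  have map_j' (a : A) : f (j' a) = j a :=
    congrArg Subtype.val (e.apply_symm_apply ⟨j a, mem_range a⟩)
  refine hK A j' (.of_comp (f := f) ?_) fun a => ?_
  · convert hj using 1
    exact funext map_j'
  · exact (Subgroup.mem_map_iff_mem hf).1 ((map_j' a).symm ▸ hjK a)

/-! ### The shift product -/

section ShiftProduct

variable {Y : Type*}

/-- The automorphisms of the free group on the letters `(y, i)` which translate the index `i`. -/
def shift (Y : Type*) : Multiplicative ℤ →* MulAut (FreeGroup (Y × ℤ)) where
  toFun n := FreeGroup.freeGroupCongr ((Equiv.refl Y).prodCongr (Equiv.addRight n.toAdd))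
  map_one' := by
    refine MulEquiv.toMonoidHom_injective (FreeGroup.ext_hom _ _ fun p => ?_)
    simp
  map_mul' m n := by
    refine MulEquiv.toMonoidHom_injective (FreeGroup.ext_hom _ _ fun p => ?_)
    simp [Prod.map, add_left_comm, add_comm]

theorem shift_of (n : Multiplicative ℤ) (p : Y × ℤ) :
    shift Y n (of p) = of (p.1, p.2 + n.toAdd) := by
  simp only [shift, MonoidHom.coe_mk, OneHom.coe_mk, FreeGroup.freeGroupCongr_apply,
    FreeGroup.map.of]
  rfl

theorem shift_mem_letterSubgroup {n : Multiplicative ℤ} {S T : Set (Y × ℤ)}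
    (hST : ∀ p ∈ S, (p.1, p.2 + n.toAdd) ∈ T) {w : FreeGroup (Y × ℤ)} (hw : w ∈ letterSubgroup S) :
    shift Y n w ∈ letterSubgroup T := by
  refine map_mem_of_mem_letterSubgroup (f := (shift Y n).toMonoidHom) (fun p hp => ?_) hw
  rw [MulEquiv.coe_toMonoidHom, shift_of]
  exact Subgroup.subset_closure ⟨_, hST p hp, rfl⟩

/-- The free group on `Y` and one further letter, the stable letter, presented as the semidirect
product of the normal closure of `Y`, where `(y, i)` stands for the conjugate of `y` by the `i`-th
power of the stable letter, and of the powers of the stable letter. -/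
abbrev ShiftProduct (Y : Type*) : Type _ := FreeGroup (Y × ℤ) ⋊[shift Y] Multiplicative ℤ

/-- The embedding of the free group on the letters `(y, i)`. -/
abbrev inl : FreeGroup (Y × ℤ) →* ShiftProduct Y := SemidirectProduct.inl

/-- The stable letter. -/
def stableLetter : ShiftProduct Y := SemidirectProduct.inr (Multiplicative.ofAdd 1)

theorem stableLetter_zpow (k : ℤ) :
    (stableLetter : ShiftProduct Y) ^ k = SemidirectProduct.inr (Multiplicative.ofAdd k) := by
  rw [stableLetter, ← map_zpow, ← ofAdd_zsmul, smul_eq_mul, mul_one]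

theorem stableLetter_zpow_conj (k : ℤ) (w : FreeGroup (Y × ℤ)) :
    stableLetter ^ k * inl w * (stableLetter ^ k)⁻¹ = inl (shift Y (Multiplicative.ofAdd k) w) := by
  rw [stableLetter_zpow, SemidirectProduct.inl_aut, map_inv]

theorem inl_of (y : Y) (a i : ℤ) :
    inl (of (y, i)) = stableLetter ^ (i - a) * inl (of (y, a)) * (stableLetter ^ (i - a))⁻¹ := by
  rw [stableLetter_zpow_conj, shift_of, toAdd_ofAdd, add_sub_cancel]

theorem ShiftProduct.mem_of_generators {L : Subgroup (ShiftProduct Y)} {a : ℤ}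
    (hof : ∀ y, inl (of (y, a)) ∈ L) (hstable : stableLetter ∈ L) (x : ShiftProduct Y) :
    x ∈ L := by
  have inl_mem (w : FreeGroup (Y × ℤ)) : inl w ∈ L := by
    refine mem_of_letters (K := L.comap inl) fun ⟨y, i⟩ _ => ?_
    rw [Subgroup.mem_comap, inl_of y a]
    exact mul_mem (mul_mem (zpow_mem hstable _) (hof y)) (inv_mem (zpow_mem hstable _))
  have inr_mem := L.zpow_mem hstable x.right.toAdd
  rw [stableLetter_zpow, ofAdd_toAdd] at inr_mem
  rw [← SemidirectProduct.inl_left_mul_inr_right x]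
  exact L.mul_mem (inl_mem _) inr_mem

/-- The homomorphism from the free group on `Y` and the stable letter with the given values. -/
def ShiftProduct.lift {Q : Type*} [Group Q] (f : Y → Q) (c : Q) : ShiftProduct Y →* Q :=
  SemidirectProduct.lift (FreeGroup.lift fun p : Y × ℤ => c ^ p.2 * f p.1 * (c ^ p.2)⁻¹)
    (zpowersHom Q c) fun n => by
      ext p
      simp only [MonoidHom.comp_apply, MulEquiv.coe_toMonoidHom, shift_of,
        FreeGroup.lift_apply_of, MulAut.conj_apply, zpowersHom_apply]
      rw [add_comm, zpow_add]
      group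

theorem ShiftProduct.lift_inl_of {Q : Type*} [Group Q] (f : Y → Q) (c : Q) (p : Y × ℤ) :
    ShiftProduct.lift f c (inl (of p)) = c ^ p.2 * f p.1 * (c ^ p.2)⁻¹ := by
  rw [lift, SemidirectProduct.lift_inl, FreeGroup.lift_apply_of]

theorem ShiftProduct.lift_stableLetter {Q : Type*} [Group Q] (f : Y → Q) (c : Q) :
    ShiftProduct.lift f c stableLetter = c := by
  rw [lift, stableLetter, SemidirectProduct.lift_inr, zpowersHom_apply, toAdd_ofAdd, zpow_one]

/-- The subgroup generated by the stable letter and the elements of `Y` other than `z`. -/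
def avoiding (z : Y) : Subgroup (ShiftProduct Y) where
  carrier := {x | x.left ∈ letterSubgroup {p : Y × ℤ | p.1 ≠ z}}
  one_mem' := (letterSubgroup {p : Y × ℤ | p.1 ≠ z}).one_mem
  mul_mem' {_ y} hx hy := mul_mem hx
    (shift_mem_letterSubgroup (w := y.left) (fun _ (hp : _ ≠ z) => hp) hy)
  inv_mem' {x} hx := shift_mem_letterSubgroup (w := x.left⁻¹) (fun _ (hp : _ ≠ z) => hp)
    (inv_mem hx)

/-- The subgroup generated by the letters `(y, a)`. -/
def level (a : ℤ) : Subgroup (ShiftProduct Y) := (letterSubgroup {p : Y × ℤ | p.2 = a}).map inl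

theorem eq_inl_left {x : ShiftProduct Y} (hx : x.right = 1) : x = inl x.left := by
  conv_lhs => rw [← SemidirectProduct.inl_left_mul_inr_right x, hx, map_one, mul_one]

theorem eq_inl_left_of_mem_normalClosure {r : FreeGroup (Y × ℤ)} {x : ShiftProduct Y}
    (hx : x ∈ ⟪inl r⟫) : x = inl x.left :=
  eq_inl_left (normalClosure_singleton_le_ker
    (f := SemidirectProduct.rightHom (φ := shift Y)) (SemidirectProduct.rightHom_inl r) hx)

theorem stableLetter_zpow_conj_mem_level {x : ShiftProduct Y} {b : ℤ} (hx : x ∈ level b) (a : ℤ) :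
    stableLetter ^ (a - b) * x * (stableLetter ^ (a - b))⁻¹ ∈ level a := by
  obtain ⟨w, hw, rfl⟩ := hx
  rw [stableLetter_zpow_conj]
  refine Subgroup.mem_map_of_mem _ (shift_mem_letterSubgroup (fun p (hp : p.2 = b) => ?_) hw)
  exact (congrArg (· + (a - b)) hp).trans (add_sub_cancel b a)

end ShiftProduct

/-! ### Windows -/

section Window

variable {Y : Type u} {z : Y} {a c : ℤ}

/-- The letters `(y, i)` such that `i ∈ [a, c]` in case `y = z`. -/
def window (z : Y) (a c : ℤ) : Set (Y × ℤ) := {p | p.1 = z → p.2 ∈ Set.Icc a c}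

/-- The letters of a window which the shift does not move out of the window. -/
def overlap (z : Y) (a c : ℤ) : Set (Y × ℤ) :=
  {p | p ∈ window z a c ∧ (p.1, p.2 + 1) ∈ window z a c}

/-- The inclusion of the overlap in the window. -/
def lower : FreeGroup (overlap z a c) →* FreeGroup (window z a c) :=
  FreeGroup.map fun p => ⟨p, p.2.1⟩

/-- The inclusion of the overlap in the window, followed by the shift. -/
def upper : FreeGroup (overlap z a c) →* FreeGroup (window z a c) :=
  FreeGroup.map fun p => ⟨_, p.2.2⟩

theorem lower_injective : Function.Injective (lower (z := z) (a := a) (c := c)) :=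
  FreeGroup.map_injective fun _ _ h => Subtype.ext (congrArg (·.1) h :)

theorem upper_injective : Function.Injective (upper (z := z) (a := a) (c := c)) := by
  refine FreeGroup.map_injective ?_
  rintro ⟨⟨y, i⟩, hp⟩ ⟨⟨y', i'⟩, hp'⟩ h
  simpa using h

theorem range_lower_le :
    (lower (z := z) (a := a) (c := c)).range ≤ letterSubgroup {x | x.1 ≠ (z, c)} := by
  rintro _ ⟨w, rfl⟩
  refine mem_of_letters (K := (letterSubgroup _).comap lower) fun ⟨⟨y, i⟩, h₁, h₂⟩ _ => ?_
  refine Subgroup.subset_closure ⟨_, fun h => ?_, FreeGroup.map.of.symm⟩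
  obtain ⟨rfl, rfl⟩ := Prod.mk.inj h
  exact absurd (h₂ rfl).2 (by simp)

theorem range_upper_le :
    (upper (z := z) (a := a) (c := c)).range ≤ letterSubgroup {x | x.1 ≠ (z, a)} := by
  rintro _ ⟨w, rfl⟩
  refine mem_of_letters (K := (letterSubgroup _).comap upper) fun ⟨⟨y, i⟩, h₁, h₂⟩ _ => ?_
  refine Subgroup.subset_closure ⟨_, fun h => ?_, FreeGroup.map.of.symm⟩
  obtain ⟨hy, h⟩ := Prod.mk.inj h
  have : a ≤ i := (h₁ hy).1
  dsimp only at h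
  lia

/-- The embedding of the free group on a window in the shift product. -/
def windowHom : FreeGroup (window z a c) →* ShiftProduct Y := inl.comp (inclusion _)

theorem stableLetter_conj_lower (w : FreeGroup (overlap z a c)) :
    stableLetter * windowHom (lower w) * stableLetter⁻¹ = windowHom (upper w) := by
  have shift_lower : ((shift Y (Multiplicative.ofAdd 1)).toMonoidHom.comp (inclusion _)).comp
      (lower (z := z) (a := a) (c := c)) = (inclusion _).comp upper := by
    refine FreeGroup.ext_hom _ _ fun p => ?_
    simp [lower, upper, shift_of]
  have := stableLetter_zpow_conj 1 (inclusion _ (lower w))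
  rw [zpow_one] at this
  exact this.trans (congrArg inl (DFunLike.congr_fun shift_lower w))

-- The elements `d⁻ⁱ f(y, i) dⁱ` do not depend on `i`.
theorem exists_hom_of_window (hac : a ≤ c) {Q : Type*} [Group Q] (f : FreeGroup (window z a c) →* Q)
    (d : Q) (hd : ∀ p, f (upper (of p)) * d = d * f (lower (of p))) :
    ∃ F : ShiftProduct Y →* Q, F stableLetter = d ∧ F.comp windowHom = f := by
  have mem_window (y : Y) : (y, a) ∈ window z a c := fun _ => ⟨le_rfl, hac⟩
  have conj_succ (y : Y) (i : ℤ) (h : (y, i) ∈ window z a c) (h' : (y, i + 1) ∈ window z a c) :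
      f (of ⟨_, h'⟩) = d * f (of ⟨_, h⟩) * d⁻¹ := by
    have := hd ⟨(y, i), h, h'⟩
    rw [lower, upper, FreeGroup.map.of, FreeGroup.map.of] at this
    rw [← this, mul_inv_cancel_right]
  have conj_zpow (y : Y) (i : ℤ) : ∀ h : (y, i) ∈ window z a c,
      f (of ⟨_, h⟩) = d ^ (i - a) * f (of ⟨_, mem_window y⟩) * (d ^ (i - a))⁻¹ := by
    induction i using Int.inductionOn' (b := a) with
    | zero => simp
    | succ i hi ih =>
      intro h
      have h' : (y, i) ∈ window z a c := fun hy => ⟨hi, (lt_add_one i).le.trans (h hy).2⟩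
      rw [conj_succ y i h' h, ih h', add_sub_right_comm, add_comm, zpow_add]
      group
    | pred i hi ih =>
      intro h
      have hy : y ≠ z := fun hy => absurd (h hy).1 (by dsimp only; lia)
      have h' : (y, i) ∈ window z a c := fun hy' => absurd hy' hy
      have := conj_succ y (i - 1) h (by simpa only [sub_add_cancel] using h')
      simp only [sub_add_cancel] at this
      rw [ih h', eq_mul_inv_iff_mul_eq, ← inv_mul_eq_iff_eq_mul] at this
      rw [← this, show i - 1 - a = -1 + (i - a) by ring, zpow_add]
      group
  let F := ShiftProduct.lift (fun y => d ^ (-a) * f (of ⟨_, mem_window y⟩) * (d ^ (-a))⁻¹) d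
  refine ⟨F, ShiftProduct.lift_stableLetter _ _, FreeGroup.ext_hom _ _ fun ⟨⟨y, i⟩, h⟩ => ?_⟩
  rw [conj_zpow y i h, MonoidHom.comp_apply, windowHom, MonoidHom.comp_apply, FreeGroup.map.of]
  refine (ShiftProduct.lift_inl_of _ _ _).trans ?_
  rw [sub_eq_add_neg, zpow_add]
  group

/-- The homomorphism from the one-relator group on a window to the one-relator group on all
letters. -/
def vertexHom (q : FreeGroup (window z a c)) :
    FreeGroup (window z a c) ⧸ ⟪q⟫ →* ShiftProduct Y ⧸ ⟪windowHom q⟫ :=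
  QuotientGroup.map _ _ windowHom
    (normalClosure_singleton_le (N := ⟪windowHom q⟫.comap windowHom) (mem_normalClosure_self _))

theorem exists_hom_of_vertex (hac : a ≤ c) (q : FreeGroup (window z a c)) {Q : Type*} [Group Q]
    (f : FreeGroup (window z a c) ⧸ ⟪q⟫ →* Q) (d : Q)
    (hd : ∀ p, f (upper (of p) : FreeGroup (window z a c)) * d =
      d * f (lower (of p) : FreeGroup (window z a c))) :
    ∃ F : ShiftProduct Y ⧸ ⟪windowHom q⟫ →* Q, F (stableLetter : ShiftProduct Y) = d ∧
      ∀ x, F (vertexHom q x) = f x := by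
  obtain ⟨F, hFd, hF⟩ := exists_hom_of_window hac (f.comp (QuotientGroup.mk' _)) d hd
  have hFq : F (windowHom q) = 1 := by
    rw [← MonoidHom.comp_apply, hF, MonoidHom.comp_apply, QuotientGroup.mk'_apply,
      (QuotientGroup.eq_one_iff q).2 (mem_normalClosure_self q), map_one]
  exact ⟨QuotientGroup.lift _ F (normalClosure_singleton_le_ker hFq), hFd,
    fun x => QuotientGroup.induction_on x fun w => DFunLike.congr_fun hF w⟩

theorem vertexHom_injective (hac : a ≤ c) {q : FreeGroup (window z a c)}
    (hlower : Disjoint lower.range ⟪q⟫) (hupper : Disjoint upper.range ⟪q⟫) :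
    Function.Injective (vertexHom q) := by
  let e₁ := MonoidHom.ofInjective (mk_comp_injective lower_injective hlower)
  let e₂ := MonoidHom.ofInjective (mk_comp_injective upper_injective hupper)
  let φ := e₁.symm.trans e₂
  obtain ⟨F, -, hF⟩ := exists_hom_of_vertex hac q (HNNExtension.of (φ := φ)) HNNExtension.t
    fun p => by
      have := HNNExtension.t_mul_of (φ := φ) (e₁ (of p))
      rw [MulEquiv.trans_apply, MulEquiv.symm_apply_apply] at this
      exact this.symm
  refine .of_comp (f := F) ?_
  convert HNNExtension.of_injective (φ := φ) using 1
  exact funext hF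

theorem stableLetter_inv_conj_upper (q : FreeGroup (window z a c)) (w : FreeGroup (overlap z a c)) :
    ((stableLetter : ShiftProduct Y) : ShiftProduct Y ⧸ ⟪windowHom q⟫)⁻¹ *
      vertexHom q (upper w : FreeGroup (window z a c)) * (stableLetter : ShiftProduct Y) =
        vertexHom q (lower w : FreeGroup (window z a c)) := by
  refine congrArg (QuotientGroup.mk' ⟪windowHom q⟫)
    (?_ : stableLetter⁻¹ * windowHom (upper w) * stableLetter = windowHom (lower w))
  rw [← stableLetter_conj_lower]
  group

/-- The splitting of the one-relator group on all letters over a window. -/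
def windowDecomposition (hac : a ≤ c) (q : FreeGroup (window z a c)) :
    HNNDecomposition (ShiftProduct Y ⧸ ⟪windowHom q⟫) PUnit where
  base := (vertexHom q).range
  assoc _ := ((vertexHom q).comp ((QuotientGroup.mk' _).comp upper)).range
  stable _ := (stableLetter : ShiftProduct Y)
  assoc_le_base _ := by
    rintro _ ⟨w, rfl⟩
    exact ⟨(upper w : FreeGroup (window z a c)), rfl⟩
  conj_mem_base _ := by
    rintro _ ⟨w, rfl⟩
    exact ⟨(lower w : FreeGroup (window z a c)), (stableLetter_inv_conj_upper q w).symm⟩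
  closure_eq_top := by
    refine (Subgroup.eq_top_iff' _).2 fun x => QuotientGroup.induction_on x <|
      ShiftProduct.mem_of_generators (a := a)
        (L := (Subgroup.closure _).comap (QuotientGroup.mk' _))
        (fun y => Subgroup.subset_closure (.inl ?_)) (Subgroup.subset_closure (.inr ⟨⟨⟩, rfl⟩))
    exact ⟨(of ⟨(y, a), fun _ => ⟨le_rfl, hac⟩⟩ : FreeGroup (window z a c)), rfl⟩
  exists_hom Q _ f d hd := by
    obtain ⟨F, hFd, hF⟩ := exists_hom_of_vertex hac q (f.comp (vertexHom q).rangeRestrict) (d ⟨⟩)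
      fun p => (hd ⟨⟩ _ ⟨of p, rfl⟩).trans <| congrArg (fun v => d ⟨⟩ * f v) <|
        Subtype.ext (stableLetter_inv_conj_upper q (of p))
    refine ⟨F, ?_, fun _ => hFd⟩
    rintro ⟨_, x, rfl⟩
    exact hF x

theorem isTame_windowHom (hac : a ≤ c) {q : FreeGroup (window z a c)}
    (hlower : Disjoint lower.range ⟪q⟫) (hupper : Disjoint upper.range ⟪q⟫) (hq : IsTame q) :
    IsTame (windowHom q) where
  torsionFree := by
    have inj := MonoidHom.ofInjective (vertexHom_injective hac hlower hupper)
    exact (windowDecomposition hac q).torsionFree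
      (hq.torsionFree.of_injective inj.symm.toMonoidHom inj.symm.injective)
  hereditarilyCyclic n := by
    rw [← map_pow]
    have pow_le := normalClosure_pow_le q n
    have inj := vertexHom_injective hac (hlower.mono_right pow_le) (hupper.mono_right pow_le)
    have : (⟪windowHom q⟫.map (QuotientGroup.mk' ⟪windowHom (q ^ n)⟫)).Normal :=
      Subgroup.normalClosure_normal.map _ (QuotientGroup.mk'_surjective _)
    have mem_of_vertexHom_mem {w : FreeGroup (window z a c)}
        (hw : vertexHom (q ^ n) w ∈ ⟪windowHom q⟫.map (QuotientGroup.mk' _)) : w ∈ ⟪q⟫ := by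
      have ker_le : (QuotientGroup.mk' ⟪windowHom (q ^ n)⟫).ker ≤ ⟪windowHom q⟫ := by
        rw [QuotientGroup.ker_mk', map_pow]
        exact normalClosure_pow_le _ n
      have hw' : windowHom w ∈ (⟪windowHom q⟫.map (QuotientGroup.mk' _)).comap
        (QuotientGroup.mk' ⟪windowHom (q ^ n)⟫) := hw
      rw [Subgroup.comap_map_eq_self ker_le] at hw'
      rw [← QuotientGroup.eq_one_iff]
      refine vertexHom_injective hac hlower hupper ?_
      rw [map_one]
      exact (QuotientGroup.eq_one_iff _).2 hw'
    refine (windowDecomposition hac (q ^ n)).hereditarilyCyclic (fun _ => ?_)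
      (((hq.hereditarilyCyclic n).map inj).mono ?_)
    · refine Subgroup.disjoint_def.2 ?_
      rintro _ hu ⟨w, rfl⟩
      have := Subgroup.disjoint_def.1 hupper ⟨w, rfl⟩ (mem_of_vertexHom_mem hu)
      simp only [MonoidHom.comp_apply, this, map_one]
    · rintro _ ⟨hu, x, rfl⟩
      induction x using QuotientGroup.induction_on with | _ w
      exact ⟨w, ⟨w, mem_of_vertexHom_mem hu, rfl⟩, rfl⟩

/-- `q` has no shorter conjugate, and its letters `(z, i)` fill the window. -/
structure IsTight (q : FreeGroup (window z a c)) : Prop where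
  isMinimalConj : IsMinimalConj (inclusion _ q)
  lower_mem : (z, a) ∈ letters (inclusion _ q)
  upper_mem : (z, c) ∈ letters (inclusion _ q)

namespace IsTight

variable {q : FreeGroup (window z a c)}

theorem le (hq : IsTight q) : a ≤ c :=
  (letters_subset_of_mem (inclusion_mem _ q) hq.upper_mem rfl).1

theorem disjoint_letterSubgroup (hq : IsTight q) (hF : Freiheitssatz q) {p : Y × ℤ}
    (hp : p ∈ letters (inclusion _ q)) {S : Set (window z a c)} (hS : ∀ x ∈ S, x.1 ≠ p) :
    Disjoint (letterSubgroup S) ⟪q⟫ := by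
  refine hF S fun g hg => hq.isMinimalConj.conj_notMem hp (S := {p}ᶜ)
    (Set.notMem_compl_iff.2 rfl) (inclusion _ g) ?_
  rw [← map_inv, ← map_mul, ← map_mul]
  refine map_mem_of_mem_letterSubgroup (fun x hx => ?_) hg
  rw [FreeGroup.map.of]
  exact Subgroup.subset_closure ⟨_, hS x hx, rfl⟩

theorem disjoint_range_lower (hq : IsTight q) (hF : Freiheitssatz q) :
    Disjoint lower.range ⟪q⟫ :=
  (hq.disjoint_letterSubgroup hF hq.upper_mem fun _ hx => hx).mono_left range_lower_le

theorem disjoint_range_upper (hq : IsTight q) (hF : Freiheitssatz q) :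
    Disjoint upper.range ⟪q⟫ :=
  (hq.disjoint_letterSubgroup hF hq.lower_mem fun _ hx => hx).mono_left range_upper_le

theorem disjoint_map_inl (hq : IsTight q) (hF : Freiheitssatz q) {p : Y × ℤ}
    (hp : p ∈ letters (inclusion _ q)) {S : Set (Y × ℤ)} (hpS : p ∉ S) (hS : S ⊆ window z a c) :
    Disjoint ((letterSubgroup S).map inl) ⟪windowHom q⟫ := by
  refine Subgroup.disjoint_def.2 ?_
  rintro _ ⟨l, hl, rfl⟩ hlq
  have inclusion_l : inclusion _ (retract (window z a c) l) = l :=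
    inclusion_retract (Subgroup.closure_mono (Set.image_mono hS) hl)
  have retract_mem : retract _ l ∈ letterSubgroup {x : window z a c | x.1 ∈ S} := by
    refine map_mem_of_mem_letterSubgroup (fun x hx => ?_) hl
    rw [retract_of_mem (hS hx)]
    exact Subgroup.subset_closure ⟨_, hx, rfl⟩
  have retract_mem_normalClosure : retract _ l ∈ ⟪q⟫ := by
    rw [← QuotientGroup.eq_one_iff]
    refine vertexHom_injective hq.le (hq.disjoint_range_lower hF) (hq.disjoint_range_upper hF) ?_
    rw [map_one]
    refine (QuotientGroup.eq_one_iff (windowHom (retract _ l))).2 ?_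
    rwa [← inclusion_l] at hlq
  rw [← inclusion_l, Subgroup.disjoint_def.1 (hq.disjoint_letterSubgroup hF hp
    fun x hx h => hpS (h ▸ hx)) retract_mem retract_mem_normalClosure, map_one, map_one]

theorem isTame (hq : IsTight q) (hF : Freiheitssatz q) (hT : IsTame q) : IsTame (windowHom q) :=
  isTame_windowHom hq.le (hq.disjoint_range_lower hF) (hq.disjoint_range_upper hF) hT

end IsTight

theorem exists_isTight {r : FreeGroup (Y × ℤ)} (hz : ∀ g, g * inl r * g⁻¹ ∉ avoiding z) :
    ∃ (a c : ℤ) (q : FreeGroup (window z a c)) (g : ShiftProduct Y), IsTight q ∧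
      wordLength q ≤ wordLength r ∧ windowHom q = g * inl r * g⁻¹ := by
  obtain ⟨g, hmin, hlen⟩ := exists_isMinimalConj r
  let I : Set ℤ := {i | (z, i) ∈ letters (g * r * g⁻¹)}
  have finite_I : I.Finite := (finite_letters _).preimage
    (Prod.mk_right_injective z).injOn
  have nonempty_I : I.Nonempty := by
    by_contra hI
    refine hz (inl g) ?_
    rw [← map_inv, ← map_mul, ← map_mul]
    refine mem_letterSubgroup (S := {p : Y × ℤ | p.1 ≠ z}) fun p hp hpz => hI ⟨p.2, ?_⟩
    rwa [← Prod.mk.eta (p := p), hpz] at hp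
  obtain ⟨a, ha, ha_le⟩ := Set.exists_min_image I id finite_I nonempty_I
  obtain ⟨c, hc, hle_c⟩ := Set.exists_max_image I id finite_I nonempty_I
  have letters_subset : letters (g * r * g⁻¹) ⊆ window z a c := by
    rintro ⟨y, i⟩ hp rfl
    exact ⟨ha_le i hp, hle_c i hp⟩
  have inclusion_q := inclusion_retract (mem_letterSubgroup letters_subset)
  refine ⟨a, c, retract _ (g * r * g⁻¹), inl g, ⟨?_, ?_, ?_⟩,
    (wordLength_map_le (wordLength_retract_of_le _) _).trans hlen, ?_⟩
  · rwa [inclusion_q]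
  · rwa [inclusion_q]
  · rwa [inclusion_q]
  · rw [windowHom, MonoidHom.comp_apply, inclusion_q, map_mul, map_mul, map_inv]

/-- The conclusions of the induction on the length of the relator. -/
structure IsMagnus {X : Type u} (r : FreeGroup X) : Prop where
  freiheitssatz : Freiheitssatz r
  isTame : NotProperPower r → IsTame r

section Step

variable {r : FreeGroup (Y × ℤ)}

theorem disjoint_avoiding
    (ih : ∀ (X : Type u) (q : FreeGroup X), wordLength q ≤ wordLength r → IsMagnus q)
    (hz : ∀ g, g * inl r * g⁻¹ ∉ avoiding z) : Disjoint (avoiding z) ⟪inl r⟫ := by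
  obtain ⟨a, c, q, g, hq, hlen, hqr⟩ := exists_isTight hz
  refine Subgroup.disjoint_def.2 fun {x} hx hxr => ?_
  have hx' := eq_inl_left_of_mem_normalClosure hxr
  rw [← normalClosure_conj _ g, ← hqr] at hxr
  refine Subgroup.disjoint_def.1 (hq.disjoint_map_inl (ih _ q hlen).freiheitssatz hq.lower_mem
    (S := {p | p.1 ≠ z}) (fun h => h rfl) fun p hp h => absurd h hp) ?_ hxr
  exact ⟨x.left, hx, hx'.symm⟩

theorem disjoint_level
    (ih : ∀ (X : Type u) (q : FreeGroup X), wordLength q ≤ wordLength r → IsMagnus q)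
    (hz : ∀ g, g * inl r * g⁻¹ ∉ avoiding z) (hr : ∀ g, g * inl r * g⁻¹ ∉ level 0) :
    Disjoint (level 0) ⟪inl r⟫ := by
  obtain ⟨a, c, q, g, hq, hlen, hqr⟩ := exists_isTight hz
  obtain ⟨p, hp, hpa⟩ : ∃ p ∈ letters (inclusion _ q), p.2 ≠ a := by
    by_contra! h
    refine hr (stableLetter ^ (0 - a) * g) ?_
    have mem_level : windowHom q ∈ level a := ⟨_, mem_letterSubgroup h, rfl⟩
    rw [hqr] at mem_level
    simpa only [mul_inv_rev, mul_assoc] using stableLetter_zpow_conj_mem_level mem_level 0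
  have disjoint_level_a : Disjoint (level a) ⟪inl r⟫ := by
    rw [← normalClosure_conj _ g, ← hqr]
    refine hq.disjoint_map_inl (ih _ q hlen).freiheitssatz hp hpa fun p hp _ => ?_
    exact ⟨ge_of_eq hp, (le_of_eq hp).trans hq.le⟩
  refine Subgroup.disjoint_def.2 fun {x} hx hxr => conj_eq_one_iff.1 <|
    Subgroup.disjoint_def.1 disjoint_level_a (stableLetter_zpow_conj_mem_level hx a)
      (Subgroup.normalClosure_normal.conj_mem _ hxr _)

theorem isTame_inl
    (ih : ∀ (X : Type u) (q : FreeGroup X), wordLength q ≤ wordLength r → IsMagnus q)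
    (hz : ∀ g, g * inl r * g⁻¹ ∉ avoiding z) (hr : NotProperPower (inl r)) : IsTame (inl r) := by
  obtain ⟨a, c, q, g, hq, hlen, hqr⟩ := exists_isTight hz
  have hq' : IsMagnus q := ih _ q hlen
  refine .conj (g := g) ?_
  rw [← hqr]
  refine hq.isTame hq'.freiheitssatz (hq'.isTame (.of_map (f := windowHom) ?_))
  rw [hqr]
  exact hr.conj _

end Step

end Window

theorem avoiding_le {Y : Type*} {z : Y} {L : Subgroup (ShiftProduct Y)}
    (hstable : stableLetter ∈ L) (hof : ∀ y ≠ z, inl (of (y, 0)) ∈ L) : avoiding z ≤ L := by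
  intro x hx
  have inl_mem : inl x.left ∈ L := map_mem_of_mem_letterSubgroup (fun p hp => by
    rw [← Prod.mk.eta (p := p), inl_of p.1 0]
    exact mul_mem (mul_mem (zpow_mem hstable _) (hof _ hp)) (inv_mem (zpow_mem hstable _))) hx
  have inr_mem := L.zpow_mem hstable x.right.toAdd
  rw [stableLetter_zpow, ofAdd_toAdd] at inr_mem
  rw [← SemidirectProduct.inl_left_mul_inr_right x]
  exact mul_mem inl_mem inr_mem

theorem isLengthFunction_left {Y : Type*} :
    IsLengthFunction fun x : ShiftProduct Y => wordLength x.left := by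
  have shift_le (n) (w : FreeGroup (Y × ℤ)) : wordLength (shift Y n w) ≤ wordLength w :=
    wordLength_map_le (f := (shift Y n).toMonoidHom) (fun p => by
      rw [MulEquiv.coe_toMonoidHom, shift_of, wordLength_of]) w
  refine ⟨wordLength_one, fun x y => ?_, fun x => ?_⟩
  · exact (isLengthFunction_wordLength.map_mul_le _ _).trans (add_le_add_right (shift_le _ _) _)
  · exact (shift_le _ _).trans (isLengthFunction_wordLength.map_inv_le _)

/-! ### Adjoining roots -/

section Root

variable {X : Type*} {t : X} {q : ℕ} {r : FreeGroup X}

open Classical in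
/-- The endomorphism which replaces the letter `t` by its `q`-th power. It identifies the free
group with a subgroup of a free group in which `t` has a `q`-th root. -/
noncomputable def root (t : X) (q : ℕ) : FreeGroup X →* FreeGroup X :=
  FreeGroup.lift (Function.update of t (of t ^ q))

theorem root_of_self : root t q (of t) = of t ^ q := by
  classical
  rw [root, FreeGroup.lift_apply_of, Function.update_self]

theorem root_of_ne {x : X} (h : x ≠ t) : root t q (of x) = of x := by
  classical
  rw [root, FreeGroup.lift_apply_of, Function.update_of_ne h]

-- The quotient by `root t q r` is the amalgam of the quotient by `r` and an infinite cyclic group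
-- generated by the root, so the former maps onto an amalgam which contains the quotient by `r`.
theorem comap_normalClosure_root (hq : 0 < q) (ht : ∀ k : ℤ, of t ^ k ∈ ⟪r⟫ → k = 0) :
    ⟪root t q r⟫.comap (root t q) = ⟪r⟫ := by
  classical
  let Γ := FreeGroup X ⧸ ⟪r⟫
  let τ : Γ := (of t : FreeGroup X)
  have τ_zpow {k : ℤ} (hk : τ ^ k = 1) : k = 0 := ht k ((QuotientGroup.eq_one_iff _).1 hk)
  let exponent : Bool → ℤ := fun b => if b then q else 1
  let φ (b : Bool) : Multiplicative ℤ →* Γ := zpowersHom Γ (τ ^ exponent b)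
  have φ_injective (b : Bool) : Function.Injective (φ b) := by
    refine (injective_iff_map_eq_one _).2 fun k hk => ?_
    have : exponent b * k.toAdd = 0 := τ_zpow ((zpow_mul τ _ _).trans hk)
    have exponent_ne_zero : exponent b ≠ 0 := by
      cases b
      exacts [one_ne_zero, Nat.cast_ne_zero.2 hq.ne']
    exact (mul_eq_zero.1 this).resolve_left exponent_ne_zero
  let ι := Monoid.PushoutI.of (φ := φ)
  have ι_root : ι true (τ ^ q) = ι false τ := by
    have := (Monoid.PushoutI.of_apply_eq_base φ true (.ofAdd 1)).trans
      (Monoid.PushoutI.of_apply_eq_base φ false (.ofAdd 1)).symm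
    simpa [φ, exponent] using this
  let ψ : FreeGroup X →* Monoid.PushoutI φ :=
    FreeGroup.lift fun x => if x = t then ι true τ else ι false (of x : FreeGroup X)
  have ψ_root : ψ.comp (root t q) = (ι false).comp (QuotientGroup.mk' ⟪r⟫) := by
    refine FreeGroup.ext_hom _ _ fun x => ?_
    rw [MonoidHom.comp_apply, MonoidHom.comp_apply]
    by_cases hx : x = t
    · subst hx
      rw [root_of_self, map_pow, FreeGroup.lift_apply_of, if_pos rfl, ← map_pow, ι_root]
      rfl
    · rw [root_of_ne hx, FreeGroup.lift_apply_of, if_neg hx]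
      rfl
  refine le_antisymm (fun x hx => ?_)
    (normalClosure_singleton_le (mem_normalClosure_self (root t q r)))
  have ψ_root_apply (w) : ψ (root t q w) = ι false (w : FreeGroup X) :=
    DFunLike.congr_fun ψ_root w
  have ψ_root_r : ψ (root t q r) = 1 := by
    rw [ψ_root_apply, (QuotientGroup.eq_one_iff r).2 (mem_normalClosure_self r), map_one]
  have ψ_root_x : ψ (root t q x) = 1 := normalClosure_singleton_le_ker ψ_root_r hx
  rw [← QuotientGroup.eq_one_iff]
  exact Monoid.PushoutI.of_injective φ_injective false
    ((ψ_root_apply x).symm.trans (ψ_root_x.trans (map_one _).symm))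

theorem root_injective (hq : 0 < q) : Function.Injective (root t q) := by
  have normalClosure_one : ⟪(1 : FreeGroup X)⟫ = ⊥ :=
    le_bot_iff.1 (normalClosure_singleton_le (Subgroup.mem_bot.2 rfl))
  have := comap_normalClosure_root (r := 1) hq (t := t) fun k hk => by
    rw [normalClosure_one, Subgroup.mem_bot] at hk
    exact (IsMulTorsionFree.zpow_eq_one_iff_right (FreeGroup.of_ne_one t)).1 hk
  rwa [map_one, normalClosure_one, MonoidHom.comap_bot,
    (root t q).ker_eq_bot_iff] at this

open Classical in
/-- An action of the free group in which the `q`-th power of the letter `t` and the other letters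
act on the first of `q` copies of the free group by left multiplication. It is used to recover
`u` from `root t q u`. -/
noncomputable def rootAction (t : X) (q : ℕ) :
    FreeGroup X →* Equiv.Perm (ZMod q × FreeGroup X) :=
  FreeGroup.lift fun x => Equiv.prodShear (if x = t then Equiv.addRight 1 else Equiv.refl _)
    fun i => if i = 0 then Equiv.mulLeft (of x) else Equiv.refl _

theorem rootAction_of_self (i : ZMod q) (w : FreeGroup X) :
    rootAction t q (of t) (i, w) = (i + 1, if i = 0 then of t * w else w) := by
  rw [rootAction, FreeGroup.lift_apply_of, if_pos rfl]
  split_ifs with h <;> simp [Equiv.prodShear, h]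

theorem rootAction_of_ne {x : X} (hx : x ≠ t) (i : ZMod q) (w : FreeGroup X) :
    rootAction t q (of x) (i, w) = (i, if i = 0 then of x * w else w) := by
  rw [rootAction, FreeGroup.lift_apply_of, if_neg hx]
  split_ifs with h <;> simp [Equiv.prodShear, h]

theorem rootAction_mul_right (s : FreeGroup X) (i : ZMod q) (w v : FreeGroup X) :
    rootAction t q s (i, w * v) =
      ((rootAction t q s (i, w)).1, (rootAction t q s (i, w)).2 * v) := by
  let ρ : Equiv.Perm (ZMod q × FreeGroup X) := (Equiv.refl _).prodCongr (Equiv.mulRight v)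
  have commutes : s ∈ (Subgroup.centralizer {ρ}).comap (rootAction t q) := by
    refine mem_of_letters fun x _ => Subgroup.mem_centralizer_singleton_iff.2 ?_
    refine Equiv.ext fun ⟨i, w⟩ => ?_
    by_cases hx : x = t
    · subst hx
      simp [ρ, rootAction_of_self, apply_ite (· * v), mul_assoc]
    · simp [ρ, rootAction_of_ne hx, apply_ite (· * v), mul_assoc]
  exact Equiv.congr_fun (Subgroup.mem_centralizer_singleton_iff.1 commutes) (i, w)

theorem rootAction_of_self_pow {j : ℕ} (hj : j < q) (w : FreeGroup X) :
    (rootAction t q (of t) ^ (j + 1)) (0, w) = (((j + 1 : ℕ) : ZMod q), of t * w) := by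
  induction j with
  | zero => simp [rootAction_of_self]
  | succ j ih =>
    have : ((j + 1 : ℕ) : ZMod q) ≠ 0 := by
      rw [Ne, ZMod.natCast_eq_zero_iff]
      exact Nat.not_dvd_of_pos_of_lt j.succ_pos hj
    rw [pow_succ', Equiv.Perm.mul_apply, ih (by lia), rootAction_of_self, if_neg this,
      Nat.cast_succ (j + 1)]

theorem rootAction_of_self_pow_self (hq : 0 < q) (i : ZMod q) (w : FreeGroup X) :
    (rootAction t q (of t) ^ q) (i, w) = (i, of t * w) := by
  have := NeZero.of_pos hq
  have pow_zero_copy (w) : (rootAction t q (of t) ^ q) (0, w) = (0, of t * w) := by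
    have := rootAction_of_self_pow (t := t) (Nat.sub_lt hq one_pos) w
    rwa [Nat.sub_one_add_one hq.ne', ZMod.natCast_self] at this
  by_cases hi : i = 0
  · rw [hi, pow_zero_copy]
  · obtain ⟨j, hj⟩ : ∃ j, i.val = j + 1 := Nat.exists_eq_succ_of_ne_zero ((ZMod.val_ne_zero i).2 hi)
    have orbit (w) : (rootAction t q (of t) ^ (j + 1)) (0, w) = (i, of t * w) := by
      rw [rootAction_of_self_pow (by have := i.val_lt; lia), ← hj, ZMod.natCast_zmod_val]
    rw [← mul_inv_cancel_left (of t) w, ← orbit, ← Equiv.Perm.mul_apply, pow_mul_comm,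
      Equiv.Perm.mul_apply, pow_zero_copy, orbit]

open Classical in
/-- The retraction of the free group to the powers of the letter `t`. -/
noncomputable def powerRetract (t : X) : FreeGroup X →* FreeGroup X :=
  FreeGroup.lift (Function.update 1 t (of t))

theorem powerRetract_mem (u : FreeGroup X) : powerRetract t u ∈ Subgroup.zpowers (of t) := by
  classical
  refine mem_of_letters (K := (Subgroup.zpowers (of t)).comap (powerRetract t)) fun x _ => ?_
  rw [Subgroup.mem_comap, powerRetract, FreeGroup.lift_apply_of, Function.update_apply]
  split_ifs
  exacts [Subgroup.mem_zpowers _, one_mem _]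

theorem rootAction_root (hq : 0 < q) (u : FreeGroup X) (i : ZMod q) (w : FreeGroup X) :
    rootAction t q (root t q u) (i, w) =
      (i, (if i = 0 then u else powerRetract t u) * w) := by
  classical
  let left (u : FreeGroup X) : Equiv.Perm (ZMod q × FreeGroup X) :=
    Equiv.prodShear (Equiv.refl _) fun i => Equiv.mulLeft (if i = 0 then u else powerRetract t u)
  let leftHom : FreeGroup X →* Equiv.Perm (ZMod q × FreeGroup X) :=
    MonoidHom.mk' left fun u v => Equiv.ext fun ⟨i, w⟩ => by
      by_cases hi : i = 0 <;> simp [left, Equiv.prodShear, hi, mul_assoc]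
  have : (rootAction t q).comp (root t q) = leftHom := by
    refine FreeGroup.ext_hom _ _ fun x => Equiv.ext fun ⟨i, w⟩ => ?_
    by_cases hx : x = t
    · subst hx
      simp [root_of_self, rootAction_of_self_pow_self hq, leftHom, left, Equiv.prodShear,
        powerRetract]
    · by_cases hi : i = 0 <;>
        simp [root_of_ne hx, rootAction_of_ne hx, leftHom, left, Equiv.prodShear, powerRetract,
          hx, hi]
  exact Equiv.congr_fun (DFunLike.congr_fun this u) (i, w)

theorem NotProperPower.map_root (hq : 0 < q) {u : FreeGroup X} (hu : NotProperPower u)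
    (ht : ∀ g, g * u * g⁻¹ ∉ Subgroup.zpowers (of t)) : NotProperPower (root t q u) := by
  intro s k hk hs
  obtain ⟨⟨m, v⟩, hv⟩ : ∃ p, rootAction t q s ((0 : ZMod q), 1) = p := ⟨_, rfl⟩
  have act (w) : rootAction t q s (0, w) = (m, v * w) := by
    have := rootAction_mul_right (t := t) (q := q) s 0 1 w
    rwa [one_mul, hv] at this
  by_cases hm : m = 0
  · refine hu v k hk ?_
    have act_pow (j : ℕ) : rootAction t q (s ^ j) (0, 1) = (0, v ^ j) := by
      induction j with
      | zero => simp
      | succ j ih => rw [pow_succ', map_mul, Equiv.Perm.mul_apply, ih, act, hm, pow_succ']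
    have := rootAction_root (t := t) hq u 0 1
    rw [hs, act_pow, if_pos rfl, mul_one] at this
    exact (congrArg Prod.snd this).symm
  · refine absurd (powerRetract_mem (t := t) u) ?_
    have commute : rootAction t q s (rootAction t q (root t q u) (0, 1)) =
        rootAction t q (root t q u) (rootAction t q s (0, 1)) := by
      rw [← Equiv.Perm.mul_apply, ← Equiv.Perm.mul_apply, ← map_mul, ← map_mul, hs,
        pow_mul_comm']
    rw [hv, rootAction_root hq, rootAction_root hq, if_pos rfl, if_neg hm, mul_one, act] at commute
    have : powerRetract t u = v * u * v⁻¹ :=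
      eq_mul_inv_of_mul_eq (congrArg Prod.snd commute).symm
    rw [this]
    exact ht v

end Root

/-! ### Magnus induction -/

section Induction

variable {X : Type u} {t : X}

open Classical in
/-- The exponent sum of the letter `x`. -/
noncomputable def exponentSum (x : X) : FreeGroup X →* Multiplicative ℤ :=
  FreeGroup.lift (Pi.mulSingle x (Multiplicative.ofAdd 1))

theorem ShiftProduct.hom_ext {Y Q : Type*} [Group Q] {f g : ShiftProduct Y →* Q}
    (hof : ∀ y, f (inl (of (y, 0))) = g (inl (of (y, 0))))
    (hstable : f stableLetter = g stableLetter) : f = g :=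
  DFunLike.ext f g (ShiftProduct.mem_of_generators (L := f.eqLocus g) hof hstable)

open Classical in
/-- The homomorphism to the shift product which maps the letter `t` to the stable letter and twists
the other letters by powers of the stable letter. -/
noncomputable def toShiftProduct (t : X) (p : {x // x ≠ t} → ℤ) :
    FreeGroup X →* ShiftProduct {x // x ≠ t} :=
  FreeGroup.lift fun x =>
    if h : x = t then stableLetter else inl (of (⟨x, h⟩, 0)) * stableLetter ^ (-p ⟨x, h⟩)

theorem toShiftProduct_of_self (p : {x // x ≠ t} → ℤ) :
    toShiftProduct t p (of t) = stableLetter := by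
  rw [toShiftProduct, FreeGroup.lift_apply_of, dif_pos rfl]

theorem toShiftProduct_of (p : {x // x ≠ t} → ℤ) (y : {x // x ≠ t}) :
    toShiftProduct t p (of y.1) = inl (of (y, 0)) * stableLetter ^ (-p y) := by
  rw [toShiftProduct, FreeGroup.lift_apply_of, dif_neg y.2]

/-- The isomorphism given by `toShiftProduct`. -/
noncomputable def shiftEquiv (t : X) (p : {x // x ≠ t} → ℤ) :
    FreeGroup X ≃* ShiftProduct {x // x ≠ t} :=
  MonoidHom.toMulEquiv (toShiftProduct t p)
    (ShiftProduct.lift (fun y : {x // x ≠ t} => of y.1 * of t ^ p y) (of t))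
    (FreeGroup.ext_hom _ _ fun x => by
      by_cases hx : x = t
      · simp [hx, toShiftProduct_of_self, ShiftProduct.lift_stableLetter]
      · simp [toShiftProduct_of p ⟨x, hx⟩, ShiftProduct.lift_stableLetter,
          ShiftProduct.lift_inl_of])
    (ShiftProduct.hom_ext
      (fun y => by simp [ShiftProduct.lift_inl_of, toShiftProduct_of, toShiftProduct_of_self])
      (by simp [ShiftProduct.lift_stableLetter, toShiftProduct_of_self]))

/-- Replacing the letter `t` by its `q`-th power, followed by the isomorphism with the shift
product. -/
noncomputable def rootShift (t : X) (q : ℕ) (p : {x // x ≠ t} → ℤ) :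
    FreeGroup X →* ShiftProduct {x // x ≠ t} :=
  (shiftEquiv t p).toMonoidHom.comp (root t q)

variable {q : ℕ} {p : {x // x ≠ t} → ℤ}

theorem rootShift_of_self : rootShift t q p (of t) = stableLetter ^ q := by
  rw [rootShift, MonoidHom.comp_apply, root_of_self, map_pow]
  exact congrArg (· ^ q) (toShiftProduct_of_self p)

theorem rootShift_of (y : {x // x ≠ t}) :
    rootShift t q p (of y.1) = inl (of (y, 0)) * stableLetter ^ (-p y) := by
  rw [rootShift, MonoidHom.comp_apply, root_of_ne y.2]
  exact toShiftProduct_of p y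

theorem rootShift_injective (hq : 0 < q) : Function.Injective (rootShift t q p) :=
  (shiftEquiv t p).injective.comp (root_injective hq)

theorem wordLength_left_rootShift_lt {r : FreeGroup X} (ht : t ∈ letters r) :
    wordLength (rootShift t q p r).left < wordLength r := by
  have left_zpow (k : ℤ) : ((stableLetter : ShiftProduct {x // x ≠ t}) ^ k).left = 1 := by
    rw [stableLetter_zpow, SemidirectProduct.left_inr]
  have left_of_self : (rootShift t q p (of t)).left = 1 := by
    rw [rootShift_of_self, ← zpow_natCast, left_zpow]
  have left_of (y : {x // x ≠ t}) : (rootShift t q p (of y.1)).left = of (y, 0) := by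
    rw [rootShift_of, SemidirectProduct.mul_left, left_zpow, map_one, mul_one,
      SemidirectProduct.left_inl]
  refine isLengthFunction_left.map_lt (fun x => ?_) ht (by rw [left_of_self, wordLength_one])
  by_cases hx : x = t
  · rw [hx, left_of_self, wordLength_one]
    exact zero_le_one
  · rw [left_of ⟨x, hx⟩, wordLength_of]

open Classical in
theorem right_rootShift_single (z : {x // x ≠ t}) (m : ℤ) (r : FreeGroup X) :
    (rootShift t q (Pi.single z m) r).right = exponentSum t r ^ q * exponentSum z.1 r ^ (-m) := by
  have right_zpow (k : ℤ) : ((stableLetter : ShiftProduct {x // x ≠ t}) ^ k).right = .ofAdd k := by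
    rw [stableLetter_zpow, SemidirectProduct.right_inr]
  have : SemidirectProduct.rightHom.comp (rootShift t q (Pi.single z m)) =
      exponentSum t ^ q * exponentSum z.1 ^ (-m) := by
    refine FreeGroup.ext_hom _ _ fun x => ?_
    by_cases hx : x = t
    · subst hx
      simpa [exponentSum, rootShift_of_self, z.2.symm, ← ofAdd_nsmul] using right_zpow q
    · by_cases hxz : x = z
      · subst hxz
        simp [exponentSum, rootShift_of, right_zpow, z.2, ← ofAdd_zsmul, ← ofAdd_neg]
      · have : Subtype.mk x hx ≠ z := fun h => hxz (congrArg Subtype.val h)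
        simp [exponentSum, rootShift_of ⟨x, hx⟩, hx, hxz, this]
  exact DFunLike.congr_fun this r

variable {r : FreeGroup X} {z : {x // x ≠ t}}

theorem letterSubgroup_le_comap_avoiding :
    letterSubgroup {z.1}ᶜ ≤ (avoiding z).comap (rootShift t q p) := by
  have stable_mem : stableLetter ∈ avoiding z :=
    (letterSubgroup {p : {x // x ≠ t} × ℤ | p.1 ≠ z}).one_mem
  intro w hw
  refine Subgroup.mem_comap.2 (map_mem_of_mem_letterSubgroup (fun x hxz => ?_) hw)
  by_cases hx : x = t
  · rw [hx, rootShift_of_self]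
    exact pow_mem stable_mem q
  · rw [rootShift_of ⟨x, hx⟩]
    exact mul_mem (of_mem_letterSubgroup fun h => hxz (congrArg Subtype.val h :))
      (zpow_mem stable_mem _)

theorem comap_normalClosure_rootShift (hq : 0 < q) (ht : ∀ k : ℤ, of t ^ k ∈ ⟪r⟫ → k = 0) :
    ⟪rootShift t q p r⟫.comap (rootShift t q p) = ⟪r⟫ := by
  rw [← comap_normalClosure_root hq ht, ← comap_normalClosure (shiftEquiv t p) (root t q r)]
  rfl

theorem disjoint_letterSubgroup_of_rootShift
    (ih : ∀ (X : Type u) (w : FreeGroup X), wordLength w < wordLength r → IsMagnus w)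
    (ht : t ∈ letters r) (hq : 0 < q) (hright : (rootShift t q p r).right = 1)
    (hz : ∀ g, g * rootShift t q p r * g⁻¹ ∉ avoiding z) :
    Disjoint (letterSubgroup {z.1}ᶜ) ⟪r⟫ := by
  have hlen := wordLength_left_rootShift_lt (q := q) (p := p) ht
  have eq_inl := eq_inl_left hright
  rw [eq_inl] at hz
  have disjoint := disjoint_avoiding (fun X w hw => ih X w (hw.trans_lt hlen)) hz
  rw [← eq_inl] at disjoint
  exact disjoint_normalClosure_of_map (rootShift_injective hq) letterSubgroup_le_comap_avoiding
    disjoint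

theorem isTame_of_rootShift
    (ih : ∀ (X : Type u) (w : FreeGroup X), wordLength w < wordLength r → IsMagnus w)
    (ht : t ∈ letters r) (hq : 0 < q) (hright : (rootShift t q p r).right = 1)
    (hz : ∀ g, g * rootShift t q p r * g⁻¹ ∉ avoiding z)
    (hr : ∀ g, g * r * g⁻¹ ∉ letterSubgroup {z.1}ᶜ) (hr' : NotProperPower r) : IsTame r := by
  have disjoint := disjoint_letterSubgroup_of_rootShift ih ht hq hright hz
  have t_mem : of t ∈ letterSubgroup {z.1}ᶜ := of_mem_letterSubgroup z.2.symm
  have infinite_order (n : ℕ) (k : ℤ) (hk : of t ^ k ∈ ⟪r ^ n⟫) : k = 0 :=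
    (IsMulTorsionFree.zpow_eq_one_iff_right (FreeGroup.of_ne_one t)).1 <|
      Subgroup.disjoint_def.1 disjoint (zpow_mem t_mem k) (normalClosure_pow_le r n hk)
  refine IsTame.of_comap (s := rootShift t q p r) ?_ (rootShift t q p) fun n => by
    rw [← map_pow, comap_normalClosure_rootShift hq (infinite_order n)]
  have notProperPower : NotProperPower (rootShift t q p r) := by
    refine .of_map (f := (shiftEquiv t p).symm.toMonoidHom) ?_
    have := hr'.map_root hq fun g hg => hr g (Subgroup.zpowers_le.2 t_mem hg)
    rwa [← (shiftEquiv t p).symm_apply_apply (root t q r)] at this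
  have hlen := wordLength_left_rootShift_lt (q := q) (p := p) ht
  rw [eq_inl_left hright] at hz notProperPower ⊢
  exact isTame_inl (fun X w hw => ih X w (hw.trans_lt hlen)) hz notProperPower

theorem shiftEquiv_symm_stableLetter : (shiftEquiv t p).symm stableLetter = of t :=
  (MulEquiv.symm_apply_eq _).2 (toShiftProduct_of_self p).symm

theorem shiftEquiv_symm_inl_of (y : {x // x ≠ t}) :
    (shiftEquiv t p).symm (inl (of (y, 0))) = of y.1 * of t ^ p y := by
  have toShiftProduct_mul : toShiftProduct t p (of y.1 * of t ^ p y) = inl (of (y, 0)) := by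
    rw [map_mul, map_zpow, toShiftProduct_of, toShiftProduct_of_self, zpow_neg,
      inv_mul_cancel_right]
  exact (MulEquiv.symm_apply_eq _).2 toShiftProduct_mul.symm

theorem root_one : root t 1 = MonoidHom.id (FreeGroup X) := by
  refine FreeGroup.ext_hom _ _ fun x => ?_
  by_cases hx : x = t
  · rw [hx, root_of_self, pow_one, MonoidHom.id_apply]
  · rw [root_of_ne hx, MonoidHom.id_apply]

theorem conj_rootShift_one_notMem {S : Set X} {L : Subgroup (ShiftProduct {x // x ≠ t})}
    (hL : L ≤ (letterSubgroup S).comap (shiftEquiv t p).symm.toMonoidHom)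
    (hr : ∀ g, g * r * g⁻¹ ∉ letterSubgroup S) (g : ShiftProduct {x // x ≠ t}) :
    g * rootShift t 1 p r * g⁻¹ ∉ L := by
  intro hg
  have : rootShift t 1 p r = shiftEquiv t p r := by
    rw [rootShift, root_one]
    rfl
  have := hL hg
  simp_all [Subgroup.mem_comap]

theorem avoiding_le_comap_shiftEquiv_symm {L : Subgroup (FreeGroup X)} (ht : of t ∈ L)
    (hL : ∀ y : {x // x ≠ t}, y ≠ z → of y.1 ∈ L) :
    avoiding z ≤ L.comap (shiftEquiv t p).symm.toMonoidHom := by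
  refine avoiding_le ?_ fun y hy => ?_
  · rwa [Subgroup.mem_comap, MulEquiv.coe_toMonoidHom, shiftEquiv_symm_stableLetter]
  · rw [Subgroup.mem_comap, MulEquiv.coe_toMonoidHom, shiftEquiv_symm_inl_of]
    exact mul_mem (hL y hy) (zpow_mem ht _)

theorem level_zero_le_comap_shiftEquiv_symm :
    level 0 ≤ (letterSubgroup {t}ᶜ).comap (shiftEquiv t 0).symm.toMonoidHom := by
  rintro _ ⟨w, hw, rfl⟩
  rw [Subgroup.mem_comap, MulEquiv.coe_toMonoidHom]
  refine map_mem_of_mem_letterSubgroup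
    (f := (shiftEquiv t 0).symm.toMonoidHom.comp inl) ?_ hw
  rintro ⟨y, _⟩ rfl
  have : (shiftEquiv t 0).symm (inl (of (y, 0))) = of y.1 := by
    rw [shiftEquiv_symm_inl_of, Pi.zero_apply, zpow_zero, mul_one]
  exact (congrArg (· ∈ _) this).mpr (of_mem_letterSubgroup y.2)

theorem conj_rootShift_one_notMem_avoiding (hr : ∀ g, g * r * g⁻¹ ∉ letterSubgroup {z.1}ᶜ)
    (g : ShiftProduct {x // x ≠ t}) : g * rootShift t 1 p r * g⁻¹ ∉ avoiding z :=
  conj_rootShift_one_notMem (avoiding_le_comap_shiftEquiv_symm (of_mem_letterSubgroup z.2.symm)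
    fun _ hy => of_mem_letterSubgroup (Subtype.coe_ne_coe.2 hy)) hr g

theorem conj_rootShift_notMem_avoiding (hz : exponentSum z.1 r ≠ 1)
    (g : ShiftProduct {x // x ≠ t}) : g * rootShift t q p r * g⁻¹ ∉ avoiding z := by
  classical
  intro hg
  have exponentSum_of {x : X} (hx : x ≠ z) : exponentSum z.1 (of x) = 1 := by
    rw [exponentSum, FreeGroup.lift_apply_of, Pi.mulSingle_eq_of_ne hx]
  have exponentSum_root : (exponentSum z.1).comp (root t q) = exponentSum z.1 := by
    refine FreeGroup.ext_hom _ _ fun x => ?_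
    by_cases hx : x = t
    · rw [MonoidHom.comp_apply, hx, root_of_self, map_pow, exponentSum_of z.2.symm, one_pow]
    · rw [MonoidHom.comp_apply, root_of_ne hx]
  have avoiding_le_ker : avoiding z ≤
      (exponentSum z.1).ker.comap (shiftEquiv t p).symm.toMonoidHom :=
    avoiding_le_comap_shiftEquiv_symm (exponentSum_of z.2.symm)
      fun _ hy => exponentSum_of (Subtype.coe_ne_coe.2 hy)
  have conj_mem : exponentSum z.1 ((shiftEquiv t p).symm (g * rootShift t q p r * g⁻¹)) = 1 :=
    avoiding_le_ker hg
  rw [map_mul, map_mul, map_inv, map_mul, map_mul, map_inv, mul_inv_cancel_comm] at conj_mem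
  refine hz ?_
  rwa [← exponentSum_root, MonoidHom.comp_apply, ← (shiftEquiv t p).symm_apply_apply (root t q r)]

theorem right_rootShift_zero (z : {x // x ≠ t}) (ht : exponentSum t r = 1) :
    (rootShift t q 0 r).right = 1 := by
  classical
  rw [← Pi.single_zero z, right_rootShift_single, ht, neg_zero, zpow_zero, mul_one, one_pow]

-- The exponents of `t` and `z` are chosen so that the exponent sums cancel.
theorem exists_right_rootShift_eq_one (hz : exponentSum z.1 r ≠ 1) :
    ∃ (q : ℕ) (p : {x // x ≠ t} → ℤ), 0 < q ∧ (rootShift t q p r).right = 1 := by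
  classical
  let a := (exponentSum z.1 r).toAdd
  let b := (exponentSum t r).toAdd
  refine ⟨a.natAbs, Pi.single z (a.sign * b), Int.natAbs_pos.2 hz, ?_⟩
  rw [right_rootShift_single]
  have exponents_cancel : (a.natAbs : ℤ) * b + -(a.sign * b) * a = 0 := by
    rw [← Int.sign_mul_self_eq_natAbs]
    ring
  exact exponents_cancel

theorem letterSubgroup_le_comap_level_zero :
    letterSubgroup {t}ᶜ ≤ (level 0).comap (rootShift t q 0) := by
  intro w hw
  refine Subgroup.mem_comap.2 (map_mem_of_mem_letterSubgroup (fun x hx => ?_) hw)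
  rw [rootShift_of ⟨x, hx⟩, Pi.zero_apply, neg_zero, zpow_zero, mul_one]
  exact ⟨_, of_mem_letterSubgroup rfl, rfl⟩

theorem disjoint_compl_of_exponentSum_eq_one
    (ih : ∀ (X : Type u) (w : FreeGroup X), wordLength w < wordLength r → IsMagnus w)
    (ht : t ∈ letters r) (hsum : exponentSum t r = 1)
    (hz : ∀ g, g * r * g⁻¹ ∉ letterSubgroup {z.1}ᶜ)
    (hr : ∀ g, g * r * g⁻¹ ∉ letterSubgroup {t}ᶜ) :
    Disjoint (letterSubgroup {t}ᶜ) ⟪r⟫ := by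
  have hright : (rootShift t 1 0 r).right = 1 :=
    right_rootShift_zero z hsum
  have hlen := wordLength_left_rootShift_lt (q := 1) (p := 0) ht
  have eq_inl := eq_inl_left hright
  have not_avoiding := conj_rootShift_one_notMem_avoiding (p := 0) hz
  have not_level := conj_rootShift_one_notMem level_zero_le_comap_shiftEquiv_symm hr
  rw [eq_inl] at not_avoiding not_level
  have disjoint := disjoint_level (fun X w hw => ih X w (hw.trans_lt hlen)) not_avoiding not_level
  rw [← eq_inl] at disjoint
  exact disjoint_normalClosure_of_map (rootShift_injective one_pos)
    letterSubgroup_le_comap_level_zero disjoint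

theorem disjoint_and_isTame_of_mem_letters {r : FreeGroup X} (hr : IsMinimalConj r)
    (ih : ∀ (X : Type u) (w : FreeGroup X), wordLength w < wordLength r → IsMagnus w) {z t : X}
    (hz : z ∈ letters r) (ht : t ∈ letters r) (hzt : z ≠ t) :
    Disjoint (letterSubgroup {z}ᶜ) ⟪r⟫ ∧ (NotProperPower r → IsTame r) := by
  have conj_notMem {x : X} (hx : x ∈ letters r) (g) : g * r * g⁻¹ ∉ letterSubgroup {x}ᶜ :=
    hr.conj_notMem (S := {x}ᶜ) hx (Set.notMem_compl_iff.2 rfl) g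
  by_cases hsum : exponentSum z r = 1
  · refine ⟨disjoint_compl_of_exponentSum_eq_one (z := ⟨t, hzt.symm⟩) ih hz hsum
      (conj_notMem ht) (conj_notMem hz), ?_⟩
    exact isTame_of_rootShift (z := ⟨t, hzt.symm⟩) ih hz one_pos
      (right_rootShift_zero ⟨t, hzt.symm⟩ hsum)
      (conj_rootShift_one_notMem_avoiding (conj_notMem ht)) (conj_notMem ht)
  · have not_avoiding {q : ℕ} {p : {x // x ≠ t} → ℤ} :=
      conj_rootShift_notMem_avoiding (z := ⟨z, hzt⟩) (q := q) (p := p) hsum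
    obtain ⟨q, p, hq, hright⟩ := exists_right_rootShift_eq_one (z := ⟨z, hzt⟩) hsum
    exact ⟨disjoint_letterSubgroup_of_rootShift (z := ⟨z, hzt⟩) ih ht hq hright not_avoiding,
      isTame_of_rootShift (z := ⟨z, hzt⟩) ih ht hq hright not_avoiding (conj_notMem hz)⟩

theorem isMagnus_of_isMinimalConj {r : FreeGroup X} (hr : IsMinimalConj r)
    (ih : ∀ (X : Type u) (w : FreeGroup X), wordLength w < wordLength r → IsMagnus w) :
    IsMagnus r where
  freiheitssatz := by
    refine .of_compl_singleton fun z hz => ?_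
    by_cases hr_single : letters r ⊆ {z}
    · exact Freiheitssatz.of_letters_subset_singleton hr_single _ hz
    obtain ⟨t, ht, htz⟩ := Set.not_subset.1 hr_single
    have z_mem : z ∈ letters r := by
      by_contra hzr
      have := mem_letterSubgroup (Set.subset_compl_singleton_iff.2 hzr)
      exact hz 1 (by rwa [one_mul, inv_one, mul_one])
    exact (disjoint_and_isTame_of_mem_letters hr ih z_mem ht (Ne.symm htz)).1
  isTame hr' := by
    obtain ⟨z, hz⟩ : (letters r).Nonempty := by
      rw [Set.nonempty_iff_ne_empty]
      intro h
      exact hr'.ne_one ((Subgroup.mem_bot).1 (mem_of_letters (by simp [h])))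
    by_cases hr_single : letters r ⊆ {z}
    · exact isTame_of_letters_subset_singleton hr_single hr'
    obtain ⟨t, ht, htz⟩ := Set.not_subset.1 hr_single
    exact (disjoint_and_isTame_of_mem_letters hr ih hz ht (Ne.symm htz)).2 hr'

theorem isMagnus (r : FreeGroup X) : IsMagnus r := by
  obtain ⟨n, hn⟩ : ∃ n, wordLength r = n := ⟨_, rfl⟩
  induction n using Nat.strong_induction_on generalizing X with | _ n ih
  obtain ⟨g, hmin, hlen⟩ := exists_isMinimalConj r
  have := isMagnus_of_isMinimalConj hmin fun X w hw => ih _ (hn ▸ hw.trans_le hlen) w rfl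
  exact ⟨this.freiheitssatz.conj, fun hr => (this.isTame (hr.conj g)).conj⟩

end Induction

/-! ### Grushko's theorem -/

theorem IsFreeDecomposition.quotient {G : Type u} [Group G] {κ ι : Type u} {H : κ → Subgroup G}
    {k : ι → G} (h : IsFreeDecomposition H k) {i : κ} {a : G} (ha : a ∈ H i) :
    IsFreeDecomposition (fun i => (H i).map (QuotientGroup.mk' ⟪a⟫))
      (fun l => QuotientGroup.mk' ⟪a⟫ (k l)) where
  closure_eq_top := by
    have := congrArg (Subgroup.map (QuotientGroup.mk' ⟪a⟫)) h.closure_eq_top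
    rw [MonoidHom.map_closure, Set.image_union, Set.image_iUnion, ← Set.range_comp,
      Subgroup.map_top_of_surjective _ (QuotientGroup.mk'_surjective _)] at this
    exact this
  exists_hom Q _ f c := by
    obtain ⟨Θ, hΘ, hc⟩ := h.exists_hom Q
      (fun i => (f i).comp ((QuotientGroup.mk' ⟪a⟫).subgroupMap (H i))) c
    have hΘa : Θ a = 1 := by
      rw [hΘ i ⟨a, ha⟩, MonoidHom.comp_apply]
      convert map_one (f i)
      exact Subtype.ext ((QuotientGroup.eq_one_iff a).2 (mem_normalClosure_self a))
    refine ⟨QuotientGroup.lift _ Θ (normalClosure_singleton_le_ker hΘa), ?_, hc⟩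
    rintro i ⟨_, x, hx, rfl⟩
    exact hΘ i ⟨x, hx⟩

theorem IsFreeDecomposition.exists_freeGroup_mulEquiv {G : Type u} [Group G] [IsFreeGroup G]
    {κ : Type u} {H : κ → Subgroup G}
    (h : IsFreeDecomposition H (PEmpty.elim : PEmpty.{u + 1} → G)) :
    ∃ (Y : Type u) (c : Y → κ) (ψ : FreeGroup Y ≃* G), ∀ y, ψ (of y) ∈ H (c y) := by
  let Y := Σ i, IsFreeGroup.Generators (H i)
  let b (y : Y) : H y.1 := IsFreeGroup.of y.2
  obtain ⟨Θ, hΘ, -⟩ := h.exists_hom (FreeGroup Y)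
    (fun i => IsFreeGroup.lift fun x => of (⟨i, x⟩ : Y)) PEmpty.elim
  let ψ : FreeGroup Y →* G := FreeGroup.lift fun y => b y
  have hΘψ : Θ.comp ψ = MonoidHom.id _ := by
    refine FreeGroup.ext_hom _ _ fun y => ?_
    rw [MonoidHom.comp_apply, FreeGroup.lift_apply_of, hΘ]
    exact IsFreeGroup.lift_of _ _
  have hψΘ (i) (x : H i) : ψ (Θ x) = x := by
    have : (ψ.comp (IsFreeGroup.lift fun x => of (⟨i, x⟩ : Y))) = (H i).subtype :=
      IsFreeGroup.ext_hom fun x => by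
        rw [MonoidHom.comp_apply, IsFreeGroup.lift_of, FreeGroup.lift_apply_of]
        rfl
    rw [hΘ]
    exact DFunLike.congr_fun this x
  refine ⟨Y, Sigma.fst, MonoidHom.toMulEquiv ψ Θ hΘψ
    (MonoidHom.eq_of_eqOn_dense h.closure_eq_top ?_), fun y => ?_⟩
  · rintro x (hx | ⟨l, -⟩)
    · obtain ⟨i, hi⟩ := Set.mem_iUnion.1 hx
      exact hψΘ i ⟨x, hi⟩
    · exact l.elim
  · rw [MonoidHom.toMulEquiv_apply, FreeGroup.lift_apply_of]
    exact (b y).2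

/-- The projection of a free product onto one of its factors. -/
noncomputable def projection {ι : Type*} (Q : ι → Type*) [∀ i, Group (Q i)] (i : ι) :
    Monoid.CoprodI Q →* Q i :=
  open Classical in
  Monoid.CoprodI.lift fun l => (Pi.evalMonoidHom Q i).comp (MonoidHom.mulSingle Q l)

section Projection

variable {ι : Type*} {Q : ι → Type*} [∀ i, Group (Q i)]

theorem projection_of {i : ι} (q : Q i) : projection Q i (Monoid.CoprodI.of q) = q := by
  simp [projection]

theorem projection_of_ne {i l : ι} (h : i ≠ l) (q : Q l) :
    projection Q i (Monoid.CoprodI.of q) = 1 := by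
  simp [projection, h]

theorem of_projection {i : ι} {x : Monoid.CoprodI Q}
    (hx : x ∈ (Monoid.CoprodI.of : Q i →* Monoid.CoprodI Q).range) :
    Monoid.CoprodI.of (projection Q i x) = x := by
  obtain ⟨q, rfl⟩ := hx
  rw [projection_of]

theorem eq_nil_of_prod_eq_one {l : List (ι × Monoid.CoprodI Q)}
    (hmem : ∀ p ∈ l, p.2 ∈ (Monoid.CoprodI.of : Q p.1 →* Monoid.CoprodI Q).range)
    (hne : ∀ p ∈ l, p.2 ≠ 1) (hchain : l.IsChain (·.1 ≠ ·.1))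
    (hprod : (l.map Prod.snd).prod = 1) : l = [] := by
  classical
  let w : Monoid.CoprodI.Word Q :=
    { toList := l.map fun p => ⟨p.1, projection Q p.1 p.2⟩
      ne_one := by
        simp only [List.mem_map, forall_exists_index, and_imp, forall_apply_eq_imp_iff₂]
        intro p hp h
        exact hne p hp (by rw [← of_projection (hmem p hp), h, map_one])
      chain_ne := (List.isChain_map _).2 hchain }
  have hw : w.prod = Monoid.CoprodI.Word.empty.prod := by
    rw [Monoid.CoprodI.Word.prod_empty, ← hprod, Monoid.CoprodI.Word.prod, List.map_map]
    exact congrArg List.prod (List.map_congr_left fun p hp => of_projection (hmem p hp))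
  have hnil : w = .empty := Monoid.CoprodI.Word.equiv.symm.injective hw
  exact List.map_eq_nil_iff.1 (congrArg Monoid.CoprodI.Word.toList hnil)

end Projection

/-- The translates `j f * s` of the points of `S` under the image of `j`. -/
def translates {F E : Type*} [Group F] [Group E] (j : F →* E) (S : Set E) : Set E :=
  {w | ∃ f, ∃ s ∈ S, w = j f * s}

/-- Two elements of `W` are adjacent if they differ by right multiplication by an element of one of
the subgroups `V i`. -/
def Adjacent {E ι : Type*} [Group E] (V : ι → Subgroup E) (W : Set E) (w w' : E) : Prop :=
  w ∈ W ∧ w' ∈ W ∧ ∃ i, w⁻¹ * w' ∈ V i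

/-- A stage of the folding process which turns a homomorphism `Φ` from `F` onto a free product into
a compatible free decomposition of `F`. It extends `Φ` along `j` to a homomorphism `Ψ` from a group
`E` with a compatible free decomposition `V`. The group `E` is the free product of the image of `j`
and of a free group with basis `S \ {1}`; the process is complete when `S = {1}`. -/
structure IsFolding {F E ι : Type u} [Group F] [Group E] {Q : ι → Type u} [∀ i, Group (Q i)]
    (Φ : F →* Monoid.CoprodI Q) (j : F →* E) (V : ι → Subgroup E) (S : Set E)
    (Ψ : E →* Monoid.CoprodI Q) : Prop where
  isFreeDecomposition : IsFreeDecomposition V (PEmpty.elim : PEmpty → E)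
  apply_mem_range (i : ι) {a : E} (ha : a ∈ V i) :
    Ψ a ∈ (Monoid.CoprodI.of : Q i →* Monoid.CoprodI Q).range
  apply_apply (f : F) : Ψ (j f) = Φ f
  finite : S.Finite
  one_mem : 1 ∈ S
  closure_eq_top : Subgroup.closure (Set.range j ∪ S) = ⊤
  exists_hom (K : Type u) [Group K] (g : F →* K) (k : E → K) : k 1 = 1 →
    ∃ h : E →* K, (∀ f, h (j f) = g f) ∧ ∀ s ∈ S, h s = k s
  connected : ∀ w ∈ translates j S, Relation.ReflTransGen (Adjacent V (translates j S)) 1 w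

theorem mul_mem_translates {F E : Type*} [Group F] [Group E] {j : F →* E} {S : Set E} {w : E}
    (hw : w ∈ translates j S) (f : F) : j f * w ∈ translates j S := by
  obtain ⟨f', s, hs, rfl⟩ := hw
  exact ⟨f * f', s, hs, by rw [map_mul, mul_assoc]⟩

theorem map_mem_translates {F E E' : Type*} [Group F] [Group E] [Group E'] {j : F →* E}
    {S : Set E} {S' : Set E'} {π : E →* E'} (h : ∀ s ∈ S, π s ∈ translates (π.comp j) S') {w : E}
    (hw : w ∈ translates j S) : π w ∈ translates (π.comp j) S' := by
  obtain ⟨f, s, hs, rfl⟩ := hw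
  rw [map_mul]
  exact mul_mem_translates (j := π.comp j) (h s hs) f

theorem Adjacent.mul_left {F E ι : Type*} [Group F] [Group E] {j : F →* E} {V : ι → Subgroup E}
    {S : Set E} {w w' : E} (h : Adjacent V (translates j S) w w') (f : F) :
    Adjacent V (translates j S) (j f * w) (j f * w') := by
  obtain ⟨hw, hw', i, hi⟩ := h
  refine ⟨mul_mem_translates hw f, mul_mem_translates hw' f, i, ?_⟩
  rwa [mul_inv_rev, mul_assoc, inv_mul_cancel_left]

instance {E ι : Type*} [Group E] (V : ι → Subgroup E) (W : Set E) : Std.Symm (Adjacent V W) where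
  symm w w' := by
    rintro ⟨hw, hw', i, hi⟩
    refine ⟨hw', hw, i, ?_⟩
    simpa only [mul_inv_rev, inv_inv] using inv_mem hi

/-- Edge paths issuing from `w` with vertices in `W` whose image under `Ψ` is a reduced word. A path
is recorded as the list of its edges, each with the index of a subgroup `V i` containing it. -/
inductive IsReducedPath {E ι : Type*} [Group E] {Q : ι → Type*} [∀ i, Group (Q i)]
    (V : ι → Subgroup E) (W : Set E) (Ψ : E →* Monoid.CoprodI Q) : E → List (ι × E) → Prop
  | nil (w : E) : IsReducedPath V W Ψ w []
  | cons {w a : E} {i : ι} {l : List (ι × E)} : w * a ∈ W → a ∈ V i → Ψ a ≠ 1 →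
      (∀ p ∈ l.head?, i ≠ p.1) → IsReducedPath V W Ψ (w * a) l →
      IsReducedPath V W Ψ w ((i, a) :: l)

/-- The product of the edges of a path. -/
def pathProd {E ι : Type*} [Group E] (l : List (ι × E)) : E := (l.map Prod.snd).prod

/-- Every edge with label in the kernel of `Ψ` joins two equivalent elements of `translates j S`. -/
def IsTieFree {F E ι : Type*} [Group F] [Group E] {Q : ι → Type*} [∀ i, Group (Q i)] (j : F →* E)
    (V : ι → Subgroup E) (S : Set E) (Ψ : E →* Monoid.CoprodI Q) : Prop :=
  ∀ w ∈ translates j S, ∀ i, ∀ a ∈ V i, w * a ∈ translates j S → Ψ a = 1 → ∃ f, w * a = j f * w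

namespace IsReducedPath

variable {F E ι : Type*} [Group F] [Group E] {Q : ι → Type*} [∀ i, Group (Q i)]
  {j : F →* E} {V : ι → Subgroup E} {S : Set E} {Ψ : E →* Monoid.CoprodI Q} {w a : E} {i : ι}
  {l : List (ι × E)}

theorem mul_left (h : IsReducedPath V (translates j S) Ψ w l) (f : F) :
    IsReducedPath V (translates j S) Ψ (j f * w) l := by
  induction h with
  | nil => exact .nil _
  | cons hW hV hΨ hl _ ih =>
    rw [← mul_assoc] at ih
    exact .cons (by rw [mul_assoc]; exact mul_mem_translates hW f) hV hΨ hl ih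

theorem eq_nil {W : Set E} (h : IsReducedPath V W Ψ w l)
    (hV : ∀ i, ∀ a ∈ V i, Ψ a ∈ (Monoid.CoprodI.of : Q i →* Monoid.CoprodI Q).range)
    (hl : Ψ (pathProd l) = 1) : l = [] := by
  have hmem : ∀ p ∈ l, p.2 ∈ V p.1 ∧ Ψ p.2 ≠ 1 := by
    clear hl
    induction h with
    | nil => simp
    | cons _ hV hΨ _ _ ih => exact List.forall_mem_cons.2 ⟨⟨hV, hΨ⟩, ih⟩
  have hchain : l.IsChain (·.1 ≠ ·.1) := by
    clear hl hmem
    induction h with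
    | nil => exact .nil
    | cons _ _ _ hl _ ih => exact List.isChain_cons.2 ⟨hl, ih⟩
  rw [pathProd, map_list_prod, List.map_map] at hl
  have hnil : l.map (fun p => (p.1, Ψ p.2)) = [] := by
    refine eq_nil_of_prod_eq_one ?_ ?_ ((List.isChain_map _).2 hchain) (by rwa [List.map_map])
    · simpa only [List.forall_mem_map] using fun p hp => hV _ _ (hmem p hp).1
    · simpa only [List.forall_mem_map] using fun p hp => (hmem p hp).2
  exact List.map_eq_nil_iff.1 hnil

theorem exists_cons_of_head_ne
    (hno : IsTieFree j V S Ψ) (h : IsReducedPath V (translates j S) Ψ (w * a) l)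
    (hw : w ∈ translates j S) (hwa : w * a ∈ translates j S) (ha : a ∈ V i)
    (hl : ∀ p ∈ l.head?, i ≠ p.1) :
    ∃ f l', Ψ (j f) = 1 ∧ IsReducedPath V (translates j S) Ψ w l' ∧
      w * pathProd l' = j f * (w * a * pathProd l) := by
  by_cases hΨ : Ψ a = 1
  · obtain ⟨f, hf⟩ := hno w hw i a ha hwa hΨ
    have hΨf : Ψ (j f) = 1 := by
      have := congrArg Ψ hf
      rwa [map_mul, map_mul, hΨ, mul_one, right_eq_mul] at this
    have hf' : j f⁻¹ * (w * a) = w := by rw [hf, map_inv, inv_mul_cancel_left]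
    refine ⟨f⁻¹, l, by rw [map_inv, map_inv, hΨf, inv_one], hf' ▸ h.mul_left f⁻¹, ?_⟩
    rw [← mul_assoc (j f⁻¹), hf']
  · exact ⟨1, (i, a) :: l, by rw [map_one, map_one], .cons hwa ha hΨ hl h,
      by simp [pathProd, mul_assoc]⟩

theorem exists_cons
    (hno : IsTieFree j V S Ψ) (h : IsReducedPath V (translates j S) Ψ (w * a) l)
    (hw : w ∈ translates j S) (hwa : w * a ∈ translates j S) (ha : a ∈ V i) :
    ∃ f l', Ψ (j f) = 1 ∧ IsReducedPath V (translates j S) Ψ w l' ∧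
      w * pathProd l' = j f * (w * a * pathProd l) := by
  by_cases hl : ∀ p ∈ l.head?, i ≠ p.1
  · exact h.exists_cons_of_head_ne hno hw hwa ha hl
  · cases h with
    | nil => simp at hl
    | @cons _ b i' l hwb hb _ hl' h =>
      obtain rfl : i = i' := by simpa using hl
      rw [mul_assoc w a b] at h hwb
      obtain ⟨f, l', hf, hl', hprod⟩ :=
        h.exists_cons_of_head_ne hno hw hwb (mul_mem ha hb) hl'
      exact ⟨f, l', hf, hl', by simpa [pathProd, mul_assoc] using hprod⟩

end IsReducedPath

namespace IsFolding

variable {F E ι : Type u} [Group F] [Group E] {Q : ι → Type u} [∀ i, Group (Q i)]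
  {Φ : F →* Monoid.CoprodI Q} {j : F →* E} {V : ι → Subgroup E} {S : Set E}
  {Ψ : E →* Monoid.CoprodI Q}

theorem bijective (h : IsFolding Φ j V S Ψ) (hS : S ⊆ {1}) : Function.Bijective j := by
  obtain ⟨ρ, hρ, -⟩ := h.exists_hom F (MonoidHom.id F) 1 rfl
  refine ⟨Function.LeftInverse.injective hρ, MonoidHom.range_eq_top.1 (top_unique ?_)⟩
  rw [← h.closure_eq_top, Subgroup.closure_le]
  rintro x (⟨f, rfl⟩ | hx)
  · exact ⟨f, rfl⟩
  · rw [hS hx]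
    exact Subgroup.one_mem _

theorem eq_one_of_mul_eq_one (h : IsFolding Φ j V S Ψ) {s : E} (hs : s ∈ S) {f : F}
    (hf : j f * s = 1) : s = 1 := by
  classical
  by_contra hs₁
  obtain ⟨ρ, hρ, hk⟩ := h.exists_hom (FreeGroup PUnit.{u + 1}) 1
    (Function.update 1 s (of PUnit.unit)) (Function.update_of_ne (Ne.symm hs₁) _ _)
  have := congrArg ρ hf
  rw [map_mul, hρ, hk s hs, Function.update_self, map_one, MonoidHom.one_apply, one_mul] at this
  exact FreeGroup.of_ne_one _ this

theorem exists_hom_eq_one (h : IsFolding Φ j V S Ψ) {a p q : E} {f : F} (hp : p ∈ S) (hq : q ∈ S)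
    (hq₁ : q ≠ 1) (hpq : p ≠ q) (haq : p * a = j f * q)
    {K : Type u} [Group K] (g : F →* K) {k : E → K}
    (hk : k 1 = 1) : ∃ ρ : E →* K, (∀ f, ρ (j f) = g f) ∧ ρ a = 1 ∧ ∀ s ∈ S \ {q}, ρ s = k s := by
  classical
  obtain ⟨ρ, hρ, hρk⟩ := h.exists_hom K g (Function.update k q ((g f)⁻¹ * k p))
    (by rw [Function.update_of_ne hq₁.symm, hk])
  have hρS (s) (hs : s ∈ S) (hsq : s ≠ q) : ρ s = k s := by
    rw [hρk s hs, Function.update_of_ne hsq]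
  have hρq : ρ q = (g f)⁻¹ * k p := by rw [hρk q hq, Function.update_self]
  refine ⟨ρ, hρ, ?_, fun s hs => hρS s hs.1 hs.2⟩
  have := congrArg ρ haq
  rwa [map_mul, map_mul, hρ, hρq, hρS p hp hpq, mul_inv_cancel_left, mul_eq_left] at this

/-- Identifying the ends of the edge `a` between `p` and `j f * q` makes the point `q` redundant. -/
theorem quotient (h : IsFolding Φ j V S Ψ) {i : ι} {a p q : E} {f : F} (ha : a ∈ V i)
    (hΨa : Ψ a = 1) (hp : p ∈ S) (hq : q ∈ S) (hq₁ : q ≠ 1) (hpq : p ≠ q) (haq : p * a = j f * q) :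
    IsFolding Φ ((QuotientGroup.mk' ⟪a⟫).comp j) (fun i => (V i).map (QuotientGroup.mk' ⟪a⟫))
      (QuotientGroup.mk' ⟪a⟫ '' (S \ {q}))
      (QuotientGroup.lift _ Ψ (normalClosure_singleton_le_ker hΨa)) := by
  set π := QuotientGroup.mk' ⟪a⟫
  have map_mem {w : E} (hw : w ∈ translates j S) :
      π w ∈ translates (π.comp j) (π '' (S \ {q})) := by
    refine map_mem_translates (fun s hs => ?_) hw
    rcases eq_or_ne s q with rfl | hsq
    · have hπa : π a = 1 := (QuotientGroup.eq_one_iff a).2 (mem_normalClosure_self a)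
      refine ⟨f⁻¹, π p, ⟨p, ⟨hp, hpq⟩, rfl⟩, ?_⟩
      rw [← mul_one (π p), ← hπa, ← map_mul, haq, MonoidHom.comp_apply, ← map_mul, map_inv,
        inv_mul_cancel_left]
    · exact ⟨1, π s, ⟨s, ⟨hs, hsq⟩, rfl⟩, by rw [map_one, one_mul]⟩
  exact
  { isFreeDecomposition := by
      convert h.isFreeDecomposition.quotient ha using 1
      exact funext fun l => l.elim
    apply_mem_range := by
      rintro i _ ⟨x, hx, rfl⟩
      exact h.apply_mem_range i hx
    apply_apply := h.apply_apply
    finite := h.finite.sdiff.image _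
    one_mem := ⟨1, ⟨h.one_mem, hq₁.symm⟩, map_one _⟩
    closure_eq_top := by
      refine top_unique ?_
      rw [← Subgroup.map_top_of_surjective π (QuotientGroup.mk'_surjective _), ← h.closure_eq_top,
        Subgroup.map_le_iff_le_comap, Subgroup.closure_le]
      rintro _ (⟨f', rfl⟩ | hs)
      · exact Subgroup.subset_closure (Or.inl ⟨f', rfl⟩)
      · obtain ⟨f', s, hs, hsf⟩ := map_mem ⟨1, _, hs, by rw [map_one, one_mul]⟩
        exact Subgroup.mem_comap.2 (hsf ▸ mul_mem (Subgroup.subset_closure (Or.inl ⟨f', rfl⟩))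
          (Subgroup.subset_closure (Or.inr hs)))
    exists_hom := by
      intro K _ g k hk
      obtain ⟨ρ, hρ, hρa, hρk⟩ := h.exists_hom_eq_one hp hq hq₁ hpq haq g (k := k ∘ π)
        (by rwa [Function.comp_apply, map_one])
      refine ⟨QuotientGroup.lift _ ρ (normalClosure_singleton_le_ker hρa), hρ, ?_⟩
      rintro _ ⟨s, hs, rfl⟩
      exact hρk s hs
    connected := by
      rintro _ ⟨f', _, ⟨s, ⟨hs, -⟩, rfl⟩, rfl⟩
      rw [← map_one π, MonoidHom.comp_apply, ← map_mul]
      exact (h.connected _ ⟨f', s, hs, rfl⟩).lift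
        (p := Adjacent (fun i => (V i).map π) (translates (π.comp j) (π '' (S \ {q})))) π
        fun w w' ⟨hw, hw', i, hi⟩ => ⟨map_mem hw, map_mem hw', i, _, hi, map_mul π _ _⟩ }

theorem exists_eq_of_isTieFree (h : IsFolding Φ j V S Ψ) (hno : IsTieFree j V S Ψ) {w : E}
    (hw : w ∈ translates j S) (hΨw : Ψ w = 1) : ∃ f, w = j f := by
  have hpath : Relation.ReflTransGen (Adjacent V (translates j S)) w 1 :=
    Std.Symm.symm _ _ (h.connected w hw)
  obtain ⟨f, l, hf, hl, hprod⟩ : ∃ f l, Ψ (j f) = 1 ∧ IsReducedPath V (translates j S) Ψ w l ∧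
      w * pathProd l = j f := by
    clear hΨw hw
    induction hpath using Relation.ReflTransGen.head_induction_on with
    | refl => exact ⟨1, [], by simp, .nil 1, by simp [pathProd]⟩
    | @head w w' hadj _ ih =>
      obtain ⟨hw, hw', i, hi⟩ := hadj
      obtain ⟨f, l, hf, hl, hprod⟩ := ih
      rw [← mul_inv_cancel_left w w'] at hl hw' hprod
      obtain ⟨f', l', hf', hl', hprod'⟩ := hl.exists_cons hno hw hw' hi
      exact ⟨f' * f, l', by rw [map_mul, map_mul, hf, hf', mul_one], hl',
        by rw [hprod', hprod, map_mul]⟩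
  have hΨl : Ψ (pathProd l) = 1 := by
    have := congrArg Ψ hprod
    rwa [map_mul, hΨw, one_mul, hf] at this
  rw [hl.eq_nil (fun i a => h.apply_mem_range i) hΨl] at hprod
  exact ⟨f, by simpa [pathProd] using hprod⟩

theorem exists_tie (h : IsFolding Φ j V S Ψ) (hΦ : Function.Surjective Φ) (hS : ¬ S ⊆ {1}) :
    ∃ i, ∃ a ∈ V i, ∃ p ∈ S, ∃ q ∈ S, ∃ f, Ψ a = 1 ∧ q ≠ 1 ∧ p ≠ q ∧ p * a = j f * q := by
  by_contra! hno
  have htie : IsTieFree j V S Ψ := by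
    rintro _ ⟨f₁, p, hp, rfl⟩ i a ha ⟨f₂, q, hq, haq⟩ hΨa
    have hpa : p * a = j (f₁⁻¹ * f₂) * q := by
      rw [map_mul, map_inv, mul_assoc, ← haq, mul_assoc, inv_mul_cancel_left]
    obtain rfl : p = q := by
      by_contra hpq
      by_cases hq₁ : q = 1
      · refine hno i a⁻¹ (inv_mem ha) q hq p hp (f₁⁻¹ * f₂)⁻¹ (by rw [map_inv, hΨa, inv_one])
          (fun hp₁ => hpq (hp₁.trans hq₁.symm)) (Ne.symm hpq) ?_
        rw [map_inv, eq_inv_mul_iff_mul_eq, ← mul_assoc, ← hpa, mul_inv_cancel_right]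
      · exact hno i a ha p hp q hq _ hΨa hq₁ hpq hpa
    exact ⟨f₂ * f₁⁻¹, by rw [haq, map_mul, map_inv, mul_assoc, inv_mul_cancel_left]⟩
  obtain ⟨s, hs, hs₁⟩ := Set.not_subset.1 hS
  obtain ⟨f, hf⟩ := hΦ (Ψ s)⁻¹
  obtain ⟨f', hf'⟩ := h.exists_eq_of_isTieFree htie (w := j f * s) ⟨f, s, hs, rfl⟩
    (by rw [map_mul, h.apply_apply, hf, inv_mul_cancel])
  refine hs₁ (h.eq_one_of_mul_eq_one (f := f'⁻¹ * f) hs ?_)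
  rw [map_mul, mul_assoc, hf', ← map_mul, inv_mul_cancel, map_one]

theorem exists_freeGroup_mulEquiv (h : IsFolding Φ j V S Ψ) [IsFreeGroup F]
    (hΦ : Function.Surjective Φ) :
    ∃ (Y : Type u) (c : Y → ι) (ψ : FreeGroup Y ≃* F),
      ∀ y, Φ (ψ (of y)) ∈ (Monoid.CoprodI.of : Q (c y) →* Monoid.CoprodI Q).range := by
  induction hn : S.ncard using Nat.strong_induction_on generalizing E with
  | _ n ih =>
    by_cases hS : S ⊆ {1}
    · let e := MulEquiv.ofBijective j (h.bijective hS)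
      have : IsFreeGroup E := .ofMulEquiv e
      obtain ⟨Y, c, ψ, hψ⟩ := h.isFreeDecomposition.exists_freeGroup_mulEquiv
      refine ⟨Y, c, ψ.trans e.symm, fun y => ?_⟩
      rw [← h.apply_apply, MulEquiv.trans_apply]
      convert h.apply_mem_range _ (hψ y)
      exact e.apply_symm_apply _
    · obtain ⟨i, a, ha, p, hp, q, hq, f, hΨa, hq₁, hpq, haq⟩ := h.exists_tie hΦ hS
      refine ih _ ?_ (h.quotient ha hΨa hp hq hq₁ hpq haq) rfl
      exact hn ▸ (Set.ncard_image_le h.finite.sdiff).trans_lt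
        (Set.ncard_sdiff_singleton_lt_of_mem hq h.finite)

end IsFolding

theorem isFreeDecomposition_letterSubgroup {Z ι : Type u} (c : Z → ι) :
    IsFreeDecomposition (fun i => letterSubgroup (c ⁻¹' {i}))
      (PEmpty.elim : PEmpty → FreeGroup Z) where
  closure_eq_top := by
    rw [eq_top_iff, ← FreeGroup.closure_range_of, Subgroup.closure_le]
    rintro _ ⟨z, rfl⟩
    exact Subgroup.subset_closure (Or.inl (Set.mem_iUnion.2 ⟨c z, of_mem_letterSubgroup rfl⟩))
  exists_hom Q _ f _ := by
    refine ⟨FreeGroup.lift fun z => f (c z) ⟨of z, of_mem_letterSubgroup rfl⟩, ?_, fun l => l.elim⟩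
    rintro i ⟨w, hw⟩
    induction hw using Subgroup.closure_induction with
    | mem x hx =>
      obtain ⟨z, rfl, rfl⟩ := hx
      exact FreeGroup.lift_apply_of
    | one => rw [map_one]; exact (map_one (f i)).symm
    | mul x y hx hy ihx ihy => rw [map_mul, ihx, ihy, ← map_mul]; rfl
    | inv x hx ih => rw [map_inv, ih, ← map_inv]; rfl

section Subdivision

variable {X : Type u} {N : ℕ}

/-- The vertices of the path obtained by subdividing the generator `x` into `N` edges. -/
def subdivisionVertex (x : X) (i : Fin (N + 1)) : FreeGroup (X × Fin N) :=
  Fin.partialProd (fun m => of (x, m)) i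

theorem subdivisionVertex_zero (x : X) : subdivisionVertex (N := N) x 0 = 1 :=
  Fin.partialProd_zero _

theorem subdivisionVertex_succ (x : X) (m : Fin N) :
    subdivisionVertex x m.succ = subdivisionVertex x m.castSucc * of (x, m) :=
  Fin.partialProd_succ _ m

/-- The homomorphism which sends every generator to the product of its `N` pieces. -/
def subdivide (X : Type u) (N : ℕ) : FreeGroup X →* FreeGroup (X × Fin N) :=
  FreeGroup.lift fun x => subdivisionVertex x (Fin.last N)

theorem subdivide_of (x : X) : subdivide X N (of x) = subdivisionVertex x (Fin.last N) :=
  FreeGroup.lift_apply_of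

theorem map_subdivide_of {P : Type*} [Monoid P] (f : FreeGroup (X × Fin N) →* P) (x : X) :
    f (subdivide X N (of x)) = (List.ofFn fun m => f (of (x, m))).prod := by
  rw [subdivide_of, subdivisionVertex, Fin.partialProd, Fin.val_last,
    List.take_of_length_le (List.length_ofFn).le, map_list_prod, List.map_ofFn]
  rfl

theorem exists_hom_subdivisionVertex {K : Type*} [Group K] (κ : X → Fin (N + 1) → K)
    (hκ : ∀ x, κ x 0 = 1) :
    ∃ h : FreeGroup (X × Fin N) →* K, ∀ x i, h (subdivisionVertex x i) = κ x i := by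
  refine ⟨FreeGroup.lift fun p => (κ p.1 p.2.castSucc)⁻¹ * κ p.1 p.2.succ, fun x i => ?_⟩
  induction i using Fin.induction with
  | zero => rw [subdivisionVertex_zero, map_one, hκ]
  | succ m ih =>
    rw [subdivisionVertex_succ, map_mul, ih, FreeGroup.lift_apply_of, mul_inv_cancel_left]

/-- The inner vertices of the subdivision, together with the base point. -/
def innerVertices (X : Type u) (N : ℕ) : Set (FreeGroup (X × Fin N)) :=
  insert 1 (Set.range fun p : X × Fin N => subdivisionVertex p.1 p.2.castSucc)

theorem subdivisionVertex_mem_translates (x : X) (i : Fin (N + 1)) :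
    subdivisionVertex x i ∈ translates (subdivide X N) (innerVertices X N) := by
  cases i using Fin.lastCases with
  | last => exact ⟨of x, 1, Or.inl rfl, by rw [subdivide_of, mul_one]⟩
  | cast m => exact ⟨1, _, Or.inr ⟨(x, m), rfl⟩, by rw [map_one, one_mul]⟩

theorem adjacent_subdivisionVertex {ι : Type*} {c : X × Fin N → ι} (x : X) (m : Fin N) :
    Adjacent (fun i => letterSubgroup (c ⁻¹' {i}))
      (translates (subdivide X N) (innerVertices X N))
      (subdivisionVertex x m.castSucc) (subdivisionVertex x m.succ) := by
  refine ⟨subdivisionVertex_mem_translates x _, subdivisionVertex_mem_translates x _, c (x, m), ?_⟩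
  rw [subdivisionVertex_succ, inv_mul_cancel_left]
  exact of_mem_letterSubgroup rfl

theorem connected_subdivision {ι : Type*} (c : X × Fin N → ι) {w : FreeGroup (X × Fin N)}
    (hw : w ∈ translates (subdivide X N) (innerVertices X N)) :
    Relation.ReflTransGen (Adjacent (fun i => letterSubgroup (c ⁻¹' {i}))
      (translates (subdivide X N) (innerVertices X N))) 1 w := by
  set R := Relation.ReflTransGen (Adjacent (fun i => letterSubgroup (c ⁻¹' {i}))
    (translates (subdivide X N) (innerVertices X N)))
  have translate {f : FreeGroup X} {w : FreeGroup (X × Fin N)} (h : R 1 w) :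
      R (subdivide X N f) (subdivide X N f * w) := by
    simpa only [Function.onFun, mul_one] using
      h.lift (subdivide X N f * ·) fun _ _ h => h.mul_left f
  have vertex (x : X) (i : Fin (N + 1)) : R 1 (subdivisionVertex x i) := by
    induction i using Fin.induction with
    | zero => rw [subdivisionVertex_zero]
    | succ m ih => exact ih.tail (adjacent_subdivisionVertex x m)
  have image (f : FreeGroup X) : R 1 (subdivide X N f) := by
    induction f using FreeGroup.induction_on with
    | C1 => rw [map_one]
    | of x => exact subdivide_of (N := N) x ▸ vertex x (Fin.last N)
    | inv_of x ih =>
      have := translate (f := (of x)⁻¹) ih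
      rw [map_inv, inv_mul_cancel] at this
      exact Std.Symm.symm _ _ (map_inv (subdivide X N) (of x) ▸ this)
    | mul f g ihf ihg => exact map_mul (subdivide X N) f g ▸ ihf.trans (translate ihg)
  obtain ⟨f, _, rfl | ⟨⟨x, m⟩, rfl⟩, rfl⟩ := hw
  · rw [mul_one]
    exact image f
  · exact (image f).trans (translate (vertex x m.castSucc))

theorem closure_subdivision :
    Subgroup.closure (Set.range (subdivide X N) ∪ innerVertices X N) = ⊤ := by
  rw [eq_top_iff, ← FreeGroup.closure_range_of, Subgroup.closure_le]
  rintro _ ⟨⟨x, m⟩, rfl⟩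
  have vertex (i : Fin (N + 1)) : subdivisionVertex x i ∈
      Subgroup.closure (Set.range (subdivide X N) ∪ innerVertices X N) := by
    obtain ⟨f, s, hs, hfs⟩ := subdivisionVertex_mem_translates x i
    rw [hfs]
    exact mul_mem (Subgroup.subset_closure (Or.inl ⟨f, rfl⟩)) (Subgroup.subset_closure (Or.inr hs))
  rw [← inv_mul_cancel_left (subdivisionVertex x m.castSucc) (of (x, m)), ← subdivisionVertex_succ]
  exact mul_mem (inv_mem (vertex _)) (vertex _)

theorem isFolding_subdivide [Finite X] {ι : Type u} {Q : ι → Type u} [∀ i, Group (Q i)]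
    {Φ : FreeGroup X →* Monoid.CoprodI Q} {c : X × Fin (N + 1) → ι}
    {q : X × Fin (N + 1) → Monoid.CoprodI Q}
    (hq : ∀ e, q e ∈ (Monoid.CoprodI.of : Q (c e) →* Monoid.CoprodI Q).range)
    (hΦ : ∀ x, (List.ofFn fun m => q (x, m)).prod = Φ (of x)) :
    IsFolding Φ (subdivide X (N + 1)) (fun i => letterSubgroup (c ⁻¹' {i}))
      (innerVertices X (N + 1)) (FreeGroup.lift q) where
  isFreeDecomposition := isFreeDecomposition_letterSubgroup c
  apply_mem_range i a ha := by
    refine map_mem_of_mem_letterSubgroup ?_ ha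
    rintro e rfl
    rw [FreeGroup.lift_apply_of]
    exact hq e
  apply_apply f := by
    refine DFunLike.congr_fun (FreeGroup.ext_hom ((FreeGroup.lift q).comp _) Φ fun x => ?_) f
    rw [MonoidHom.comp_apply, map_subdivide_of, ← hΦ]
    simp only [FreeGroup.lift_apply_of]
  finite := (Set.finite_range _).insert 1
  one_mem := Or.inl rfl
  closure_eq_top := closure_subdivision
  exists_hom K _ g k hk := by
    obtain ⟨h, hh⟩ := exists_hom_subdivisionVertex (K := K)
      (fun x => Fin.snoc (fun m : Fin (N + 1) => k (subdivisionVertex x m.castSucc)) (g (of x)))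
      fun x => by rw [← Fin.castSucc_zero, Fin.snoc_castSucc, Fin.castSucc_zero,
        subdivisionVertex_zero, hk]
    refine ⟨h, fun f => DFunLike.congr_fun (FreeGroup.ext_hom (h.comp _) g fun x => ?_) f, ?_⟩
    · rw [MonoidHom.comp_apply, subdivide_of, hh, Fin.snoc_last]
    · rintro _ (rfl | ⟨⟨x, m⟩, rfl⟩)
      · rw [map_one, hk]
      · rw [hh, Fin.snoc_castSucc]
  connected _ := connected_subdivision c

end Subdivision

open scoped Pointwise in
theorem exists_mem_pow {ι : Type*} [Nonempty ι] {Q : ι → Type*} [∀ i, Group (Q i)]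
    (x : Monoid.CoprodI Q) :
    ∃ n : ℕ, x ∈ (⋃ i, Set.range (Monoid.CoprodI.of : Q i →* Monoid.CoprodI Q)) ^ n := by
  induction x using Monoid.CoprodI.induction_on with
  | one => exact ⟨0, Set.one_mem_one⟩
  | of i a => exact ⟨1, by rw [pow_one]; exact Set.mem_iUnion_of_mem i ⟨a, rfl⟩⟩
  | mul x y hx hy =>
    obtain ⟨m, hm⟩ := hx
    obtain ⟨n, hn⟩ := hy
    exact ⟨m + n, pow_add (⋃ i, Set.range (Monoid.CoprodI.of : Q i →* Monoid.CoprodI Q)) m n ▸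
      Set.mul_mem_mul hm hn⟩

open scoped Pointwise in
-- Grushko's theorem.
theorem exists_freeGroup_mulEquiv {X ι : Type u} [Finite X] [Nonempty ι] {Q : ι → Type u}
    [∀ i, Group (Q i)] {Φ : FreeGroup X →* Monoid.CoprodI Q} (hΦ : Function.Surjective Φ) :
    ∃ (Y : Type u) (c : Y → ι) (ψ : FreeGroup Y ≃* FreeGroup X),
      ∀ y, Φ (ψ (of y)) ∈ (Monoid.CoprodI.of : Q (c y) →* Monoid.CoprodI Q).range := by
  set S : Set (Monoid.CoprodI Q) := ⋃ i, Set.range (Monoid.CoprodI.of : Q i →* Monoid.CoprodI Q)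
  have one_mem : (1 : Monoid.CoprodI Q) ∈ S :=
    Set.mem_iUnion_of_mem (Classical.arbitrary ι) ⟨1, map_one _⟩
  choose n hn using fun x => exists_mem_pow (Φ (of x))
  obtain ⟨N, hN⟩ := Finite.exists_le n
  have hmem (x : X) : Φ (of x) ∈ S ^ (N + 1) :=
    Set.pow_subset_pow_right one_mem ((hN x).trans N.le_succ) (hn x)
  choose q hq using fun x => Set.mem_pow.1 (hmem x)
  choose c hc using fun e : X × Fin (N + 1) => Set.mem_iUnion.1 (q e.1 e.2).2
  exact (isFolding_subdivide (q := fun e => (q e.1 e.2 : Monoid.CoprodI Q)) hc hq)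
    |>.exists_freeGroup_mulEquiv hΦ

/-! ### Free decompositions of one-relator groups -/

section Decomposable

theorem nonempty_mulEquiv_coprod {Y : Type*} {S : Set Y} {r : FreeGroup Y}
    (hr : r ∈ letterSubgroup S) :
    Nonempty (FreeGroup Y ⧸ ⟪r⟫ ≃*
      Monoid.Coprod (FreeGroup S ⧸ ⟪retract S r⟫) (FreeGroup (Sᶜ : Set Y))) := by
  classical
  let inl : FreeGroup S ⧸ ⟪retract S r⟫ →* Monoid.Coprod _ (FreeGroup (Sᶜ : Set Y)) :=
    Monoid.Coprod.inl
  let f : FreeGroup Y →* Monoid.Coprod (FreeGroup S ⧸ ⟪retract S r⟫) (FreeGroup (Sᶜ : Set Y)) :=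
    FreeGroup.lift fun y => if hy : y ∈ S then inl (of ⟨y, hy⟩ : FreeGroup S)
      else Monoid.Coprod.inr (of ⟨y, hy⟩)
  have f_inclusion : f.comp (inclusion S) = inl.comp (QuotientGroup.mk' _) :=
    FreeGroup.ext_hom _ _ fun y => by
      rw [MonoidHom.comp_apply, FreeGroup.map.of, FreeGroup.lift_apply_of, dif_pos y.2]
      rfl
  have f_inclusion_compl : f.comp (inclusion Sᶜ) = Monoid.Coprod.inr :=
    FreeGroup.ext_hom _ _ fun y => by
      rw [MonoidHom.comp_apply, FreeGroup.map.of, FreeGroup.lift_apply_of, dif_neg y.2]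
  have hfr : f r = 1 := by
    have := DFunLike.congr_fun f_inclusion (retract S r)
    rw [MonoidHom.comp_apply, inclusion_retract hr] at this
    rw [this, MonoidHom.comp_apply, QuotientGroup.mk'_apply,
      (QuotientGroup.eq_one_iff _).2 (mem_normalClosure_self _), map_one]
  let g : Monoid.Coprod (FreeGroup S ⧸ ⟪retract S r⟫) (FreeGroup (Sᶜ : Set Y)) →*
      FreeGroup Y ⧸ ⟪r⟫ :=
    Monoid.Coprod.lift
      (QuotientGroup.lift _ ((QuotientGroup.mk' _).comp (inclusion S))
        (normalClosure_singleton_le_ker (by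
          rw [MonoidHom.comp_apply, inclusion_retract hr]
          exact (QuotientGroup.eq_one_iff _).2 (mem_normalClosure_self _))))
      ((QuotientGroup.mk' _).comp (inclusion Sᶜ))
  refine ⟨MonoidHom.toMulEquiv (QuotientGroup.lift _ f (normalClosure_singleton_le_ker hfr)) g
    ?_ ?_⟩
  · refine QuotientGroup.monoidHom_ext _ (FreeGroup.ext_hom _ _ fun y => ?_)
    change g (f (of y)) = of y
    by_cases hy : y ∈ S
    · rw [FreeGroup.lift_apply_of, dif_pos hy, Monoid.Coprod.lift_apply_inl]
      exact congrArg _ FreeGroup.map.of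
    · rw [FreeGroup.lift_apply_of, dif_neg hy, Monoid.Coprod.lift_apply_inr]
      exact congrArg _ FreeGroup.map.of
  · refine Monoid.Coprod.hom_ext (QuotientGroup.monoidHom_ext _ ?_) ?_
    · exact f_inclusion
    · exact f_inclusion_compl

theorem freelyDecomposable_of_mulEquiv {G H : Type*} [Group G] [Group H] (e : G ≃* H)
    (h : FreelyDecomposable H) : FreelyDecomposable G := by
  obtain ⟨A, B, _, _, hA, hB, ⟨f⟩⟩ := h
  exact ⟨A, B, _, _, hA, hB, ⟨e.trans f⟩⟩

theorem freelyDecomposable_of_mem_letterSubgroup {Y : Type} {S : Set Y} {r : FreeGroup Y}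
    (hr : r ∈ letterSubgroup S) (hS : (Sᶜ).Nonempty) (hrS : ¬ letterSubgroup S ≤ ⟪r⟫) :
    FreelyDecomposable (FreeGroup Y ⧸ ⟪r⟫) := by
  obtain ⟨e⟩ := nonempty_mulEquiv_coprod hr
  have : Nonempty (Sᶜ : Set Y) := hS.to_subtype
  refine ⟨FreeGroup S ⧸ ⟪retract S r⟫, FreeGroup (Sᶜ : Set Y), _, _, ?_, inferInstance, ⟨e⟩⟩
  rw [QuotientGroup.nontrivial_iff]
  refine fun htop => hrS fun w hw => ?_
  have retract_le : ⟪retract S r⟫ ≤ ⟪r⟫.comap (inclusion S) := by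
    refine normalClosure_singleton_le ?_
    rw [Subgroup.mem_comap, inclusion_retract hr]
    exact mem_normalClosure_self r
  rw [htop] at retract_le
  exact inclusion_retract hw ▸ retract_le (Subgroup.mem_top (retract S w))

theorem freelyDecomposable_of_infinite {X : Type} [Infinite X] (r : FreeGroup X) :
    FreelyDecomposable (FreeGroup X ⧸ ⟪r⟫) := by
  obtain ⟨z, hz⟩ := (finite_letters r).exists_notMem
  obtain ⟨t, ht⟩ := ((finite_letters r).insert z).exists_notMem
  rw [Set.mem_insert_iff, not_or] at ht
  refine freelyDecomposable_of_mem_letterSubgroup (S := {z}ᶜ)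
    (mem_letterSubgroup (Set.subset_compl_singleton_iff.2 hz)) (by simp) fun h => ?_
  have retract_r : retract {t} r = 1 := mem_of_letters (K := (retract {t}).ker) fun x hx =>
    retract_of_notMem fun hxt => ht.2 (hxt ▸ hx)
  have retract_t := normalClosure_singleton_le_ker retract_r (h (of_mem_letterSubgroup ht.1))
  rw [MonoidHom.mem_ker, retract_of_mem (Set.mem_singleton t)] at retract_t
  exact FreeGroup.of_ne_one _ retract_t

end Decomposable

section Compatible

variable {Y ι : Type*} {Q : ι → Type*} [∀ i, Group (Q i)] {Φ : FreeGroup Y →* Monoid.CoprodI Q}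
  {c : Y → ι}

theorem map_letterSubgroup_eq_top
    (hc : ∀ y, Φ (of y) ∈ (Monoid.CoprodI.of : Q (c y) →* Monoid.CoprodI Q).range)
    (hΦ : Function.Surjective Φ) (i : ι) :
    (letterSubgroup (c ⁻¹' {i})).map ((projection Q i).comp Φ) = ⊤ := by
  have surjective : Function.Surjective ((projection Q i).comp Φ) :=
    Function.Surjective.comp (g := projection Q i) (fun q => ⟨_, projection_of q⟩) hΦ
  rw [eq_top_iff, ← Subgroup.map_top_of_surjective _ surjective,
    ← FreeGroup.closure_range_of, MonoidHom.map_closure, Subgroup.closure_le]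
  rintro _ ⟨_, ⟨y, rfl⟩, rfl⟩
  by_cases hy : c y = i
  · exact ⟨of y, of_mem_letterSubgroup hy, rfl⟩
  · obtain ⟨q, hq⟩ := hc y
    have : (projection Q i).comp Φ (of y) = 1 := by
      rw [MonoidHom.comp_apply, ← hq, projection_of_ne (Ne.symm hy)]
    rw [this]
    exact Subgroup.one_mem _

theorem injective_of_disjoint_ker
    (hc : ∀ y, Φ (of y) ∈ (Monoid.CoprodI.of : Q (c y) →* Monoid.CoprodI Q).range)
    (hΦ : Function.Surjective Φ) (h : ∀ i, Disjoint (letterSubgroup (c ⁻¹' {i})) Φ.ker) :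
    Function.Injective Φ := by
  have mem_range (i) {w} (hw : w ∈ letterSubgroup (c ⁻¹' {i})) :
      Φ w ∈ (Monoid.CoprodI.of : Q i →* Monoid.CoprodI Q).range :=
    map_mem_of_mem_letterSubgroup (fun y hy => by obtain rfl := hy; exact hc y) hw
  let f (i) : letterSubgroup (c ⁻¹' {i}) →* Q i :=
    ((projection Q i).comp Φ).comp (letterSubgroup (c ⁻¹' {i})).subtype
  have f_bijective (i) : Function.Bijective (f i) := by
    refine ⟨(injective_iff_map_eq_one _).2 fun w hw => Subtype.ext ?_, fun q => ?_⟩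
    · refine Subgroup.disjoint_def.1 (h i) w.2 (MonoidHom.mem_ker.2 ?_)
      exact (of_projection (mem_range i w.2)).symm.trans ((congrArg _ hw).trans (map_one _))
    · obtain ⟨w, hw, rfl⟩ := (map_letterSubgroup_eq_top hc hΦ i).ge (Subgroup.mem_top q)
      exact ⟨⟨w, hw⟩, rfl⟩
  let e (i) := MulEquiv.ofBijective (f i) (f_bijective i)
  let Ξ : Monoid.CoprodI Q →* FreeGroup Y := Monoid.CoprodI.lift fun i =>
    (letterSubgroup (c ⁻¹' {i})).subtype.comp (e i).symm.toMonoidHom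
  have left_inv : Ξ.comp Φ = .id _ := FreeGroup.ext_hom _ _ fun y => by
    rw [MonoidHom.comp_apply, ← of_projection (hc y), Monoid.CoprodI.lift_of]
    exact congrArg Subtype.val ((e (c y)).symm_apply_apply ⟨of y, of_mem_letterSubgroup rfl⟩)
  exact Function.LeftInverse.injective (DFunLike.congr_fun left_inv)

end Compatible

theorem freelyDecomposable_of_compatible {Y ι : Type} [Nontrivial ι] {Q : ι → Type}
    [∀ i, Group (Q i)] [∀ i, Nontrivial (Q i)] {Φ : FreeGroup Y →* Monoid.CoprodI Q} {c : Y → ι}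
    (hc : ∀ y, Φ (of y) ∈ (Monoid.CoprodI.of : Q (c y) →* Monoid.CoprodI Q).range)
    (hΦ : Function.Surjective Φ) {r : FreeGroup Y} (hr : r ≠ 1) {n : ℕ} (hn : n ≠ 0)
    (hker : Φ.ker ≤ ⟪r⟫) (hrn : Φ (r ^ n) = 1) : FreelyDecomposable (FreeGroup Y ⧸ ⟪r ^ n⟫) := by
  have not_le_ker (i) : ¬ letterSubgroup (c ⁻¹' {i}) ≤ ((projection Q i).comp Φ).ker := by
    rw [← Subgroup.map_eq_bot_iff, map_letterSubgroup_eq_top hc hΦ i]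
    exact top_ne_bot
  have nonempty_preimage (i) : (c ⁻¹' {i}).Nonempty := by
    by_contra! h
    refine not_le_ker i ?_
    rw [h, letterSubgroup, Set.image_empty, Subgroup.closure_empty]
    exact bot_le
  by_cases hconj : ∃ i g, g * r * g⁻¹ ∈ letterSubgroup (c ⁻¹' {i})
  · obtain ⟨i, g, hg⟩ := hconj
    have hgn : g * r ^ n * g⁻¹ ∈ letterSubgroup (c ⁻¹' {i}) := conj_pow (b := r) ▸ pow_mem hg n
    refine freelyDecomposable_of_mulEquiv
      (QuotientGroup.quotientMulEquivOfEq (normalClosure_conj (r ^ n) g).symm)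
      (freelyDecomposable_of_mem_letterSubgroup hgn ?_ fun h => ?_)
    · obtain ⟨l, hl⟩ := exists_ne i
      obtain ⟨y, rfl⟩ := nonempty_preimage l
      exact ⟨y, hl⟩
    · rw [normalClosure_conj] at h
      refine not_le_ker i (h.trans (normalClosure_singleton_le_ker ?_))
      rw [MonoidHom.comp_apply, hrn, map_one]
  · push Not at hconj
    have Φ_injective := injective_of_disjoint_ker hc hΦ fun i =>
      ((isMagnus r).freiheitssatz _ (hconj i)).mono_right hker
    exact absurd ((pow_eq_one_iff_left hn).1 ((map_eq_one_iff Φ Φ_injective).1 hrn)) hr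

theorem freelyDecomposable_of_surjective {X ι : Type} [Nontrivial ι] {Q : ι → Type}
    [∀ i, Group (Q i)] [∀ i, Nontrivial (Q i)] {Φ : FreeGroup X →* Monoid.CoprodI Q}
    (hΦ : Function.Surjective Φ) {r : FreeGroup X} (hr : r ≠ 1) {n : ℕ} (hn : n ≠ 0)
    (hker : Φ.ker ≤ ⟪r⟫) (hrn : Φ (r ^ n) = 1) : FreelyDecomposable (FreeGroup X ⧸ ⟪r ^ n⟫) := by
  rcases finite_or_infinite X with _ | _
  swap
  · exact freelyDecomposable_of_infinite _
  obtain ⟨Y, c, ψ, hψ⟩ := exists_freeGroup_mulEquiv hΦ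
  have map_eq (x) : ⟪x⟫.map ψ.symm.toMonoidHom = ⟪ψ.symm x⟫ := by
    rw [Subgroup.map_normalClosure _ _ ψ.symm.surjective, Set.image_singleton]
    rfl
  refine freelyDecomposable_of_mulEquiv
    (QuotientGroup.congr ⟪r ^ n⟫ ⟪ψ.symm r ^ n⟫ ψ.symm ((map_eq _).trans (by rw [map_pow])))
    (freelyDecomposable_of_compatible (Φ := Φ.comp ψ.toMonoidHom) hψ (hΦ.comp ψ.surjective)
      ((map_ne_one_iff _ ψ.symm.injective).2 hr) hn (fun w hw => ?_) ?_)
  · have := map_eq r ▸ Subgroup.mem_map_of_mem ψ.symm.toMonoidHom (hker hw)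
    simpa using this
  · rw [← map_pow]
    simpa using hrn

/-! ### Amalgamated products -/

section Amalgam

variable {ι C : Type*} [Group C] {D : ι → Type*} [∀ i, Group (D i)] (φ : ∀ i, C →* D i)

/-- The quotient of a vertex group of an amalgamated product by the normal closure of the
amalgamated subgroup. -/
abbrev VertexQuotient (i : ι) : Type _ := D i ⧸ Subgroup.normalClosure ((φ i).range : Set (D i))

/-- The quotient map of an amalgamated product by the normal closure of the amalgamated subgroup,
with values in the free product of the quotients of the vertex groups. -/
noncomputable def collapse : Monoid.PushoutI φ →* Monoid.CoprodI (VertexQuotient φ) :=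
  Monoid.PushoutI.lift
    (fun _ => (Monoid.CoprodI.of (M := VertexQuotient φ)).comp (QuotientGroup.mk' _)) 1 fun i => by
      ext c
      have : (φ i c : VertexQuotient φ i) = 1 :=
        (QuotientGroup.eq_one_iff _).2 (Subgroup.subset_normalClosure ⟨c, rfl⟩)
      exact (congrArg (Monoid.CoprodI.of (M := VertexQuotient φ)) this).trans (map_one _)

variable {φ}

theorem collapse_of (i : ι) (x : D i) : collapse φ (Monoid.PushoutI.of i x) =
    Monoid.CoprodI.of (M := VertexQuotient φ) (x : VertexQuotient φ i) :=
  Monoid.PushoutI.lift_of _ _ _ _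

theorem collapse_surjective : Function.Surjective (collapse φ) := by
  refine MonoidHom.range_eq_top.1 ((Subgroup.eq_top_iff' _).2 fun w => ?_)
  induction w using Monoid.CoprodI.induction_on with
  | one => exact one_mem _
  | of i q =>
    obtain ⟨x, rfl⟩ := QuotientGroup.mk_surjective q
    exact ⟨_, collapse_of i x⟩
  | mul _ _ hv hw => exact mul_mem hv hw

theorem ker_collapse_le [Nonempty ι] {P : Type*} [Group P] {f : Monoid.PushoutI φ →* P}
    (hf : ∀ c, f (Monoid.PushoutI.base φ c) = 1) : (collapse φ).ker ≤ f.ker := by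
  have le_ker (i) : Subgroup.normalClosure ((φ i).range : Set (D i)) ≤
      (f.comp (Monoid.PushoutI.of i)).ker := by
    refine Subgroup.normalClosure_le_normal ?_
    rintro _ ⟨c, rfl⟩
    exact (congrArg f (Monoid.PushoutI.of_apply_eq_base φ i c)).trans (hf c)
  let g : Monoid.CoprodI (VertexQuotient φ) →* P :=
    Monoid.CoprodI.lift fun i => QuotientGroup.lift _ (f.comp (Monoid.PushoutI.of i)) (le_ker i)
  have factor : g.comp (collapse φ) = f := Monoid.PushoutI.hom_ext_nonempty fun i => by
    ext x
    exact (congrArg g (collapse_of i x)).trans (Monoid.CoprodI.lift_of _ _)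
  intro w hw
  rw [MonoidHom.mem_ker, ← factor, MonoidHom.comp_apply, MonoidHom.mem_ker.1 hw, map_one]

end Amalgam

/-! ### The infinite dihedral group -/

section Dihedral

theorem closure_sr_zero_sr_one (n : ℕ) :
    Subgroup.closure {DihedralGroup.sr 0, DihedralGroup.sr 1} =
      (⊤ : Subgroup (DihedralGroup n)) := by
  rw [Subgroup.eq_top_iff']
  let K := Subgroup.closure {DihedralGroup.sr (0 : ZMod n), DihedralGroup.sr 1}
  have sr_zero_mem : DihedralGroup.sr 0 ∈ K := Subgroup.subset_closure (Set.mem_insert _ _)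
  have sr_one_mem : DihedralGroup.sr 1 ∈ K := Subgroup.subset_closure (Set.mem_insert_of_mem _ rfl)
  have r_mem (i : ZMod n) : DihedralGroup.r i ∈ K := by
    obtain ⟨k, rfl⟩ := ZMod.intCast_surjective i
    rw [← DihedralGroup.r_one_zpow, ← sub_zero (1 : ZMod n), ← DihedralGroup.sr_mul_sr]
    exact zpow_mem (mul_mem sr_zero_mem sr_one_mem) k
  rintro (i | i)
  · exact r_mem i
  · rw [← zero_add i, ← DihedralGroup.sr_mul_r]
    exact mul_mem sr_zero_mem (r_mem i)

theorem closure_isOfFinOrder_of_mulEquiv {C : Type*} [Group C] {n : ℕ}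
    (hC : Nonempty (C ≃* DihedralGroup n)) : Subgroup.closure {c : C | IsOfFinOrder c} = ⊤ := by
  obtain ⟨e⟩ := hC
  rw [eq_top_iff, ← Subgroup.map_top_of_surjective e.symm.toMonoidHom e.symm.surjective,
    ← closure_sr_zero_sr_one, MonoidHom.map_closure]
  refine Subgroup.closure_mono ?_
  rintro _ ⟨_, rfl | rfl, rfl⟩ <;>
  exact e.symm.toMonoidHom.isOfFinOrder
    (isOfFinOrder_iff_pow_eq_one.2 ⟨2, two_pos, by rw [pow_two, DihedralGroup.sr_mul_self]⟩)

variable {G : Type*} [Group G]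

theorem finite_range_of_r_mem_ker {f : DihedralGroup 0 →* G} {i : ℤ} (hi : i ≠ 0)
    (hker : DihedralGroup.r i ∈ f.ker) : (f.range : Set G).Finite := by
  have map_r (k : ℤ) : f (.r k) = f (.r 1) ^ k :=
    (congrArg f (DihedralGroup.r_one_zpow k).symm).trans (map_zpow f _ k)
  have finite : (Subgroup.zpowers (f (.r 1)) : Set G).Finite :=
    Set.finite_coe_iff.1 (finite_zpowers.2 (isOfFinOrder_iff_zpow_eq_one.2
      ⟨i, hi, (map_r i).symm.trans hker⟩))
  have map_r_mem (k : ZMod 0) : f (.r k) ∈ Subgroup.zpowers (f (.r 1)) := by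
    obtain ⟨k, rfl⟩ := ZMod.intCast_surjective k
    exact ⟨k, (map_r k).symm⟩
  refine (finite.union (finite.image (f (.sr 0) * ·))).subset ?_
  rintro _ ⟨k | k, rfl⟩
  · exact Or.inl (map_r_mem k)
  · refine Or.inr ⟨_, map_r_mem k, ?_⟩
    change f (.sr 0) * f (.r k) = _
    rw [← map_mul, DihedralGroup.sr_mul_r, zero_add]

-- A reflection in the kernel would put the product of two of its conjugates, a translation, there.
theorem injective_of_infinite_range {f : DihedralGroup 0 →* G} (hf : (f.range : Set G).Infinite) :
    Function.Injective f := by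
  refine (injective_iff_map_eq_one f).2 ?_
  rintro (i | i) hi
  · obtain ⟨k, rfl⟩ := ZMod.intCast_surjective i
    by_contra hne
    exact hf (finite_range_of_r_mem_ker (fun hk => hne (by rw [hk]; rfl)) hi)
  · have mul_conj_mem := f.ker.mul_mem hi (f.normal_ker.conj_mem _ hi (.r 1))
    rw [DihedralGroup.r_mul_sr, DihedralGroup.inv_r, DihedralGroup.sr_mul_r,
      DihedralGroup.sr_mul_sr, show i - 1 + -1 - i = ((-2 : ℤ) : ZMod 0) by ring_nf; rfl]
      at mul_conj_mem
    exact absurd (finite_range_of_r_mem_ker (by decide) mul_conj_mem) hf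

/-- The homomorphism from a dihedral group sending the reflections `sr 0` and `sr 1` to given
elements `p` and `q`. -/
noncomputable def dihedralHom {p q : G} {n : ℕ} (hp : p ^ 2 = 1) (hq : q ^ 2 = 1)
    (hpq : (p * q) ^ n = 1) : DihedralGroup n →* G where
  toFun
    | .r i => zmodPowersHom n (p * q) hpq (.ofAdd i)
    | .sr i => p * zmodPowersHom n (p * q) hpq (.ofAdd i)
  map_one' := map_one _
  map_mul' := by
    set T := zmodPowersHom n (p * q) hpq
    have p_mul_p : p * p = 1 := by rw [← pow_two, hp]
    have semiconj : SemiconjBy p (p * q)⁻¹ (p * q) := by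
      rw [SemiconjBy, mul_inv_rev, inv_eq_of_mul_eq_one_left p_mul_p,
        inv_eq_of_mul_eq_one_left ((pow_two q).symm.trans hq), mul_assoc]
    have conj_T (i : ZMod n) : T (.ofAdd i) * p = p * T (.ofAdd (-i)) := by
      obtain ⟨k, hk⟩ := ofAdd_one_zpow_surjective n (.ofAdd i)
      rw [ofAdd_neg, map_inv, ← hk, map_zpow, zmodPowersHom_ofAdd_one, ← inv_zpow]
      exact (semiconj.zpow_right k).eq.symm
    rintro (i | i) (j | j)
    · exact map_mul T _ _
    · change p * T (.ofAdd (j - i)) = T (.ofAdd i) * (p * T (.ofAdd j))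
      rw [← mul_assoc, conj_T, mul_assoc, ← map_mul, ← ofAdd_add, neg_add_eq_sub]
    · change p * T (.ofAdd (i + j)) = p * T (.ofAdd i) * T (.ofAdd j)
      rw [mul_assoc, ← map_mul, ← ofAdd_add]
    · change T (.ofAdd (j - i)) = p * T (.ofAdd i) * (p * T (.ofAdd j))
      rw [mul_assoc, ← mul_assoc _ p, conj_T, mul_assoc, ← map_mul, ← ofAdd_add, neg_add_eq_sub,
        ← mul_assoc, p_mul_p, one_mul]

theorem nonempty_mulEquiv_dihedralGroup [Infinite G] {p q : G} (hp : p ^ 2 = 1) (hq : q ^ 2 = 1)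
    (h : Subgroup.closure {p, q} = ⊤) : Nonempty (G ≃* DihedralGroup 0) := by
  let f := dihedralHom hp hq (pow_zero _)
  have f_sr_zero : f (.sr 0) = p := by
    change p * zmodPowersHom 0 (p * q) _ 1 = p
    rw [map_one, mul_one]
  have f_sr_one : f (.sr 1) = q := by
    change p * zmodPowersHom 0 (p * q) _ (.ofAdd 1) = q
    rw [zmodPowersHom_ofAdd_one, ← mul_assoc, ← pow_two, hp, one_mul]
  have range_eq_top : f.range = ⊤ := by
    rw [eq_top_iff, ← h, Subgroup.closure_le]
    rintro _ (rfl | rfl)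
    · exact ⟨_, f_sr_zero⟩
    · exact ⟨_, f_sr_one⟩
  have range_infinite : (f.range : Set G).Infinite := by
    rw [range_eq_top]
    exact Set.infinite_univ
  exact ⟨(MulEquiv.ofBijective f
    ⟨injective_of_infinite_range range_infinite, MonoidHom.range_eq_top.1 range_eq_top⟩).symm⟩

end Dihedral

section NormalGeneration

variable {G ι κ : Type} [Group G] {x : ι → G} {s : κ → G}

theorem hom_eq_one_of_normalClosure_range {G κ Q : Type*} [Group G] [Group Q] {s : κ → G}
    (hs : Subgroup.normalClosure (Set.range s) = ⊤) {f : G →* Q} (hf : ∀ k, f (s k) = 1) :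
    f = 1 := by
  have : Subgroup.normalClosure (Set.range s) ≤ f.ker :=
    Subgroup.normalClosure_le_normal (Set.range_subset_iff.2 hf)
  ext g
  exact this (hs ▸ Subgroup.mem_top g)

theorem IsCyclicBasis.pow_eq_one (hx : IsCyclicBasis x)
    (hs : Subgroup.normalClosure (Set.range s) = ⊤) {n : ℕ} (hn : ∀ k, s k ^ n = 1) (i : ι) :
    x i ^ n = 1 := by
  classical
  obtain ⟨Θ, hΘ⟩ := hx.exists_hom (Multiplicative (ZMod (orderOf (x i))))
    (Pi.mulSingle i (.ofAdd 1)) fun l m hm => by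
      rcases eq_or_ne l i with rfl | hl
      · rw [Pi.mulSingle_eq_same, ofAdd_one_pow_eq_one_iff]
        exact orderOf_dvd_of_pow_eq_one hm
      · rw [Pi.mulSingle_eq_of_ne hl, one_pow]
  have pow_eq_one : (powMonoidHom n).comp Θ = 1 :=
    hom_eq_one_of_normalClosure_range hs fun k => by
      rw [MonoidHom.comp_apply, powMonoidHom_apply, ← map_pow, hn, map_one]
  have := DFunLike.congr_fun pow_eq_one (x i)
  rw [MonoidHom.comp_apply, hΘ, Pi.mulSingle_eq_same] at this
  exact orderOf_dvd_iff_pow_eq_one.1 (ofAdd_one_pow_eq_one_iff.1 this)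

theorem IsCyclicBasis.exists_hom_zmod (hx : IsCyclicBasis x) {p : ℕ} [Fact p.Prime]
    (hp : ∀ i, x i ^ p = 1) (y : {i // x i ≠ 1} → Multiplicative (ZMod p)) :
    ∃ Θ : G →* Multiplicative (ZMod p), ∀ i : {i // x i ≠ 1}, Θ (x i) = y i := by
  obtain ⟨Θ, hΘ⟩ := hx.exists_hom _ (Function.extend Subtype.val y 1) fun i m hm => by
    rcases eq_or_ne (x i) 1 with hi | hi
    · rw [Function.extend_apply' _ _ _ (by rintro ⟨⟨_, hl⟩, rfl⟩; exact hl hi), Pi.one_apply,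
        one_pow]
    · rw [Subtype.val_injective.extend_apply y 1 ⟨i, hi⟩]
      obtain ⟨k, rfl⟩ := (orderOf_eq_prime (hp i) hi) ▸ orderOf_dvd_of_pow_eq_one hm
      have : y ⟨i, hi⟩ ^ p = 1 := by
        simpa using pow_card_eq_one' (x := y ⟨i, hi⟩)
      rw [pow_mul, this, one_pow]
  exact ⟨Θ, fun i => (hΘ i).trans (Subtype.val_injective.extend_apply y 1 i)⟩

theorem IsCyclicBasis.nonempty_embedding [Finite κ] (hx : IsCyclicBasis x)
    (hs : Subgroup.normalClosure (Set.range s) = ⊤) {p : ℕ} [Fact p.Prime]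
    (hsp : ∀ k, s k ^ p = 1) : Nonempty ({i // x i ≠ 1} ↪ κ) := by
  choose Θ hΘ using hx.exists_hom_zmod (hx.pow_eq_one hs hsp)
  have restrict_injective : Function.Injective fun y k => Θ y (s k) := by
    intro y y' h
    have hom_div : Θ y / Θ y' = 1 := hom_eq_one_of_normalClosure_range hs fun k => by
      rw [MonoidHom.div_apply, div_eq_one]
      exact congrFun h k
    funext i
    rw [← hΘ y, ← hΘ y', div_eq_one.1 hom_div]
  have : Finite ({i // x i ≠ 1} → Multiplicative (ZMod p)) := .of_injective _ restrict_injective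
  have : Finite {i // x i ≠ 1} := not_infinite_iff_finite.1 fun _ =>
    not_finite ({i // x i ≠ 1} → Multiplicative (ZMod p))
  cases nonempty_fintype κ
  cases nonempty_fintype {i // x i ≠ 1}
  refine Function.Embedding.nonempty_of_card_le ?_
  have card_le := Nat.card_le_card_of_injective _ restrict_injective
  rw [Nat.card_fun, Nat.card_fun, Nat.pow_le_pow_iff_right Finite.one_lt_card] at card_le
  simpa only [Nat.card_eq_fintype_card] using card_le

theorem IsCyclicBasis.exists_closure_eq_top [Finite κ] (hx : IsCyclicBasis x)
    (hs : Subgroup.normalClosure (Set.range s) = ⊤) {p : ℕ} [Fact p.Prime]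
    (hsp : ∀ k, s k ^ p = 1) :
    ∃ t : κ → G, (∀ k, t k ^ p = 1) ∧ Subgroup.closure (Set.range t) = ⊤ := by
  obtain ⟨f⟩ := hx.nonempty_embedding hs hsp
  refine ⟨Function.extend f (fun i => x i) 1, fun k => ?_, ?_⟩
  · by_cases hk : ∃ i, f i = k
    · obtain ⟨i, rfl⟩ := hk
      rw [f.injective.extend_apply]
      exact hx.pow_eq_one hs hsp i
    · rw [Function.extend_apply' _ _ _ hk, Pi.one_apply, one_pow]
  · rw [eq_top_iff, ← hx.closure_eq_top, Subgroup.closure_le]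
    rintro _ ⟨i, rfl⟩
    by_cases hi : x i = 1
    · rw [hi]
      exact one_mem _
    · exact Subgroup.subset_closure ⟨f ⟨i, hi⟩, f.injective.extend_apply _ _ _⟩

theorem nonempty_mulEquiv_dihedralGroup_of_normalClosure {C : Type} [Group C]
    (hG : IsFreeProductOfCyclics G) (hC : Nonempty (C ≃* DihedralGroup 0)) {φ : C →* G}
    (hφ : Function.Injective φ) (htop : Subgroup.normalClosure (φ.range : Set G) = ⊤) :
    Nonempty (G ≃* DihedralGroup 0) := by
  obtain ⟨ι, x, hx⟩ := hasCyclicBasis_of_isFreeProductOfCyclics hG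
  obtain ⟨e⟩ := hC
  let ψ : DihedralGroup 0 →* G := φ.comp e.symm.toMonoidHom
  have range_ψ : ψ.range = φ.range := by
    rw [MonoidHom.range_comp, MonoidHom.range_eq_top.2 e.symm.surjective, MonoidHom.range_eq_map]
  let s : Bool → G := fun b => ψ (.sr (cond b 1 0))
  have normalClosure_range : Subgroup.normalClosure (Set.range s) = ⊤ := by
    rw [← htop, ← range_ψ, ← Subgroup.normalClosure_closure_eq_normalClosure,
      MonoidHom.range_eq_map, ← closure_sr_zero_sr_one, MonoidHom.map_closure, Bool.range_eq,
      Set.image_pair]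
    rfl
  have sq_eq_one (b) : s b ^ 2 = 1 := by
    rw [← map_pow, pow_two, DihedralGroup.sr_mul_self, map_one]
  obtain ⟨t, ht, closure_range⟩ := hx.exists_closure_eq_top normalClosure_range sq_eq_one
  have : Infinite G := .of_injective ψ (hφ.comp e.symm.injective)
  rw [Bool.range_eq] at closure_range
  exact nonempty_mulEquiv_dihedralGroup (ht _) (ht _) closure_range

end NormalGeneration

/-! ### Splittings of one-relator groups with torsion -/

section Splitting

theorem TorsionFree.map_eq_one {G H : Type*} [Group G] [Group H] (hH : TorsionFree H)
    (hG : Subgroup.closure {g : G | IsOfFinOrder g} = ⊤) (f : G →* H) (g : G) : f g = 1 := by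
  have : Subgroup.closure {g : G | IsOfFinOrder g} ≤ f.ker :=
    (Subgroup.closure_le _).2 fun x hx => hH _ (f.isOfFinOrder hx)
  exact this (hG ▸ Subgroup.mem_top g)

/-- The projection to the one-relator group with relator `r` from the one with relator `r ^ n`. -/
def rootProjection {X : Type*} (r : FreeGroup X) (n : ℕ) :
    FreeGroup X ⧸ ⟪r ^ n⟫ →* FreeGroup X ⧸ ⟪r⟫ :=
  QuotientGroup.map _ _ (MonoidHom.id _) (normalClosure_pow_le r n)

theorem ker_rootProjection {X : Type*} (r : FreeGroup X) (n : ℕ) :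
    (rootProjection r n).ker = ⟪r⟫.map (QuotientGroup.mk' ⟪r ^ n⟫) :=
  QuotientGroup.ker_map ..

variable {X ι C : Type} [Group C] {D : ι → Type} [∀ i, Group (D i)]
  {φ : ∀ i, C →* D i} {r : FreeGroup X} {n : ℕ}

theorem exists_normalClosure_range_eq_top [Nontrivial ι] (hn : n ≠ 0) (hr : r ≠ 1)
    (hr_torsionFree : TorsionFree (FreeGroup X ⧸ ⟪r⟫))
    (hindec : FreelyIndecomposable (FreeGroup X ⧸ ⟪r ^ n⟫))
    (hC : Subgroup.closure {c : C | IsOfFinOrder c} = ⊤)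
    (e : FreeGroup X ⧸ ⟪r ^ n⟫ ≃* Monoid.PushoutI φ) :
    ∃ i, Subgroup.normalClosure ((φ i).range : Set (D i)) = ⊤ := by
  let q := QuotientGroup.mk' ⟪r ^ n⟫
  let f := (rootProjection r n).comp e.symm.toMonoidHom
  have ker_le : (collapse φ).ker ≤ f.ker :=
    ker_collapse_le (hr_torsionFree.map_eq_one hC (f.comp (Monoid.PushoutI.base φ)))
  by_contra! h
  have (i : ι) : Nontrivial (VertexQuotient φ i) := QuotientGroup.nontrivial_iff.2 (h i)
  refine hindec (freelyDecomposable_of_surjective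
    (Φ := ((collapse φ).comp e.toMonoidHom).comp q)
    ((collapse_surjective.comp e.surjective).comp (QuotientGroup.mk'_surjective _))
    hr hn (fun w hw => ?_) ?_)
  · have f_apply : f (e (q w)) = (w : FreeGroup X ⧸ ⟪r⟫) :=
      congrArg (rootProjection r n) (e.symm_apply_apply (q w))
    exact (QuotientGroup.eq_one_iff w).1 (f_apply.symm.trans (ker_le hw))
  · have : q (r ^ n) = 1 := (QuotientGroup.eq_one_iff _).2 (mem_normalClosure_self _)
    rw [MonoidHom.comp_apply, this, map_one]

theorem isFreeProductOfCyclics_of_normalClosure_range_eq_top (hr : IsTame r)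
    (hC : Subgroup.closure {c : C | IsOfFinOrder c} = ⊤)
    (hφ : ∀ i, Function.Injective (φ i)) (e : FreeGroup X ⧸ ⟪r ^ n⟫ ≃* Monoid.PushoutI φ) {i : ι}
    (hi : Subgroup.normalClosure ((φ i).range : Set (D i)) = ⊤) : IsFreeProductOfCyclics (D i) := by
  let j : D i →* FreeGroup X ⧸ ⟪r ^ n⟫ := e.symm.toMonoidHom.comp (Monoid.PushoutI.of i)
  have j_injective : Function.Injective j :=
    e.symm.injective.comp (Monoid.PushoutI.of_injective hφ i)
  have normalClosure_le : Subgroup.normalClosure ((φ i).range : Set (D i)) ≤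
      ((rootProjection r n).comp j).ker := by
    refine Subgroup.normalClosure_le_normal ?_
    rintro _ ⟨c, rfl⟩
    exact hr.torsionFree.map_eq_one hC (((rootProjection r n).comp j).comp (φ i)) c
  refine (hr.hereditarilyCyclic n (D i) j j_injective fun x => ?_).isFreeProductOfCyclics
  rw [← ker_rootProjection]
  exact normalClosure_le (hi ▸ Subgroup.mem_top x)

end Splitting

end OneRelator

open OneRelator

theorem statement_10_general {X : Type} (R : FreeGroup X) (n : ℕ) (hn : n ≠ 0)
    (hR : ∀ (S : FreeGroup X) (k : ℕ), 1 ≤ k → R = S ^ k → k = 1)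
    (hindec : FreelyIndecomposable (PresentedGroup {R ^ n}))
    (C : Type) [Group C] (hC : Subgroup.closure {c : C | IsOfFinOrder c} = ⊤)
    {ι : Type} [Nontrivial ι] (D : ι → Type) [∀ i, Group (D i)]
    (φ : ∀ i, C →* D i) (hinj : ∀ i, Function.Injective (φ i))
    (e : PresentedGroup {R ^ n} ≃* Monoid.PushoutI φ) :
    ∃ i, Subgroup.normalClosure ((φ i).range : Set (D i)) = ⊤ ∧ IsFreeProductOfCyclics (D i) := by
  have tame := (isMagnus R).isTame hR
  obtain ⟨i, hi⟩ := exists_normalClosure_range_eq_top hn (NotProperPower.ne_one hR)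
    tame.torsionFree hindec hC e
  exact ⟨i, hi, isFreeProductOfCyclics_of_normalClosure_range_eq_top tame hC hinj e hi⟩

/-- If a freely indecomposable one-relator group with torsion
`G = ⟨X; Rⁿ⟩` splits nontrivially as an amalgam `A ∗_C B` with `C` infinite dihedral,
then `A` or `B` is infinite dihedral (here `A = D true`, `B = D false`). -/
theorem statement_10 {X : Type} [Nontrivial X] (R : FreeGroup X) (n : ℕ)
    (hn : 1 < n) (hR : ∀ (S : FreeGroup X) (k : ℕ), 1 ≤ k → R = S ^ k → k = 1)
    (hindec : FreelyIndecomposable (PresentedGroup {R ^ n}))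
    (C : Type) [Group C] (hC : Nonempty (C ≃* DihedralGroup 0))
    (D : Bool → Type) [∀ b, Group (D b)]
    (φ : ∀ b, C →* D b) (hinj : ∀ b, Function.Injective (φ b))
    (hproper : ∀ b, (φ b).range ≠ ⊤)
    (e : PresentedGroup {R ^ n} ≃* Monoid.PushoutI φ) :
    Nonempty (D true ≃* DihedralGroup 0) ∨ Nonempty (D false ≃* DihedralGroup 0) := by
  obtain ⟨b, hb, hDb⟩ := statement_10_general R n (by lia) hR hindec C
    (closure_isOfFinOrder_of_mulEquiv hC) D φ hinj e
  have dihedral := nonempty_mulEquiv_dihedralGroup_of_normalClosure hDb hC (hinj b) hb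
  cases b
  · exact Or.inr dihedral
  · exact Or.inl dihedral
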